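/- arXiv:1404.4273 — 5 statements merged into one kernel-verified Lean document; each statement's English description precedes it below -/
import Mathlib

section
/- There exists a universal constant C < ∞ such that the following holds. Let G and H be finite supersolvable groups such that the smallest prime divisor p of |G| also divides |H|. Then for any function f : G → H and any ε > 0, the number of affine homomorphisms φ ∈ aHom(G,H) with agr(φ,f) ≥ 1/p + ε is at most (1/ε)^C. -/
/-!
The bound holds with `C = 80`, and follows from the stronger potential inequality
`∑ max (agr φ f - 1/p) 0 ^ 80 ≤ 1`, the sum being over all affine homomorphisms `φ : G → H`
(`potential_le`). The potential inequality is proved by induction on `|H|`. A nontrivial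
supersolvable `H` has a normal subgroup `N` of prime order `q`, and grouping the `φ` by their
projections to `H ⧸ N` reduces the claim to the following (`fibre_sum`): the potential of all the
lifts of one affine homomorphism `b` into `H ⧸ N` is at most that of `b`.

Let `S` be the set where `b` agrees with `f` modulo `N`, of density `1/p + δ`. The agreement sets
`A_a` of the lifts `a` lie in `S`; write their densities as `1/p + x_a δ`. The set where two
distinct affine homomorphisms agree is empty or a coset of a proper subgroup, so has density at
most `1/p`, whence `x_a + x_b ≤ 1`. Together with the counting bound
`#{a | x_a ≥ x} * x ^ 19 ≤ 2 ^ 17` (`fibre_count`) this gives `∑ x_a ^ 80 ≤ 1`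
(`sum_pow_le_one`): the largest term `u` is at least its own 80th power, and the remaining terms,
all at most `min u (1 - u)`, contribute at most `1 - u`.

The counting bound has four cases.
* If `q < p`, two lifts of `b` whose agreement set is nonempty have an equalizer of index at
  most `q < p`, hence are equal: the sets `A_a` are disjoint.
* If `p` is large compared with `x⁻⁴`, two different pairwise agreement sets meet in density at
  most `1/p²`, so only few of them can be substantial in `S`, and those `A_a` that meet pairwise
  in one fixed set form a sunflower (`large_p_bound`).
* If `δ < 1/(6p)`, the agreement sets of distinct lifts all coincide, and again the `A_a` form a sunflower
  (`small_delta_bound`).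
* Otherwise `p` and `1/(δp)` are bounded in terms of `x`. Let `M` be the kernel of the action of `G`
  on `N`, and sort the lifts by the restriction of their linear parts to `M`. Lifts in different
  classes agree on density at most `1/q` (`le_index_eqLocus`), so a Johnson-type bound over an
  alphabet of size `q` limits the number of classes (`johnson_bound`). Distinct lifts in one class
  agree only within one coset of `M` (`eqLocus_le_actKer`), so a pair of points in different cosets
  of `M` lies in at most one `A_a`, which limits the size of a class (`two_point_bound`).
-/

open scoped BigOperators

/-- The fractional agreement between two functions. -/
noncomputable def agr {G H : Type*} (f g : G → H) : ℝ :=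
  (Nat.card {x : G // f x = g x} : ℝ) / (Nat.card G : ℝ)

/-- A (left) affine homomorphism between groups. -/
def IsAffineHom {G H : Type*} [Group G] [Group H] (φ : G → H) : Prop :=
  ∃ (h : H) (φ₀ : G →* H), ∀ g, φ g = h * φ₀ g

/-- `Λ_{G,H}`: the maximum agreement between distinct affine homomorphisms,
with the convention that it is `0` if there are at most one of them. -/
noncomputable def Lambda (G H : Type*) [Group G] [Group H] : ℝ :=
  sSup (insert (0 : ℝ)
    {a : ℝ | ∃ φ ψ : G → H, IsAffineHom φ ∧ IsAffineHom ψ ∧ φ ≠ ψ ∧ a = agr φ ψ})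

/-- A group is supersolvable if it has a chain of subgroups, each normal in the
whole group, whose consecutive quotients are cyclic (equivalently each step is
obtained from the previous one by adjoining a single generator). -/
def IsSupersolvable (G : Type*) [Group G] : Prop :=
  ∃ (k : ℕ) (s : ℕ → Subgroup G),
    s 0 = ⊥ ∧ s k = ⊤ ∧ (∀ i, (s i).Normal) ∧
    (∀ i < k, s i ≤ s (i + 1)) ∧
    (∀ i < k, ∃ g : G, s (i + 1) = s i ⊔ Subgroup.zpowers g)

/-- The normalized counting measure of a finite set. -/
noncomputable def mu {X : Type*} [Fintype X] (A : Finset X) : ℝ :=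
  (A.card : ℝ) / (Fintype.card X : ℝ)

/-! ### Densities of finite sets and sunflower bounds -/

section Density

variable {X : Type*} [Fintype X]

lemma mu_nonneg (A : Finset X) : 0 ≤ mu A := by
  unfold mu; positivity

lemma mu_mono {A B : Finset X} (h : A ⊆ B) : mu A ≤ mu B := by
  unfold mu
  gcongr

lemma mu_le_one (A : Finset X) : mu A ≤ 1 := by
  unfold mu
  exact div_le_one_of_le₀ (by exact_mod_cast Finset.card_le_univ A) (by positivity)

lemma mu_empty : mu (∅ : Finset X) = 0 := by simp [mu]

variable [DecidableEq X]

lemma mu_union_add_inter (A B : Finset X) : mu (A ∪ B) + mu (A ∩ B) = mu A + mu B := by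
  unfold mu
  rw [← add_div, ← add_div]
  congr 1
  exact_mod_cast Finset.card_union_add_card_inter A B

lemma mu_sdiff_add_inter (A B : Finset X) : mu (A \ B) + mu (A ∩ B) = mu A := by
  unfold mu
  rw [← add_div]
  congr 1
  exact_mod_cast Finset.card_sdiff_add_card_inter A B

lemma mu_inter_ge {A B S : Finset X} (hA : A ⊆ S) (hB : B ⊆ S) :
    mu A + mu B - mu S ≤ mu (A ∩ B) := by
  have h1 := mu_union_add_inter A B
  have h2 := mu_mono (Finset.union_subset hA hB)
  linarith

lemma sum_mu_le_of_disjoint {ι : Type*} (T : Finset ι) (A : ι → Finset X) (S : Finset X)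
    (hA : ∀ i ∈ T, A i ⊆ S) (hd : ∀ i ∈ T, ∀ j ∈ T, i ≠ j → Disjoint (A i) (A j)) :
    ∑ i ∈ T, mu (A i) ≤ mu S := by
  unfold mu
  rw [← Finset.sum_div]
  gcongr
  rw [← Nat.cast_sum, ← Finset.card_biUnion hd]
  exact_mod_cast Finset.card_le_card (Finset.biUnion_subset.2 hA)

/-- The second moment inequality: Cauchy–Schwarz for the multiplicity function
`x ↦ #{i ∈ T | x ∈ A i}` on `S`. -/
lemma sq_sum_mu_le {ι : Type*} (T : Finset ι) (A : ι → Finset X) (S : Finset X)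
    (hA : ∀ i ∈ T, A i ⊆ S) :
    (∑ i ∈ T, mu (A i)) ^ 2 ≤ mu S * ∑ i ∈ T, ∑ j ∈ T, mu (A i ∩ A j) := by
  have h1 : ∀ B : Finset X, B ⊆ S → (B.card : ℝ) = ∑ x ∈ S, if x ∈ B then (1 : ℝ) else 0 := by
    intro B hB
    rw [← Finset.sum_filter, Finset.filter_mem_eq_inter, Finset.inter_eq_right.2 hB]
    simp
  have h2 : (∑ i ∈ T, ((A i).card : ℝ)) = ∑ x ∈ S, ∑ i ∈ T, if x ∈ A i then (1 : ℝ) else 0 := by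
    rw [Finset.sum_comm]
    exact Finset.sum_congr rfl fun i hi => h1 _ (hA i hi)
  have h3 : (∑ i ∈ T, ∑ j ∈ T, ((A i ∩ A j).card : ℝ))
      = ∑ x ∈ S, (∑ i ∈ T, if x ∈ A i then (1 : ℝ) else 0) ^ 2 := by
    have : ∀ x, (∑ i ∈ T, if x ∈ A i then (1 : ℝ) else 0) ^ 2
        = ∑ i ∈ T, ∑ j ∈ T, if x ∈ A i ∩ A j then (1 : ℝ) else 0 := by
      intro x
      rw [sq, Finset.sum_mul_sum]
      refine Finset.sum_congr rfl fun i _ => Finset.sum_congr rfl fun j _ => ?_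
      by_cases hi : x ∈ A i <;> by_cases hj : x ∈ A j <;> simp [hi, hj]
    simp_rw [this]
    symm
    rw [Finset.sum_comm]
    refine Finset.sum_congr rfl fun i hi => ?_
    rw [Finset.sum_comm]
    refine Finset.sum_congr rfl fun j _ => ?_
    exact (h1 _ (Finset.inter_subset_left.trans (hA i hi))).symm
  have h4 : (∑ i ∈ T, ((A i).card : ℝ)) ^ 2
      ≤ (S.card : ℝ) * ∑ i ∈ T, ∑ j ∈ T, ((A i ∩ A j).card : ℝ) := by
    rw [h2, h3]
    exact sq_sum_le_card_mul_sum_sq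
  unfold mu
  simp_rw [← Finset.sum_div]
  rw [div_pow, div_mul_div_comm, ← sq]
  gcongr

/-- There are at most `1/x` sets of density at least `r + xδ` inside a set of density `r + δ` if any
two of them meet only inside a common set of density at most `r`. -/
lemma sunflower_bound {ι : Type*} (J : Finset ι) (A : ι → Finset X) (S E : Finset X)
    (r δ x : ℝ) (hδ : 0 < δ) (hx1 : x ≤ 1) (hS : mu S = r + δ)
    (hE : mu E ≤ r) (hAS : ∀ j ∈ J, A j ⊆ S) (hA : ∀ j ∈ J, r + x * δ ≤ mu (A j))
    (hAE : ∀ i ∈ J, ∀ j ∈ J, i ≠ j → A i ∩ A j ⊆ E) :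
    (J.card : ℝ) * x ≤ 1 := by
  have h1 : ∑ j ∈ J, mu (A j \ E) ≤ mu (S \ E) := by
    refine sum_mu_le_of_disjoint J _ _ (fun j hj => Finset.sdiff_subset_sdiff (hAS j hj) le_rfl) ?_
    intro i hi j hj hij
    rw [Finset.disjoint_left]
    intro y hy hy'
    rw [Finset.mem_sdiff] at hy hy'
    exact hy.2 (hAE i hi j hj hij (Finset.mem_inter.2 ⟨hy.1, hy'.1⟩))
  have h2 := mu_sdiff_add_inter S E
  have h3 : mu (S ∩ E) ≤ r := (mu_mono Finset.inter_subset_right).trans hE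
  have h4 : ∀ j ∈ J, x * mu (S \ E) ≤ mu (A j \ E) := by
    intro j hj
    have h5 := mu_sdiff_add_inter (A j) E
    have h6 := mu_mono (Finset.inter_subset_inter (hAS j hj) (le_refl E))
    have h7 := hA j hj
    have h8 : x * (r - mu (S ∩ E)) ≤ r - mu (S ∩ E) := mul_le_of_le_one_left (by linarith) hx1
    have h9 : mu (S \ E) = (r - mu (S ∩ E)) + δ := by linarith
    rw [h9, mul_add]
    linarith
  have h5 : (J.card : ℝ) * (x * mu (S \ E)) ≤ ∑ j ∈ J, mu (A j \ E) := by
    rw [← nsmul_eq_mul]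
    exact Finset.card_nsmul_le_sum _ _ _ h4
  have h6 : 0 < mu (S \ E) := by linarith
  have h7 : ((J.card : ℝ) * x) * mu (S \ E) ≤ 1 * mu (S \ E) := by linarith
  exact le_of_mul_le_mul_right h7 h6

/-- If `δ < 1/(6p)`, the sets `A i` nearly fill `S`, so all the sets `E i j` share a large part
and must coincide. -/
lemma small_delta_bound {ι : Type*} (T : Finset ι) (A : ι → Finset X)
    (E : ι → ι → Finset X) (S : Finset X) (p δ x : ℝ) (hp : 2 ≤ p) (hδ : 0 < δ)
    (hδp : δ * (6 * p) < 1) (hx : 0 < x) (hx1 : x ≤ 1) (hS : mu S = 1 / p + δ)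
    (hAS : ∀ j ∈ T, A j ⊆ S) (hA : ∀ j ∈ T, 1 / p + x * δ ≤ mu (A j))
    (hAE : ∀ i ∈ T, ∀ j ∈ T, A i ∩ A j ⊆ E i j) (hsymm : ∀ i j, E i j = E j i)
    (hE1 : ∀ i ∈ T, ∀ j ∈ T, i ≠ j → mu (E i j) ≤ 1 / p)
    (hE2 : ∀ i ∈ T, ∀ j ∈ T, ∀ k ∈ T, ∀ l ∈ T, i ≠ j → k ≠ l → E i j ≠ E k l →
      mu (E i j ∩ E k l) ≤ 1 / p ^ 2) :
    (T.card : ℝ) * x ≤ 1 := by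
  have key : ∀ i ∈ T, ∀ j ∈ T, ∀ k ∈ T, i ≠ j → i ≠ k → E i j = E i k := by
    intro i hi j hj k hk hij hik
    by_contra hne
    have h1 := hE2 i hi j hj i hi k hk hij hik hne
    have h2 := mu_inter_ge (hAS i hi) (hAS j hj)
    have h3 := mu_inter_ge (hAS i hi) (hAS k hk)
    have h4 := mu_inter_ge (A := A i ∩ A j) (B := A i ∩ A k) (S := A i)
      Finset.inter_subset_left Finset.inter_subset_left
    have h5 := mu_mono (Finset.inter_subset_inter (hAE i hi j hj) (hAE i hi k hk))
    have h6 := hA j hj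
    have h7 := hA k hk
    have h8 := hA i hi
    have h9 : 0 < x * δ := by positivity
    have h10 : 1 / p - 2 * δ < 1 / p ^ 2 := by linarith
    have hp0 : (0:ℝ) < p := by linarith
    have h11 : (1 / p - 2 * δ) * p ^ 2 < 1 := by
      have := mul_lt_mul_of_pos_right h10 (by positivity : 0 < p ^ 2)
      rwa [one_div_mul_cancel (by positivity)] at this
    have h12 : (1 / p - 2 * δ) * p ^ 2 = p - 2 * δ * p * p := by field_simp
    rw [h12] at h11
    nlinarith
  rcases Finset.eq_empty_or_nonempty T with rfl | ⟨i0, hi0⟩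
  · simp
  by_cases hc : ∃ j ∈ T, i0 ≠ j
  · obtain ⟨j0, hj0, hne⟩ := hc
    refine sunflower_bound T A S (E i0 j0) (1 / p) δ x hδ hx1 hS (hE1 _ hi0 _ hj0 hne) hAS hA ?_
    intro i hi j hj hij
    have : E i j = E i0 j0 := by
      by_cases h : i0 = i
      · subst h
        exact key _ hi0 _ hj _ hj0 hij hne
      · rw [key _ hi _ hj _ hi0 hij (Ne.symm h), hsymm i i0]
        exact key _ hi0 _ hi _ hj0 h hne
    rw [← this]
    exact hAE i hi j hj
  · push Not at hc
    have : T.card ≤ 1 := Finset.card_le_one.2 fun a ha b hb => (hc a ha).symm.trans (hc b hb)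
    have h2 : (T.card : ℝ) ≤ 1 := by exact_mod_cast this
    nlinarith

/-- If `p > 8/x⁴`, then only boundedly many sets `E i j` can be substantial within `S`, and
for a fixed substantial set the corresponding `A j` form a sunflower. -/
lemma large_p_bound {ι : Type*} [DecidableEq ι] (T : Finset ι) (A : ι → Finset X)
    (E : ι → ι → Finset X) (S : Finset X) (p δ x : ℝ) (hp : 2 ≤ p) (hδ : 0 < δ)
    (hpx : 8 < p * x ^ 4) (hx : 0 < x) (hx1 : x ≤ 1) (hS : mu S = 1 / p + δ)
    (hAS : ∀ j ∈ T, A j ⊆ S) (hA : ∀ j ∈ T, 1 / p + x * δ ≤ mu (A j))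
    (hAE : ∀ i ∈ T, ∀ j ∈ T, A i ∩ A j ⊆ E i j)
    (htrans : ∀ i j k, E i j ∩ E i k ⊆ E j k)
    (hE1 : ∀ i ∈ T, ∀ j ∈ T, i ≠ j → mu (E i j) ≤ 1 / p)
    (hE2 : ∀ i ∈ T, ∀ j ∈ T, ∀ k ∈ T, ∀ l ∈ T, i ≠ j → k ≠ l → E i j ≠ E k l →
      mu (E i j ∩ E k l) ≤ 1 / p ^ 2) :
    (T.card : ℝ) * x ^ 5 ≤ 10 := by
  have hp0 : (0:ℝ) < p := by linarith
  set s := mu S with hs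
  have hps : 1 / p ≤ s := by rw [hS]; linarith
  have hs0 : 0 < s := lt_of_lt_of_le (by positivity) hps
  have hps' : 1 ≤ p * s := by
    have := mul_le_mul_of_nonneg_left hps hp0.le
    rwa [mul_one_div_cancel hp0.ne'] at this
  have hAs : ∀ j ∈ T, x * s ≤ mu (A j) := by
    intro j hj
    have h1 := hA j hj
    have h2 : x * (1 / p) ≤ 1 / p := mul_le_of_le_one_left (by positivity) hx1
    rw [hS, mul_add]; linarith
  rcases Finset.eq_empty_or_nonempty T with rfl | hne
  · simp
  have hN : (0:ℝ) < T.card := by exact_mod_cast hne.card_pos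
  -- some `A i` has average intersection at least `x² s` with the family
  obtain ⟨i, hi, hiav⟩ : ∃ i ∈ T, (T.card : ℝ) * x ^ 2 * s ≤ ∑ j ∈ T, mu (A i ∩ A j) := by
    by_contra hcon
    push Not at hcon
    have h1 := sq_sum_mu_le T A S hAS
    have h2 : (T.card : ℝ) * (x * s) ≤ ∑ j ∈ T, mu (A j) := by
      rw [← nsmul_eq_mul]; exact Finset.card_nsmul_le_sum _ _ _ hAs
    have h3 : ∑ i ∈ T, ∑ j ∈ T, mu (A i ∩ A j) < T.card * ((T.card : ℝ) * x ^ 2 * s) := by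
      rw [← nsmul_eq_mul, ← Finset.sum_const]
      exact Finset.sum_lt_sum_of_nonempty hne hcon
    have h4 : ((T.card : ℝ) * (x * s)) ^ 2 ≤ (∑ j ∈ T, mu (A j)) ^ 2 :=
      pow_le_pow_left₀ (by positivity) h2 2
    have h5 := mul_lt_mul_of_pos_left h3 hs0
    rw [← hs] at h1
    have h6 : s * (T.card * ((T.card : ℝ) * x ^ 2 * s)) = ((T.card : ℝ) * (x * s)) ^ 2 := by ring
    linarith
  set y := x ^ 2 / 2 with hy
  have hy0 : 0 < y := by positivity
  have hy1 : y ≤ 1 := by rw [hy]; nlinarith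
  have hpy : 2 < p * y ^ 2 := by rw [hy]; nlinarith
  set J := T.filter (fun j => i ≠ j ∧ y * s ≤ mu (A i ∩ A j)) with hJ
  have hJmem : ∀ j, j ∈ J ↔ j ∈ T ∧ i ≠ j ∧ y * s ≤ mu (A i ∩ A j) := by
    intro j; rw [hJ, Finset.mem_filter]
  have hJcard : (T.card : ℝ) * y ≤ J.card + 1 := by
    have h1 : ∀ j ∈ T, mu (A i ∩ A j) ≤ y * s + (if j ∈ insert i J then s else 0) := by
      intro j hj
      have h0 : mu (A i ∩ A j) ≤ s := mu_mono (Finset.inter_subset_left.trans (hAS i hi))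
      split_ifs with h
      · have : 0 ≤ y * s := by positivity
        linarith
      · rw [Finset.mem_insert, hJmem] at h
        push Not at h
        have := (h.2 hj (Ne.symm h.1)).le
        linarith
    have h2 := Finset.sum_le_sum h1
    rw [Finset.sum_add_distrib, Finset.sum_const, nsmul_eq_mul, ← Finset.sum_filter,
      Finset.sum_const, nsmul_eq_mul] at h2
    have h3 : ((T.filter (· ∈ insert i J)).card : ℝ) ≤ J.card + 1 := by
      have : (T.filter (· ∈ insert i J)).card ≤ (insert i J).card :=
        Finset.card_le_card (fun z hz => (Finset.mem_filter.1 hz).2)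
      exact_mod_cast this.trans (Finset.card_insert_le _ _)
    have h4 := mul_le_mul_of_nonneg_right h3 hs0.le
    have h5 : ((T.card : ℝ) * y) * s ≤ (J.card + 1) * s := by
      have : x ^ 2 = 2 * y := by rw [hy]; ring
      rw [this] at hiav
      nlinarith
    exact le_of_mul_le_mul_right h5 hs0
  set F := J.image (fun j => E i j) with hF
  have hFheavy : ∀ e ∈ F, y * s ≤ mu (e ∩ S) := by
    intro e he
    obtain ⟨j, hj, rfl⟩ := Finset.mem_image.1 he
    obtain ⟨hjT, _, hjh⟩ := (hJmem j).1 hj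
    refine hjh.trans (mu_mono (Finset.subset_inter (hAE i hi j hjT) ?_))
    exact Finset.inter_subset_left.trans (hAS i hi)
  -- few distinct heavy sets
  have hFcard : (F.card : ℝ) * y ≤ 2 := by
    by_contra hcon
    push Not at hcon
    have h1 := sq_sum_mu_le F (fun e => e ∩ S) S (fun e _ => Finset.inter_subset_right)
    have h2 : (F.card : ℝ) * (y * s) ≤ ∑ e ∈ F, mu (e ∩ S) := by
      rw [← nsmul_eq_mul]; exact Finset.card_nsmul_le_sum _ _ _ hFheavy
    have h3 : ∀ e ∈ F, ∑ e' ∈ F, mu ((e ∩ S) ∩ (e' ∩ S))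
        ≤ mu (e ∩ S) + F.card * (1 / p ^ 2) := by
      intro e he
      have : ∀ e' ∈ F, mu ((e ∩ S) ∩ (e' ∩ S))
          ≤ (if e = e' then mu (e ∩ S) else 0) + 1 / p ^ 2 := by
        intro e' he'
        split_ifs with h
        · subst h
          rw [Finset.inter_self]
          have : 0 ≤ 1 / p ^ 2 := by positivity
          linarith
        · obtain ⟨j, hj, rfl⟩ := Finset.mem_image.1 he
          obtain ⟨k, hk, rfl⟩ := Finset.mem_image.1 he'
          obtain ⟨hjT, hij, _⟩ := (hJmem j).1 hj
          obtain ⟨hkT, hik, _⟩ := (hJmem k).1 hk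
          rw [zero_add]
          exact (mu_mono (Finset.inter_subset_inter Finset.inter_subset_left
            Finset.inter_subset_left)).trans (hE2 i hi j hjT i hi k hkT hij hik h)
      refine (Finset.sum_le_sum this).trans (le_of_eq ?_)
      rw [Finset.sum_add_distrib, Finset.sum_ite_eq, if_pos he, Finset.sum_const, nsmul_eq_mul]
    have h4 := Finset.sum_le_sum h3
    rw [Finset.sum_add_distrib, Finset.sum_const, nsmul_eq_mul] at h4
    set M := ∑ e ∈ F, mu (e ∩ S)
    rw [← hs] at h1
    set t := (F.card : ℝ)
    have h5 : M ^ 2 ≤ s * (M + t * (t * (1 / p ^ 2))) :=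
      h1.trans (mul_le_mul_of_nonneg_left h4 hs0.le)
    have h6 : 2 * s ≤ M := by nlinarith
    have h7 : M ^ 2 ≤ 2 * (s * (t * (t * (1 / p ^ 2)))) := by nlinarith
    have ht : 0 < t := by nlinarith
    have h8 : (t * (y * s)) ^ 2 ≤ M ^ 2 := pow_le_pow_left₀ (by positivity) h2 2
    have h9 : (s * t ^ 2) * (p * y ^ 2 * (p * s)) ≤ (s * t ^ 2) * 2 := by
      have := mul_le_mul_of_nonneg_left (h8.trans h7) (by positivity : 0 ≤ p ^ 2)
      have e1 : p ^ 2 * (2 * (s * (t * (t * (1 / p ^ 2))))) = (s * t ^ 2) * 2 := by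
        field_simp
      rw [e1] at this
      linarith [this]
    have h10 := le_of_mul_le_mul_left h9 (by positivity)
    nlinarith
  -- each heavy set is the kernel of a sunflower
  have hfib : ∀ e ∈ F, ((J.filter (fun j => E i j = e)).card : ℝ) * x ≤ 1 := by
    intro e he
    have hmuE : 1 / p ^ 2 < mu e := by
      have h1 := (hFheavy e he).trans (mu_mono Finset.inter_subset_left)
      refine lt_of_lt_of_le ?_ h1
      rw [div_lt_iff₀ (by positivity)]
      have : 1 < p * y := by nlinarith
      nlinarith
    obtain ⟨j0, hj0, hj0e⟩ := Finset.mem_image.1 he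
    obtain ⟨hj0T, hij0, _⟩ := (hJmem j0).1 hj0
    have hsub : ∀ j ∈ J.filter (fun j => E i j = e), j ∈ T ∧ i ≠ j ∧ E i j = e := by
      intro j hj
      obtain ⟨h1, h2⟩ := Finset.mem_filter.1 hj
      obtain ⟨h3, h4, _⟩ := (hJmem j).1 h1
      exact ⟨h3, h4, h2⟩
    refine sunflower_bound _ A S e (1 / p) δ x hδ hx1 hS
      (hj0e ▸ hE1 i hi j0 hj0T hij0) (fun j hj => hAS j (hsub j hj).1)
      (fun j hj => hA j (hsub j hj).1) ?_
    intro j hj k hk hjk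
    obtain ⟨hjT, hij, hje⟩ := hsub j hj
    obtain ⟨hkT, hik, hke⟩ := hsub k hk
    have hEjk : E j k = e := by
      by_contra hne
      have h1 := hE2 i hi j hjT j hjT k hkT hij hjk (by rw [hje]; exact fun h => hne h.symm)
      have h2 : e ⊆ E j k := by
        have := htrans i j k
        rwa [hje, hke, Finset.inter_self] at this
      rw [hje, Finset.inter_eq_left.2 h2] at h1
      linarith
    rw [← hEjk]
    exact hAE j hjT k hkT
  have hJb : (J.card : ℝ) * x ≤ F.card := by
    have h1 : J.card = ∑ e ∈ F, (J.filter (fun j => E i j = e)).card :=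
      Finset.card_eq_sum_card_image _ _
    rw [h1, Nat.cast_sum, Finset.sum_mul]
    refine (Finset.sum_le_sum hfib).trans (le_of_eq ?_)
    simp
  have e1 : (T.card : ℝ) * x ^ 5 = 4 * (((T.card : ℝ) * y) * (x * y)) := by rw [hy]; ring
  have e2 : ((T.card : ℝ) * y) * (x * y) ≤ (J.card + 1) * (x * y) :=
    mul_le_mul_of_nonneg_right hJcard (by positivity)
  have e3 : (J.card : ℝ) * x * y ≤ F.card * y := mul_le_mul_of_nonneg_right hJb hy0.le
  have e4 : x * y ≤ 1 / 2 := by rw [hy]; nlinarith [pow_le_one₀ hx.le hx1 (n := 2)]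
  linarith

end Density

/-! ### A Johnson-type bound and a pair-counting bound -/

section Counting

variable {X : Type*} [Fintype X]

/-- A Johnson-type bound over an alphabet of size `q`: functions that pairwise agree on density at
most `1/q`, and each of which beats by `η` the agreement `mu S / q` that a random function would
have with `f`, number at most `1/η²`. The allowed values at `x` form the `q`-element set `B x`,
and `S` is the set where `f` takes an allowed value. -/
lemma johnson_bound {ι Y : Type*} [DecidableEq Y] [DecidableEq ι] (T : Finset ι) (φ : ι → X → Y)
    (f : X → Y) (B : X → Finset Y) (q : ℕ) (hq : 0 < q) (hB : ∀ x, (B x).card = q)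
    (hφ : ∀ i ∈ T, ∀ x, φ i x ∈ B x) (S : Finset X) (hS : ∀ x, x ∈ S ↔ f x ∈ B x)
    (hagr : ∀ i ∈ T, ∀ j ∈ T, i ≠ j →
      (q : ℝ) * mu (Finset.univ.filter fun x => φ i x = φ j x) ≤ 1)
    (η : ℝ) (hη : 0 ≤ η)
    (hA : ∀ i ∈ T, η ≤ mu (Finset.univ.filter fun x => φ i x = f x) - mu S / q) :
    (T.card : ℝ) * η ^ 2 ≤ 1 := by
  rcases Finset.eq_empty_or_nonempty T with rfl | hne
  · simp
  have hq0 : (0:ℝ) < q := by exact_mod_cast hq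
  set n : ℝ := (T.card : ℝ) with hn
  have hn0 : 0 < n := by rw [hn]; exact_mod_cast hne.card_pos
  rcases isEmpty_or_nonempty X with hX | hX
  · obtain ⟨i, hi⟩ := hne
    have h1 := hA i hi
    have h2 : η = 0 := by
      apply le_antisymm _ hη
      simpa [mu] using h1
    rw [h2]; norm_num
  set g : ℝ := (Fintype.card X : ℝ) with hg
  have hg0 : 0 < g := by rw [hg]; exact_mod_cast Fintype.card_pos
  have hcard : ∀ A : Finset X, (A.card : ℝ) = g * mu A := by
    intro A; unfold mu; rw [mul_div_cancel₀]; exact hg0.ne'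
  let w : X → Y → ℝ := fun x y => ∑ i ∈ T, if φ i x = y then (1:ℝ) else 0
  let D : X → ℝ := fun x => (∑ i ∈ T, ∑ j ∈ T, if φ i x = φ j x then (1:ℝ) else 0) - n ^ 2 / q
  have hw1 : ∀ x, ∑ y ∈ B x, w x y = n := by
    intro x
    simp only [w]
    rw [Finset.sum_comm]
    rw [Finset.sum_congr rfl (g := fun _ => (1:ℝ))]
    · simp [hn]
    · intro i hi
      rw [Finset.sum_ite_eq, if_pos (hφ i hi x)]
  have hw2 : ∀ x, ∑ y ∈ B x, w x y ^ 2
      = ∑ i ∈ T, ∑ j ∈ T, if φ i x = φ j x then (1:ℝ) else 0 := by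
    intro x
    have : ∀ y, w x y ^ 2 = ∑ i ∈ T, ∑ j ∈ T,
        if φ i x = y then (if φ j x = y then (1:ℝ) else 0) else 0 := by
      intro y
      simp only [w]
      rw [sq, Finset.sum_mul_sum]
      refine Finset.sum_congr rfl fun i _ => Finset.sum_congr rfl fun j _ => ?_
      split_ifs <;> simp
    simp_rw [this]
    rw [Finset.sum_comm]
    refine Finset.sum_congr rfl fun i hi => ?_
    rw [Finset.sum_comm]
    refine Finset.sum_congr rfl fun j hj => ?_
    rw [Finset.sum_ite_eq, if_pos (hφ i hi x)]
    simp only [eq_comm]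
  have hD : ∀ x, ∑ y ∈ B x, (w x y - n / q) ^ 2 = D x := by
    intro x
    have : ∀ y, (w x y - n / q) ^ 2 = w x y ^ 2 - 2 * (n / q) * w x y + (n / q) ^ 2 := by
      intro y; ring
    simp_rw [this]
    rw [Finset.sum_add_distrib, Finset.sum_sub_distrib, ← Finset.mul_sum, hw1, hw2,
      Finset.sum_const, hB, nsmul_eq_mul]
    simp only [D]
    field_simp
    ring
  have hD0 : ∀ x, 0 ≤ D x := by
    intro x; rw [← hD]; exact Finset.sum_nonneg fun _ _ => sq_nonneg _
  have hDs : ∀ x ∈ S, (w x (f x) - n / q) ^ 2 ≤ D x := by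
    intro x hx
    rw [← hD]
    exact Finset.single_le_sum (f := fun y => (w x y - n / q) ^ 2) (fun _ _ => sq_nonneg _)
      ((hS x).1 hx)
  have hsumD : ∑ x, D x ≤ g * n := by
    simp only [D]
    rw [Finset.sum_sub_distrib, Finset.sum_comm]
    have h1 : ∀ i ∈ T, ∑ x, ∑ j ∈ T, (if φ i x = φ j x then (1:ℝ) else 0)
        ≤ g + n * (g / q) := by
      intro i hi
      rw [Finset.sum_comm]
      have : ∀ j ∈ T, ∑ x, (if φ i x = φ j x then (1:ℝ) else 0)
          ≤ (if i = j then g else 0) + g / q := by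
        intro j hj
        rw [← Finset.sum_filter, Finset.sum_const, nsmul_eq_mul, mul_one, hcard]
        split_ifs with h
        · have := mul_le_mul_of_nonneg_left
            (mu_le_one (Finset.univ.filter fun x => φ i x = φ j x)) hg0.le
          have h' : 0 ≤ g / q := by positivity
          linarith
        · have := hagr i hi j hj h
          rw [zero_add, le_div_iff₀ hq0, mul_assoc]
          nlinarith
      refine (Finset.sum_le_sum this).trans (le_of_eq ?_)
      rw [Finset.sum_add_distrib, Finset.sum_ite_eq, if_pos hi, Finset.sum_const, nsmul_eq_mul]
    have h2 := Finset.sum_le_sum h1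
    rw [Finset.sum_const, nsmul_eq_mul] at h2
    rw [Finset.sum_const, nsmul_eq_mul, Finset.card_univ]
    have h3 : n * (g + n * (g / q)) - g * (n ^ 2 / q) = g * n := by ring
    linarith
  have hsumw : ∑ x ∈ S, (w x (f x) - n / q) = (∑ i ∈ T,
      ((Finset.univ.filter fun x => φ i x = f x).card : ℝ)) - S.card * (n / q) := by
    rw [Finset.sum_sub_distrib, Finset.sum_const, nsmul_eq_mul]
    congr 1
    simp only [w]
    rw [Finset.sum_comm]
    refine Finset.sum_congr rfl fun i hi => ?_
    rw [← Finset.sum_filter, Finset.sum_const, nsmul_eq_mul, mul_one]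
    congr 2
    ext x
    simp only [Finset.mem_filter, Finset.mem_univ, true_and, and_iff_right_iff_imp]
    intro h
    rw [hS, ← h]
    exact hφ i hi x
  have hlow : g * (n * η) ≤ ∑ x ∈ S, (w x (f x) - n / q) := by
    rw [hsumw]
    simp_rw [hcard]
    rw [← Finset.mul_sum]
    have h1 : n * (η + mu S / q) ≤ ∑ i ∈ T, mu (Finset.univ.filter fun x => φ i x = f x) := by
      rw [hn, ← nsmul_eq_mul]
      exact Finset.card_nsmul_le_sum _ _ _ fun i hi => by linarith [hA i hi]
    have h2 := mul_le_mul_of_nonneg_left h1 hg0.le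
    have h3 : g * (n * (η + mu S / q)) = g * (n * η) + g * mu S * (n / q) := by ring
    linarith
  have hcs := sq_sum_le_card_mul_sum_sq (s := S) (f := fun x => w x (f x) - n / q)
  have h1 : ∑ x ∈ S, (w x (f x) - n / q) ^ 2 ≤ g * n :=
    ((Finset.sum_le_sum hDs).trans (Finset.sum_le_univ_sum_of_nonneg hD0)).trans hsumD
  have h2 : (S.card : ℝ) ≤ g := by rw [hg]; exact_mod_cast Finset.card_le_univ S
  have h3 : (g * (n * η)) ^ 2 ≤ g * (g * n) := by
    refine (pow_le_pow_left₀ (by positivity) hlow 2).trans (hcs.trans ?_)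
    exact mul_le_mul h2 h1 (Finset.sum_nonneg fun _ _ => sq_nonneg _) hg0.le
  have h4 : (g ^ 2 * n) * (n * η ^ 2) ≤ (g ^ 2 * n) * 1 := by nlinarith
  exact le_of_mul_le_mul_left h4 (by positivity)

/-- Sets such that two common points of distinct members are always `R`-related, where `R` has
small classes: an unrelated pair of points lies in at most one of the sets. -/
lemma two_point_bound [DecidableEq X] {ι : Type*} (T : Finset ι) (A : ι → Finset X)
    (R : X → X → Prop) [∀ x y, Decidable (R x y)] (r c : ℝ)
    (hR : ∀ x, mu (Finset.univ.filter fun y => R x y) ≤ r)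
    (hAR : ∀ i ∈ T, ∀ j ∈ T, i ≠ j → ∀ x ∈ A i ∩ A j, ∀ y ∈ A i ∩ A j, R x y)
    (hA : ∀ i ∈ T, c ≤ mu (A i) * (mu (A i) - r)) :
    (T.card : ℝ) * c ≤ 1 := by
  let P : ι → Finset (X × X) := fun i => (A i ×ˢ A i).filter fun z => ¬ R z.1 z.2
  have hP : ∑ i ∈ T, mu (P i) ≤ mu (Finset.univ : Finset (X × X)) := by
    refine sum_mu_le_of_disjoint T P _ (fun i _ => Finset.subset_univ _) ?_
    intro i hi j hj hij
    rw [Finset.disjoint_left]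
    rintro ⟨x, y⟩ h1 h2
    simp only [P, Finset.mem_filter, Finset.mem_product] at h1 h2
    exact h1.2 (hAR i hi j hj hij x (Finset.mem_inter.2 ⟨h1.1.1, h2.1.1⟩) y
      (Finset.mem_inter.2 ⟨h1.1.2, h2.1.2⟩))
  have hPi : ∀ i ∈ T, c ≤ mu (P i) := by
    intro i hi
    refine (hA i hi).trans ?_
    rcases isEmpty_or_nonempty X with hX | hX
    · simp [mu]
    set g : ℝ := (Fintype.card X : ℝ) with hg
    have hg0 : 0 < g := by rw [hg]; exact_mod_cast Fintype.card_pos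
    have h1 : (((A i ×ˢ A i).filter fun z => R z.1 z.2).card : ℝ) ≤ (A i).card * (r * g) := by
      have h2 : ((A i ×ˢ A i).filter fun z => R z.1 z.2).card
          ≤ ∑ x ∈ A i, (Finset.univ.filter fun y => R x y).card := by
        rw [← Finset.card_sigma]
        refine Finset.card_le_card_of_injOn (fun z => ⟨z.1, z.2⟩) ?_ ?_
        · intro z hz
          simp at hz ⊢
          exact ⟨hz.1.1, hz.2⟩
        · rintro ⟨a, b⟩ _ ⟨c, d⟩ _ h
          simp at h
          simp [h]
      have h3 : ((∑ x ∈ A i, (Finset.univ.filter fun y => R x y).card : ℕ) : ℝ)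
          ≤ (A i).card * (r * g) := by
        rw [Nat.cast_sum, ← nsmul_eq_mul]
        refine Finset.sum_le_card_nsmul _ _ _ fun x _ => ?_
        have := hR x
        unfold mu at this
        rwa [div_le_iff₀ hg0] at this
      exact le_trans (by exact_mod_cast h2) h3
    have h4 : (((A i ×ˢ A i).filter fun z => R z.1 z.2).card : ℝ) + (P i).card
        = (A i).card * (A i).card := by
      have := Finset.card_filter_add_card_filter_not (s := A i ×ˢ A i) (fun z => R z.1 z.2)
      rw [Finset.card_product] at this
      exact_mod_cast this
    unfold mu
    rw [Fintype.card_prod, Nat.cast_mul, ← hg, le_div_iff₀ (by positivity)]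
    have h5 : ((A i).card : ℝ) / g * ((A i).card / g - r) * (g * g)
        = (A i).card * (A i).card - (A i).card * (r * g) := by
      field_simp
    rw [h5]
    linarith
  have h6 : (T.card : ℝ) * c ≤ ∑ i ∈ T, mu (P i) := by
    rw [← nsmul_eq_mul]; exact Finset.card_nsmul_le_sum _ _ _ hPi
  exact h6.trans (hP.trans (mu_le_one _))

end Counting

/-! ### From counting bounds to power sums -/

section PowerSums

/-- If at most `K / y ^ c` terms are at least `y`, for every `y`, then the sum of the `2c`-th powers
is at most `2 K²`; the subtracted term makes the induction work. -/
lemma sum_pow_le_of_count {ι : Type*} [DecidableEq ι] (K : ℝ) (c : ℕ) (hK : 0 ≤ K) (hc : c ≠ 0)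
    (x : ι → ℝ) (hx : ∀ i, 0 ≤ x i) (T : Finset ι)
    (hcount : ∀ y : ℝ, 0 < y → ∀ T' ⊆ T, (∀ i ∈ T', y ≤ x i) → (T'.card : ℝ) * y ^ c ≤ K) :
    ∑ i ∈ T, x i ^ (2 * c) ≤ K ^ 2 * (2 - 2 / ((T.card : ℝ) + 1)) := by
  -- Remove the smallest term: its `c`-th power is at most `K / #T`.
  induction hn : T.card generalizing T with
  | zero =>
    rw [Finset.card_eq_zero] at hn
    subst hn
    simp
  | succ n ih =>
    have hne : T.Nonempty := by rw [← Finset.card_pos]; omega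
    obtain ⟨m, hm, hmin⟩ := Finset.exists_min_image T x hne
    have h1 := ih (T.erase m) (fun y hy T' hT' => hcount y hy T' (hT'.trans (Finset.erase_subset _ _)))
      (by rw [Finset.card_erase_of_mem hm]; omega)
    rw [← Finset.add_sum_erase T _ hm]
    have h2 : ((n:ℝ) + 1) * x m ^ c ≤ K := by
      rcases (hx m).eq_or_lt with h | h
      · rw [← h, zero_pow hc, mul_zero]; exact hK
      · have := hcount (x m) h T le_rfl hmin
        rw [hn] at this
        exact_mod_cast this
    have h3 : x m ^ (2 * c) ≤ K ^ 2 * (1 / ((n:ℝ) + 1) ^ 2) := by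
      have h4 : (((n:ℝ) + 1) * x m ^ c) ^ 2 ≤ K ^ 2 :=
        pow_le_pow_left₀ (by have := hx m; positivity) h2 2
      rw [mul_one_div, le_div_iff₀ (by positivity)]
      calc x m ^ (2 * c) * ((n:ℝ) + 1) ^ 2 = (((n:ℝ) + 1) * x m ^ c) ^ 2 := by ring
        _ ≤ _ := h4
    have h5 : 1 / ((n:ℝ) + 1) ^ 2 + (2 - 2 / ((n:ℝ) + 1)) ≤ 2 - 2 / (((n + 1 : ℕ) : ℝ) + 1) := by
      have h7 : (2 - 2 / (((n + 1 : ℕ) : ℝ) + 1)) - (1 / ((n:ℝ) + 1) ^ 2 + (2 - 2 / ((n:ℝ) + 1)))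
          = n / (((n:ℝ) + 1) ^ 2 * (n + 2)) := by
        have h8 : ((n:ℝ) + 1) ≠ 0 := by positivity
        have h9 : ((n:ℝ) + 2) ≠ 0 := by positivity
        have h10 : ((n + 1 : ℕ) : ℝ) + 1 = n + 2 := by push_cast; ring
        rw [h10]
        field_simp
        ring
      have h8 : 0 ≤ n / (((n:ℝ) + 1) ^ 2 * (n + 2)) := by positivity
      linarith
    have h6 := mul_le_mul_of_nonneg_left h5 (sq_nonneg K)
    rw [mul_add] at h6
    linarith

/-- The passage from a polynomial counting bound to a power sum bound without loss: the largest
term `u` leaves the others below `min u (1 - u) ≤ 1/2`, and a large exponent absorbs the constant. -/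
lemma sum_pow_le_one {ι : Type*} [DecidableEq ι] (x : ι → ℝ) (hx : ∀ i, 0 ≤ x i) (T : Finset ι)
    (hx1 : ∀ i ∈ T, x i ≤ 1) (hpair : ∀ i ∈ T, ∀ j ∈ T, i ≠ j → x i + x j ≤ 1)
    (hcount : ∀ y : ℝ, 0 < y → ∀ T' ⊆ T, (∀ i ∈ T', y ≤ x i) →
      (T'.card : ℝ) * y ^ 19 ≤ 2 ^ 17) :
    ∑ i ∈ T, x i ^ 80 ≤ 1 := by
  rcases Finset.eq_empty_or_nonempty T with rfl | hne
  · simp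
  obtain ⟨m, hm, hmax⟩ := Finset.exists_max_image T x hne
  have hsum : ∑ i ∈ T, x i ^ 38 ≤ 2 ^ 35 := by
    have h1 := sum_pow_le_of_count (2 ^ 17) 19 (by norm_num) (by norm_num) x hx T hcount
    have h2 : 0 ≤ 2 / ((T.card : ℝ) + 1) := by positivity
    have h3 : ((2:ℝ) ^ 17) ^ 2 * (2 - 2 / ((T.card : ℝ) + 1)) ≤ (2 ^ 17) ^ 2 * 2 :=
      mul_le_mul_of_nonneg_left (by linarith) (by positivity)
    exact h1.trans (h3.trans (by norm_num))
  set u := x m with hu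
  set v := min u (1 - u) with hv
  have hu0 : 0 ≤ u := hx m
  have hu1 : u ≤ 1 := hx1 m hm
  have hv0 : 0 ≤ v := le_min hu0 (by linarith)
  have hvu : v ≤ 1 - u := min_le_right _ _
  have hv2 : v ≤ 1 / 2 := by
    have : v ≤ u := min_le_left _ _
    linarith
  have h1 : ∀ i ∈ T.erase m, x i ^ 80 ≤ v ^ 42 * x i ^ 38 := by
    intro i hi
    obtain ⟨him, hiT⟩ := Finset.mem_erase.1 hi
    have h2 : x i ≤ v := le_min (hmax i hiT) (by linarith [hpair i hiT m hm him])
    calc x i ^ 80 = x i ^ 42 * x i ^ 38 := by ring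
      _ ≤ _ := mul_le_mul_of_nonneg_right (pow_le_pow_left₀ (hx i) h2 42) (pow_nonneg (hx i) _)
  have h3 : ∑ i ∈ T.erase m, x i ^ 80 ≤ v := by
    refine (Finset.sum_le_sum h1).trans ?_
    rw [← Finset.mul_sum]
    have h4 : ∑ i ∈ T.erase m, x i ^ 38 ≤ 2 ^ 35 :=
      (Finset.sum_le_sum_of_subset_of_nonneg (Finset.erase_subset _ _)
        (fun i _ _ => pow_nonneg (hx i) _)).trans hsum
    have h5 : v ^ 42 ≤ v * (1 / 2) ^ 41 := by
      calc v ^ 42 = v * v ^ 41 := by ring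
        _ ≤ _ := mul_le_mul_of_nonneg_left (pow_le_pow_left₀ hv0 hv2 41) hv0
    calc v ^ 42 * ∑ i ∈ T.erase m, x i ^ 38 ≤ (v * (1 / 2) ^ 41) * 2 ^ 35 :=
          mul_le_mul h5 h4 (Finset.sum_nonneg fun i _ => pow_nonneg (hx i) _) (by positivity)
      _ = v * (1 / 64) := by ring
      _ ≤ v := by linarith
  rw [← Finset.add_sum_erase T _ hm]
  have h6 : x m ^ 80 ≤ u := pow_le_of_le_one hu0 hu1 (by norm_num)
  linarith

end PowerSums

/-! ### Agreement sets of affine homomorphisms -/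

section Affine

open Classical

variable {G H : Type*} [Group G] [Group H]

/-- The affine homomorphism `g ↦ h * φ₀ g` encoded by the pair `(h, φ₀)`. -/
def ev (a : H × (G →* H)) (g : G) : H := a.1 * a.2 g

/-- The set on which two functions agree. -/
noncomputable def agrSet {X Y : Type*} [Fintype X] (u v : X → Y) : Finset X :=
  Finset.univ.filter fun x => u x = v x

lemma ev_injective : Function.Injective (ev : H × (G →* H) → G → H) := by
  intro a b h
  have h1 : a.1 = b.1 := by simpa [ev] using congrFun h 1
  refine Prod.ext h1 (MonoidHom.ext fun g => ?_)
  have h2 := congrFun h g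
  simp only [ev, h1] at h2
  exact mul_left_cancel h2

lemma mem_agrSet {X Y : Type*} [Fintype X] {u v : X → Y} {x : X} : x ∈ agrSet u v ↔ u x = v x := by
  simp [agrSet]

variable [Fintype G]

lemma mem_agrSet_iff {a b : H × (G →* H)} {x : G} (hx : x ∈ agrSet (ev a) (ev b)) (y : G) :
    y ∈ agrSet (ev a) (ev b) ↔ x⁻¹ * y ∈ a.2.eqLocus b.2 := by
  rw [mem_agrSet] at hx ⊢
  have h : ∀ c : H × (G →* H), ev c y = ev c x * c.2 (x⁻¹ * y) := by
    intro c; simp [ev, mul_assoc]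
  rw [h a, h b, hx]
  exact mul_left_cancel_iff

lemma mu_coset (K : Subgroup G) (x : G) :
    mu (Finset.univ.filter fun y => x⁻¹ * y ∈ K) = (Nat.card K : ℝ) / Fintype.card G := by
  unfold mu
  congr 2
  rw [← Fintype.card_subtype, Nat.card_eq_fintype_card]
  exact Fintype.card_congr ((Equiv.mulLeft x⁻¹).subtypeEquiv fun y => Iff.rfl)

lemma mul_card_le_of_lt {p : ℕ} (hmin : ∀ q : ℕ, q.Prime → q ∣ Fintype.card G → p ≤ q)
    {K L : Subgroup G} (h : K < L) : p * Nat.card K ≤ Nat.card L := by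
  have h1 : K.relIndex L ≠ 1 := fun h1 => not_le_of_gt h (Subgroup.relIndex_eq_one.1 h1)
  have h2 : Nat.card K * K.relIndex L = Nat.card L := by
    rw [Subgroup.relIndex, ← Nat.card_congr (Subgroup.subgroupOfEquivOfLe h.le).toEquiv]
    exact Subgroup.card_mul_index _
  have h3 : K.relIndex L ∣ Fintype.card G := by
    rw [← Nat.card_eq_fintype_card]
    exact (Dvd.intro_left _ h2).trans (Subgroup.card_subgroup_dvd_card L)
  have h4 : p ≤ (K.relIndex L).minFac :=
    hmin _ (Nat.minFac_prime h1) ((Nat.minFac_dvd _).trans h3)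
  have h5 : p ≤ K.relIndex L := h4.trans (Nat.minFac_le (Nat.pos_of_ne_zero fun h0 => by
    rw [h0, mul_zero] at h2
    exact Nat.card_pos.ne h2))
  rw [← h2, mul_comm]
  exact Nat.mul_le_mul_left _ h5

lemma mu_coset_le {p : ℕ} (hp : 0 < p) (hmin : ∀ q : ℕ, q.Prime → q ∣ Fintype.card G → p ≤ q)
    {K : Subgroup G} (hK : K ≠ ⊤) (x : G) :
    mu (Finset.univ.filter fun y => x⁻¹ * y ∈ K) ≤ 1 / p := by
  have h1 := mul_card_le_of_lt hmin (lt_top_iff_ne_top.2 hK)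
  rw [Subgroup.card_top, Nat.card_eq_fintype_card (α := G)] at h1
  have hp' : (0:ℝ) < p := by exact_mod_cast hp
  have hG : (0:ℝ) < Fintype.card G := by exact_mod_cast Fintype.card_pos
  rw [mu_coset, div_le_div_iff₀ hG hp', one_mul, mul_comm]
  exact_mod_cast h1

lemma agrSet_eq_coset {a b : H × (G →* H)} {x : G} (hx : x ∈ agrSet (ev a) (ev b)) :
    agrSet (ev a) (ev b) = Finset.univ.filter fun y => x⁻¹ * y ∈ a.2.eqLocus b.2 := by
  ext y; rw [mem_agrSet_iff hx]; simp

lemma eqLocus_ne_top {a b : H × (G →* H)} (hab : a ≠ b) {x : G}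
    (hx : x ∈ agrSet (ev a) (ev b)) : a.2.eqLocus b.2 ≠ ⊤ := by
  intro h
  refine hab (ev_injective (funext fun y => ?_))
  rw [← mem_agrSet, mem_agrSet_iff hx, h]
  trivial

lemma mu_agrSet_le {p : ℕ} (hp : 0 < p) (hmin : ∀ q : ℕ, q.Prime → q ∣ Fintype.card G → p ≤ q)
    {a b : H × (G →* H)} (hab : a ≠ b) : mu (agrSet (ev a) (ev b)) ≤ 1 / p := by
  rcases Finset.eq_empty_or_nonempty (agrSet (ev a) (ev b)) with h | ⟨x, hx⟩
  · rw [h, mu_empty]; positivity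
  · rw [agrSet_eq_coset hx]
    exact mu_coset_le hp hmin (eqLocus_ne_top hab hx) x

/-- Two different agreement sets that meet are cosets of different proper subgroups `K`, `L`. One of
`K`, `L` properly contains `K ⊓ L`, so there are two proper steps from `K ⊓ L` up to `G`, each of
index at least `p`. -/
lemma mu_agrSet_inter_le {p : ℕ} (hp : 0 < p)
    (hmin : ∀ q : ℕ, q.Prime → q ∣ Fintype.card G → p ≤ q)
    {a b c d : H × (G →* H)} (hab : a ≠ b) (hcd : c ≠ d)
    (hne : agrSet (ev a) (ev b) ≠ agrSet (ev c) (ev d)) :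
    mu (agrSet (ev a) (ev b) ∩ agrSet (ev c) (ev d)) ≤ 1 / (p : ℝ) ^ 2 := by
  rcases Finset.eq_empty_or_nonempty (agrSet (ev a) (ev b) ∩ agrSet (ev c) (ev d)) with h | ⟨x, hx⟩
  · rw [h, mu_empty]; positivity
  obtain ⟨hx1, hx2⟩ := Finset.mem_inter.1 hx
  have hK := eqLocus_ne_top hab hx1
  have hL := eqLocus_ne_top hcd hx2
  rw [agrSet_eq_coset hx1, agrSet_eq_coset hx2] at hne ⊢
  set K := a.2.eqLocus b.2
  set L := c.2.eqLocus d.2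
  have hKL : K ≠ L := fun h => hne (by rw [h])
  have h1 : (Finset.univ.filter fun y => x⁻¹ * y ∈ K) ∩ (Finset.univ.filter fun y => x⁻¹ * y ∈ L)
      = Finset.univ.filter fun y => x⁻¹ * y ∈ K ⊓ L := by
    ext y; simp [Subgroup.mem_inf]
  rw [h1, mu_coset]
  have hG : (0:ℝ) < Fintype.card G := by exact_mod_cast Fintype.card_pos
  have hp' : (0:ℝ) < p := by exact_mod_cast hp
  rw [div_le_div_iff₀ hG (by positivity), one_mul]
  have key : ∀ K' : Subgroup G, K' ≠ ⊤ → K ⊓ L < K' → Nat.card ↥(K ⊓ L) * p ^ 2 ≤ Fintype.card G := by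
    intro K' hK' hlt
    have h2 := mul_card_le_of_lt hmin hlt
    have h3 := mul_card_le_of_lt hmin (lt_top_iff_ne_top.2 hK')
    rw [Subgroup.card_top, Nat.card_eq_fintype_card (α := G)] at h3
    calc Nat.card ↥(K ⊓ L) * p ^ 2 = p * (p * Nat.card ↥(K ⊓ L)) := by ring
      _ ≤ p * Nat.card K' := Nat.mul_le_mul_left _ h2
      _ ≤ _ := h3
  by_cases h4 : K ⊓ L = K
  · refine mod_cast key L hL (lt_of_le_of_ne inf_le_right fun h5 => hKL (h4.symm.trans h5))
  · exact mod_cast key K hK (lt_of_le_of_ne inf_le_left h4)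

end Affine

/-! ### Homomorphisms that agree modulo a normal subgroup of prime order -/

section Lifts

variable {G H : Type*} [Group G] [Group H]

/-- Homomorphisms that agree modulo `N` have an equalizer of index at most `#N`, because
`g ↦ φ g * (ψ g)⁻¹` separates its left cosets. -/
lemma index_eqLocus_le [Finite H] (N : Subgroup H) [N.Normal] (φ ψ : G →* H)
    (h : (QuotientGroup.mk' N).comp φ = (QuotientGroup.mk' N).comp ψ) :
    (φ.eqLocus ψ).index ≤ Nat.card N := by
  have hN : ∀ g, φ g * (ψ g)⁻¹ ∈ N := by
    intro g
    have := DFunLike.congr_fun h g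
    simp only [MonoidHom.comp_apply, QuotientGroup.mk'_apply] at this
    rw [← QuotientGroup.eq_one_iff, QuotientGroup.mk_mul, QuotientGroup.mk_inv, this,
      mul_inv_cancel]
  have hiff : ∀ g k, φ g * (ψ g)⁻¹ = φ k * (ψ k)⁻¹ ↔ g⁻¹ * k ∈ φ.eqLocus ψ := by
    intro g k
    change _ ↔ φ (g⁻¹ * k) = ψ (g⁻¹ * k)
    simp only [map_mul, map_inv]
    constructor
    · intro e
      have e' : φ k = φ g * (ψ g)⁻¹ * ψ k := by rw [e]; group
      rw [e']; group
    · intro e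
      have e' : φ k = φ g * ((ψ g)⁻¹ * ψ k) := by rw [← e]; group
      rw [e']; group
  let F : G ⧸ φ.eqLocus ψ → N := Quotient.lift (s := QuotientGroup.leftRel _)
    (fun g => ⟨φ g * (ψ g)⁻¹, hN g⟩) (by
      intro g k hgk
      exact Subtype.ext ((hiff g k).2 (QuotientGroup.leftRel_apply.1 hgk)))
  refine Nat.card_le_card_of_injective F ?_
  intro x y
  induction x using QuotientGroup.induction_on with | _ g =>
  induction y using QuotientGroup.induction_on with | _ k =>
  intro e
  exact QuotientGroup.eq.2 ((hiff g k).1 (congrArg Subtype.val e))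

/-- The kernel of the action of `G` on the normal subgroup `N` through `φ`. -/
def actKer (N : Subgroup H) [N.Normal] (φ : G →* H) : Subgroup G :=
  ((MulAut.conjNormal (H := N)).comp φ).ker

lemma mem_actKer {N : Subgroup H} [N.Normal] {φ : G →* H} {g : G} :
    g ∈ actKer N φ ↔ ∀ n ∈ N, φ g * n = n * φ g := by
  unfold actKer
  rw [MonoidHom.mem_ker, MonoidHom.comp_apply, MulEquiv.ext_iff]
  simp only [Subtype.forall]
  refine forall₂_congr fun n hn => ?_
  rw [Subtype.ext_iff, MulAut.conjNormal_apply]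
  simp [mul_inv_eq_iff_eq_mul]

variable {q : ℕ} (N : Subgroup H) [N.Normal]

lemma actKer_congr (hq : q.Prime) (hN : Nat.card N = q) {φ ψ : G →* H}
    (h : (QuotientGroup.mk' N).comp φ = (QuotientGroup.mk' N).comp ψ) :
    actKer N φ = actKer N ψ := by
  have : Fact q.Prime := ⟨hq⟩
  have : IsCyclic N := isCyclic_of_prime_card hN
  have hcomm : ∀ m ∈ N, ∀ n ∈ N, m * n = n * m := fun m hm n hn => by
    let _ := IsCyclic.commGroup (α := N)
    exact congrArg Subtype.val (mul_comm (⟨m, hm⟩ : N) ⟨n, hn⟩)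
  have aux : ∀ φ ψ : G →* H, (QuotientGroup.mk' N).comp φ = (QuotientGroup.mk' N).comp ψ →
      actKer N φ ≤ actKer N ψ := by
    intro φ ψ h g hg
    rw [mem_actKer] at hg ⊢
    intro n hn
    have h1 : (ψ g)⁻¹ * φ g ∈ N := by
      have := DFunLike.congr_fun h g
      exact QuotientGroup.eq.1 this.symm
    have h2 := hcomm _ (N.inv_mem h1) n hn
    have h3 : ψ g = φ g * ((ψ g)⁻¹ * φ g)⁻¹ := by group
    rw [h3, mul_assoc, h2, ← mul_assoc, hg n hn, mul_assoc]
  exact le_antisymm (aux φ ψ h) (aux ψ φ h.symm)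

/-- If the two lifts differ at some `g` acting trivially on `N`, they differ at `g ^ k` by
the `k`-th power of a generator of `N`, so the powers of `g` meet `q` cosets of the equalizer. -/
lemma le_index_eqLocus [Finite G] (hq : q.Prime) (hN : Nat.card N = q) {φ ψ : G →* H}
    (h : (QuotientGroup.mk' N).comp φ = (QuotientGroup.mk' N).comp ψ)
    (hM : ¬ actKer N φ ≤ φ.eqLocus ψ) : q ≤ (φ.eqLocus ψ).index := by
  obtain ⟨g, hg, hgne⟩ := SetLike.not_le_iff_exists.1 hM
  have hgψ : g ∈ actKer N ψ := by rwa [← actKer_congr N hq hN h]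
  rw [mem_actKer] at hg hgψ
  set ν := (ψ g)⁻¹ * φ g with hν
  have hνN : ν ∈ N := QuotientGroup.eq.1 (DFunLike.congr_fun h g).symm
  have hν1 : ν ≠ 1 := by
    intro h1
    rw [hν, inv_mul_eq_one] at h1
    exact hgne h1.symm
  have hord : orderOf ν = q := by
    have h1 : orderOf ν ∣ q := by
      rw [← hN]
      exact Subgroup.orderOf_dvd_natCard N hνN
    rcases (Nat.dvd_prime hq).1 h1 with h2 | h2
    · exact absurd (orderOf_eq_one_iff.1 h2) hν1
    · exact h2
  have hφg : φ g = ψ g * ν := by rw [hν]; group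
  have hpow : ∀ k : ℤ, g ^ k ∈ φ.eqLocus ψ → (q : ℤ) ∣ k := by
    intro k hk
    have hk : φ (g ^ k) = ψ (g ^ k) := hk
    have hc : Commute (ψ g) ν := hgψ ν hνN
    rw [map_zpow, map_zpow, hφg, hc.mul_zpow, mul_eq_left] at hk
    rw [← hord]
    exact orderOf_dvd_iff_zpow_eq_one.2 hk
  have hinj : Function.Injective fun k : Fin q => (QuotientGroup.mk (g ^ (k : ℕ)) :
      G ⧸ φ.eqLocus ψ) := by
    intro i j hij
    have h1 := QuotientGroup.eq.1 hij
    rw [← zpow_natCast, ← zpow_natCast, ← zpow_neg, ← zpow_add] at h1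
    have h2 := hpow _ h1
    have h3 := i.2
    have h4 := j.2
    have h5 : (-(i:ℕ) + (j:ℕ) : ℤ) = 0 := Int.eq_zero_of_abs_lt_dvd h2 (by rw [abs_lt]; omega)
    exact Fin.ext (by omega)
  have := Nat.card_le_card_of_injective _ hinj
  simpa [Subgroup.index] using this

/-- If the two lifts agree on the kernel `M` of the action on `N` but are not equal, then they
agree nowhere off `M`: an element `k ∉ M` of the equalizer would fix each difference
`φ g * (ψ g)⁻¹ ∈ N`, since `G / M` embeds in the abelian group `Aut N`, while it has no
nontrivial fixed point in `N`. -/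
lemma eqLocus_le_actKer (hq : q.Prime) (hN : Nat.card N = q) {φ ψ : G →* H}
    (h : (QuotientGroup.mk' N).comp φ = (QuotientGroup.mk' N).comp ψ)
    (hM : actKer N φ ≤ φ.eqLocus ψ) (hK : φ.eqLocus ψ ≠ ⊤) : φ.eqLocus ψ ≤ actKer N φ := by
  have : Fact q.Prime := ⟨hq⟩
  have : IsCyclic N := isCyclic_of_prime_card hN
  intro k hk
  by_contra hkM
  apply hK
  rw [eq_top_iff]
  intro g _
  have hcommAut : ∀ u v : MulAut N, u * v = v * u := by
    intro u v
    apply (IsCyclic.mulAutMulEquiv N).injective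
    rw [map_mul, map_mul, mul_comm]
  set m := k * g * k⁻¹ * g⁻¹ with hm
  have hmM : m ∈ actKer N φ := by
    unfold actKer
    rw [MonoidHom.mem_ker, hm]
    simp only [map_mul, map_inv]
    rw [hcommAut (((MulAut.conjNormal (H := N)).comp φ) k)]
    group
  have hmK : φ m = ψ m := hM hmM
  have hkK : φ k = ψ k := hk
  set ν := φ g * (ψ g)⁻¹ with hν
  have hνN : ν ∈ N := by
    rw [hν, ← QuotientGroup.eq_one_iff, QuotientGroup.mk_mul, QuotientGroup.mk_inv]
    have := DFunLike.congr_fun h g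
    simp only [MonoidHom.comp_apply, QuotientGroup.mk'_apply] at this
    rw [this, mul_inv_cancel]
  have hmc := mem_actKer.1 hmM ν hνN
  have hgk : k * g = m * g * k := by rw [hm]; group
  have e1 : φ k * φ g = φ m * φ g * φ k := by rw [← map_mul, hgk, map_mul, map_mul]
  have e2 : ψ k * ψ g = ψ m * ψ g * ψ k := by rw [← map_mul, hgk, map_mul, map_mul]
  have hφg : φ g = ν * ψ g := by rw [hν]; group
  have hfix : φ k * ν = ν * φ k := by
    have e3 : φ k * ν * ψ g = ν * φ k * ψ g := by
      calc φ k * ν * ψ g = φ k * φ g := by rw [hφg, mul_assoc]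
        _ = φ m * ν * ψ g * φ k := by rw [e1, hφg]; group
        _ = ν * (ψ m * ψ g * ψ k) := by rw [hmc, hmK, hkK]; group
        _ = ν * φ k * ψ g := by rw [← e2, hkK, ← mul_assoc]
    exact mul_right_cancel e3
  have hν1 : ν = 1 := by
    by_contra hne
    apply hkM
    rw [mem_actKer]
    intro n hn
    have hne' : (⟨ν, hνN⟩ : N) ≠ 1 := fun e => hne (congrArg Subtype.val e)
    have htop := mem_zpowers_of_prime_card hN hne' (g' := ⟨n, hn⟩)
    obtain ⟨j, hj⟩ := Subgroup.mem_zpowers_iff.1 htop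
    have hj' : ν ^ j = n := by simpa using congrArg Subtype.val hj
    rw [← hj']
    exact (Commute.zpow_right hfix j)
  change φ g = ψ g
  rw [hφg, hν1, one_mul]

end Lifts

/-! ### Lifts of one affine homomorphism -/

section Fibre

open Classical

variable {G H : Type*} [Group G] [Group H] [Fintype G]

lemma agrSet_inter_subset {X Y : Type*} [Fintype X] (u v f : X → Y) :
    agrSet u f ∩ agrSet v f ⊆ agrSet u v := by
  intro x hx
  simp only [Finset.mem_inter, mem_agrSet] at hx ⊢
  rw [hx.1, hx.2]

/-- The polynomial counting bound for the lifts to `H` of one affine homomorphism into `H ⧸ N`,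
where `N` has prime order: relative to the density `1/p + δ` of the set `S` where the projected map
agrees with `f`, at most `2¹⁷ / x¹⁹` lifts keep agreement `1/p + xδ`. -/
lemma fibre_count [Finite H] {p q : ℕ} (hp : p.Prime)
    (hmin : ∀ q : ℕ, q.Prime → q ∣ Fintype.card G → p ≤ q)
    (N : Subgroup H) [N.Normal] (hq : q.Prime) (hN : Nat.card N = q)
    (T : Finset (H × (G →* H))) (b : (H ⧸ N) × (G →* H ⧸ N))
    (hb : ∀ a ∈ T, (a.1 : H ⧸ N) = b.1 ∧ (QuotientGroup.mk' N).comp a.2 = b.2)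
    (f : G → H) (S : Finset G) (hSdef : S = agrSet (ev b) (fun g => (f g : H ⧸ N)))
    (δ x : ℝ) (hδ : 0 < δ) (hx : 0 < x) (hx1 : x ≤ 1) (hS : mu S = 1 / p + δ)
    (hA : ∀ a ∈ T, 1 / p + x * δ ≤ mu (agrSet (ev a) f)) :
    (T.card : ℝ) * x ^ 19 ≤ 2 ^ 17 := by
  have hp2 : (2:ℝ) ≤ p := by exact_mod_cast hp.two_le
  have hp0 : (0:ℝ) < p := by linarith
  have hcomp : ∀ a ∈ T, ∀ a' ∈ T,
      (QuotientGroup.mk' N).comp a.2 = (QuotientGroup.mk' N).comp a'.2 :=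
    fun a ha a' ha' => (hb a ha).2.trans (hb a' ha').2.symm
  have hevb : ∀ a ∈ T, ∀ g, ((ev a g : H) : H ⧸ N) = ev b g := by
    intro a ha g
    unfold ev
    rw [← (hb a ha).1, ← (hb a ha).2]
    rfl
  have hAS : ∀ a ∈ T, agrSet (ev a) f ⊆ S := by
    intro a ha g hg
    rw [hSdef, mem_agrSet, ← hevb a ha, mem_agrSet.1 hg]
  have hxle : ∀ (n : ℕ), x ^ n ≤ 1 := fun n => pow_le_one₀ hx.le hx1
  have hcard0 : (0:ℝ) ≤ T.card := by positivity
  have easy : (T.card : ℝ) * x ≤ 1 → (T.card : ℝ) * x ^ 19 ≤ 2 ^ 17 := by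
    intro h
    calc (T.card : ℝ) * x ^ 19 = (T.card : ℝ) * x * x ^ 18 := by ring
      _ ≤ 1 * 1 := mul_le_mul h (hxle 18) (by positivity) (by norm_num)
      _ ≤ _ := by norm_num
  have hE1 : ∀ i ∈ T, ∀ j ∈ T, i ≠ j → mu (agrSet (ev i) (ev j)) ≤ 1 / p :=
    fun i _ j _ hij => mu_agrSet_le hp.pos hmin hij
  have hE2 : ∀ i ∈ T, ∀ j ∈ T, ∀ k ∈ T, ∀ l ∈ T, i ≠ j → k ≠ l →
      agrSet (ev i) (ev j) ≠ agrSet (ev k) (ev l) →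
      mu (agrSet (ev i) (ev j) ∩ agrSet (ev k) (ev l)) ≤ 1 / (p : ℝ) ^ 2 :=
    fun i _ j _ k _ l _ hij hkl hne => mu_agrSet_inter_le hp.pos hmin hij hkl hne
  rcases lt_or_ge q p with hqp | hqp
  · -- The index of an equalizer is at most `q < p`, so distinct lifts agree nowhere.
    apply easy
    refine sunflower_bound T (fun a => agrSet (ev a) f) S ∅ (1 / p) δ x hδ hx1 hS
      (by rw [mu_empty]; positivity) hAS hA ?_
    intro i hi j hj hij g hg
    exfalso
    have hg' := agrSet_inter_subset _ _ _ hg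
    have h1 := mul_card_le_of_lt hmin (lt_top_iff_ne_top.2 (eqLocus_ne_top hij hg'))
    rw [Subgroup.card_top, ← Subgroup.card_mul_index (i.2.eqLocus j.2), mul_comm] at h1
    have h2 := Nat.le_of_mul_le_mul_left h1 Nat.card_pos
    have h3 := index_eqLocus_le N i.2 j.2 (hcomp i hi j hj)
    omega
  by_cases hpx : 8 < p * x ^ 4
  · have h1 := large_p_bound T (fun a => agrSet (ev a) f) (fun a a' => agrSet (ev a) (ev a')) S
      p δ x hp2 hδ hpx hx hx1 hS hAS hA (fun i _ j _ => agrSet_inter_subset _ _ _) (by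
        intro i j k g hg
        simp only [Finset.mem_inter, mem_agrSet] at hg ⊢
        rw [← hg.1, ← hg.2]) hE1 hE2
    calc (T.card : ℝ) * x ^ 19 = (T.card : ℝ) * x ^ 5 * x ^ 14 := by ring
      _ ≤ 10 * 1 := mul_le_mul h1 (hxle 14) (by positivity) (by norm_num)
      _ ≤ _ := by norm_num
  by_cases hδp : δ * (6 * p) < 1
  · apply easy
    exact small_delta_bound T (fun a => agrSet (ev a) f) (fun a a' => agrSet (ev a) (ev a')) S
      p δ x hp2 hδ hδp hx hx1 hS hAS hA (fun i _ j _ => agrSet_inter_subset _ _ _) (by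
        intro i j
        ext g
        simp only [mem_agrSet, eq_comm]) hE1 hE2
  push Not at hpx hδp
  rcases Finset.eq_empty_or_nonempty T with rfl | ⟨a0, ha0⟩
  · simp
  -- Group the lifts by the restriction of their linear part to the kernel `M` of the action on `N`.
  set M := actKer N a0.2 with hMdef
  have hM : ∀ a ∈ T, actKer N a.2 = M := fun a ha => actKer_congr N hq hN (hcomp a ha a0 ha0)
  let cls : H × (G →* H) → (M →* H) := fun a => a.2.comp M.subtype
  have hcls : ∀ a a', cls a = cls a' ↔ M ≤ a.2.eqLocus a'.2 := by
    intro a a'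
    constructor
    · intro h g hg
      exact DFunLike.congr_fun h ⟨g, hg⟩
    · intro h
      ext ⟨g, hg⟩
      exact h hg
  have hclass : ∀ c ∈ T.image cls, ((T.filter fun a => cls a = c).card : ℝ) * x ≤ 6 * p ^ 2 := by
    intro c _
    set J := T.filter fun a => cls a = c with hJ
    have hJT : ∀ a ∈ J, a ∈ T := fun a ha => (Finset.mem_filter.1 ha).1
    have hJM : ∀ i ∈ J, ∀ j ∈ J, M ≤ i.2.eqLocus j.2 := fun i hi j hj =>
      (hcls i j).1 ((Finset.mem_filter.1 hi).2.trans (Finset.mem_filter.1 hj).2.symm)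
    by_cases hMtop : M = ⊤
    · have h1 : (J.card : ℝ) * x ≤ 1 := by
        refine sunflower_bound J (fun a => agrSet (ev a) f) S ∅ (1 / p) δ x hδ hx1 hS
          (by rw [mu_empty]; positivity) (fun a ha => hAS a (hJT a ha))
          (fun a ha => hA a (hJT a ha)) ?_
        intro i hi j hj hij g hg
        exfalso
        have hg' := agrSet_inter_subset _ _ _ hg
        exact eqLocus_ne_top hij hg' (top_le_iff.1 (hMtop ▸ hJM i hi j hj))
      nlinarith
    · have h1 : (J.card : ℝ) * (x / (6 * p ^ 2)) ≤ 1 := by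
        refine two_point_bound J (fun a => agrSet (ev a) f) (fun g g' => g⁻¹ * g' ∈ M) (1 / p) _
          (fun g => mu_coset_le hp.pos hmin hMtop g) ?_ ?_
        · intro i hi j hj hij g hg g' hg'
          have hg1 := agrSet_inter_subset _ _ _ hg
          have hg2 := agrSet_inter_subset _ _ _ hg'
          have h2 := (mem_agrSet_iff hg1 g').1 hg2
          rw [← hM i (hJT i hi)]
          refine eqLocus_le_actKer N hq hN (hcomp i (hJT i hi) j (hJT j hj)) ?_
            (eqLocus_ne_top hij hg1) h2
          rw [hM i (hJT i hi)]
          exact hJM i hi j hj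
        · intro i hi
          have h2 := hA i (hJT i hi)
          have h3 : 0 ≤ x * δ := by positivity
          have h4 : x / (6 * p ^ 2) ≤ 1 / p * (x * δ) := by
            rw [div_le_iff₀ (by positivity)]
            have h5 : 1 / (p:ℝ) * (x * δ) * (6 * p ^ 2) = x * (δ * (6 * p)) := by field_simp
            rw [h5]
            exact le_mul_of_one_le_right hx.le hδp
          refine h4.trans (mul_le_mul (by linarith) (by linarith) h3 (mu_nonneg _))
      rwa [← mul_div_assoc, div_le_one (by positivity)] at h1
  -- Representatives of different classes agree on density at most `1/q`.
  have hnum : ((T.image cls).card : ℝ) * x ^ 2 ≤ 4 * p ^ 2 := by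
    obtain ⟨U, hUT, hUinj, hUim⟩ := Finset.exists_subset_injOn_image_eq_of_surjOn (f := cls)
      (T : Set (H × (G →* H))) (T.image cls) (by
        intro c hc
        rw [Finset.coe_image] at hc
        exact hc)
    have hUT' : ∀ a ∈ U, a ∈ T := fun a ha => hUT ha
    rw [← hUim, Finset.card_image_of_injOn hUinj]
    have := Fintype.ofFinite H
    have hqp' : (p:ℝ) ≤ q := by exact_mod_cast hqp
    have h1 : (U.card : ℝ) * (x / (2 * p)) ^ 2 ≤ 1 := by
      refine johnson_bound U ev f (fun g => Finset.univ.filter fun h => (h : H ⧸ N) = ev b g) q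
        hq.pos ?_ ?_ S ?_ ?_ _ (by positivity) ?_
      · intro g
        obtain ⟨h0, hh0⟩ := QuotientGroup.mk_surjective (ev b g)
        rw [← hN, ← Fintype.card_subtype, Nat.card_eq_fintype_card]
        refine Fintype.card_congr ((Equiv.mulLeft h0⁻¹).subtypeEquiv fun h => ?_)
        rw [← hh0, eq_comm]
        exact QuotientGroup.eq
      · intro a ha g
        simpa using hevb a (hUT' a ha) g
      · intro g
        rw [hSdef, mem_agrSet, Finset.mem_filter]
        simp [eq_comm]
      · intro i hi j hj hij
        change (q:ℝ) * mu (agrSet (ev i) (ev j)) ≤ 1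
        rcases Finset.eq_empty_or_nonempty (agrSet (ev i) (ev j)) with h | ⟨g, hg⟩
        · rw [h, mu_empty, mul_zero]; norm_num
        rw [agrSet_eq_coset hg, mu_coset]
        have h2 : q ≤ (i.2.eqLocus j.2).index := by
          refine le_index_eqLocus N hq hN (hcomp i (hUT' i hi) j (hUT' j hj)) ?_
          rw [hM i (hUT' i hi), ← hcls]
          exact fun h => hij (hUinj hi hj h)
        have h3 : q * Nat.card (i.2.eqLocus j.2) ≤ Fintype.card G := by
          rw [← Nat.card_eq_fintype_card (α := G),
            ← Subgroup.card_mul_index (i.2.eqLocus j.2), mul_comm]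
          exact Nat.mul_le_mul_left _ h2
        rw [← mul_div_assoc]
        refine div_le_one_of_le₀ ?_ (by positivity)
        exact_mod_cast h3
      · intro a ha
        change _ ≤ mu (agrSet (ev a) f) - mu S / q
        have h2 := hA a (hUT' a ha)
        have h3 : mu S / q ≤ mu S / p := div_le_div_of_nonneg_left (mu_nonneg _) hp0 hqp'
        have h4 := mu_le_one S
        rw [hS] at h3 h4 ⊢
        refine le_trans ?_ (sub_le_sub h2 h3)
        -- with `r = 1/p`, the claim is `x r / 2 ≤ (1 - r - δ) r + x δ`
        set r : ℝ := 1 / (p:ℝ) with hr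
        have hr0 : 0 < r := by positivity
        have hr2 : r ≤ 1 / 2 := one_div_le_one_div_of_le (by norm_num) hp2
        have e1 : x / (2 * p) = x * r / 2 := by rw [hr]; field_simp
        have e2 : (r + δ) / p = (r + δ) * r := by rw [hr]; field_simp
        rw [e1, e2]
        have e3 : 0 ≤ (1 - x) * ((1 - (r + δ)) * r) :=
          mul_nonneg (by linarith) (mul_nonneg (by linarith) hr0.le)
        have e4 : 0 ≤ x * (δ * (1 - r)) := by
          have : 0 ≤ 1 - r := by linarith
          positivity
        have e5 : 0 ≤ x * (r * (1 / 2 - r)) := by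
          have : 0 ≤ 1 / 2 - r := by linarith
          positivity
        nlinarith
    have h2 : (U.card : ℝ) * (x / (2 * p)) ^ 2 = (U.card : ℝ) * x ^ 2 / (4 * p ^ 2) := by
      ring
    rwa [h2, div_le_one (by positivity)] at h1
  have htot : (T.card : ℝ) * x ≤ (T.image cls).card * (6 * p ^ 2) := by
    have h1 : T.card = ∑ c ∈ T.image cls, (T.filter fun a => cls a = c).card :=
      Finset.card_eq_sum_card_image _ _
    rw [h1, Nat.cast_sum, Finset.sum_mul]
    refine (Finset.sum_le_sum hclass).trans (le_of_eq ?_)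
    rw [Finset.sum_const, nsmul_eq_mul]
  calc (T.card : ℝ) * x ^ 19 = ((T.card : ℝ) * x) * (x ^ 2 * x ^ 16) := by ring
    _ ≤ ((T.image cls).card * (6 * p ^ 2)) * (x ^ 2 * x ^ 16) :=
        mul_le_mul_of_nonneg_right htot (by positivity)
    _ = ((T.image cls).card * x ^ 2) * (6 * p ^ 2 * x ^ 16) := by ring
    _ ≤ (4 * p ^ 2) * (6 * p ^ 2 * x ^ 16) := mul_le_mul_of_nonneg_right hnum (by positivity)
    _ = 24 * (p * x ^ 4) ^ 4 := by ring
    _ ≤ 24 * 8 ^ 4 := by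
        have := pow_le_pow_left₀ (by positivity) hpx 4
        linarith
    _ ≤ _ := by norm_num

/-- Passing from an affine homomorphism into `H ⧸ N` to all its lifts does not increase the
potential `∑ (agreement - 1/p)₊ ^ 80`. -/
lemma fibre_sum [Finite H] {p q : ℕ} (hp : p.Prime)
    (hmin : ∀ q : ℕ, q.Prime → q ∣ Fintype.card G → p ≤ q)
    (N : Subgroup H) [N.Normal] (hq : q.Prime) (hN : Nat.card N = q)
    (T : Finset (H × (G →* H))) (b : (H ⧸ N) × (G →* H ⧸ N))
    (hb : ∀ a ∈ T, (a.1 : H ⧸ N) = b.1 ∧ (QuotientGroup.mk' N).comp a.2 = b.2) (f : G → H) :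
    ∑ a ∈ T, max (mu (agrSet (ev a) f) - 1 / p) 0 ^ 80
      ≤ max (mu (agrSet (ev b) (fun g => (f g : H ⧸ N))) - 1 / p) 0 ^ 80 := by
  set S := agrSet (ev b) (fun g => (f g : H ⧸ N)) with hSdef
  have hAS : ∀ a ∈ T, agrSet (ev a) f ⊆ S := by
    intro a ha g hg
    rw [hSdef, mem_agrSet, ← mem_agrSet.1 hg]
    unfold ev
    rw [← (hb a ha).1, ← (hb a ha).2]
    rfl
  set δ := mu S - 1 / p with hδdef
  have hle : ∀ a ∈ T, mu (agrSet (ev a) f) - 1 / p ≤ δ := fun a ha => by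
    have := mu_mono (hAS a ha)
    linarith
  rcases le_or_gt δ 0 with hδ | hδ
  · rw [max_eq_right hδ]
    refine le_of_eq ((Finset.sum_eq_zero fun a ha => ?_).trans (zero_pow (by norm_num)).symm)
    rw [max_eq_right ((hle a ha).trans hδ)]
    exact zero_pow (by norm_num)
  rw [max_eq_left hδ.le]
  have key := sum_pow_le_one (fun a : H × (G →* H) => max (mu (agrSet (ev a) f) - 1 / p) 0 / δ)
    (fun a => by positivity) T
    (fun a ha => (div_le_one hδ).2 (max_le (hle a ha) hδ.le)) (by
      intro i hi j hj hij
      rw [← add_div, div_le_one hδ]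
      have h1 := hle i hi
      have h2 := hle j hj
      have h3 := mu_inter_ge (hAS i hi) (hAS j hj)
      have h4 := mu_mono (agrSet_inter_subset (ev i) (ev j) f)
      have h5 := mu_agrSet_le hp.pos hmin hij
      rcases max_cases (mu (agrSet (ev i) f) - 1 / (p:ℝ)) 0 with ⟨e1, _⟩ | ⟨e1, _⟩ <;>
      rcases max_cases (mu (agrSet (ev j) f) - 1 / (p:ℝ)) 0 with ⟨e2, _⟩ | ⟨e2, _⟩ <;>
      rw [e1, e2] <;> linarith) (by
      intro y hy T' hT' hy'
      rcases Finset.eq_empty_or_nonempty T' with rfl | ⟨a0, ha0⟩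
      · simp
      have hy1 : y ≤ 1 := (hy' a0 ha0).trans
        ((div_le_one hδ).2 (max_le (hle a0 (hT' ha0)) hδ.le))
      refine fibre_count hp hmin N hq hN T' b (fun a ha => hb a (hT' ha)) f S hSdef δ y hδ hy hy1
        (by rw [hδdef]; ring) ?_
      intro a ha
      have h1 := hy' a ha
      rw [le_div_iff₀ hδ] at h1
      have h2 : 0 < y * δ := by positivity
      rcases max_cases (mu (agrSet (ev a) f) - 1 / (p:ℝ)) 0 with ⟨e1, _⟩ | ⟨e1, _⟩ <;>
      rw [e1] at h1 <;> linarith)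
  simp_rw [div_pow] at key
  rwa [← Finset.sum_div, div_le_one (by positivity)] at key

end Fibre

/-! ### Induction along a supersolvable group -/

section Supersolvable

lemma IsSupersolvable.quotient {H : Type*} [Group H] (hH : IsSupersolvable H) (N : Subgroup H)
    [N.Normal] : IsSupersolvable (H ⧸ N) := by
  obtain ⟨k, s, h0, hk, hn, hle, hg⟩ := hH
  have hsurj := QuotientGroup.mk'_surjective N
  refine ⟨k, fun i => (s i).map (QuotientGroup.mk' N), ?_, ?_, ?_, ?_, ?_⟩
  · simp [h0]
  · simp only [hk]
    exact Subgroup.map_top_of_surjective _ hsurj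
  · exact fun i => (hn i).map _ hsurj
  · exact fun i hi => Subgroup.map_mono (hle i hi)
  · intro i hi
    obtain ⟨g, hg⟩ := hg i hi
    refine ⟨QuotientGroup.mk' N g, ?_⟩
    simp only [hg, Subgroup.map_sup, MonoidHom.map_zpowers]

/-- The first nontrivial term of the chain is cyclic and normal, hence so is its subgroup
of any prime order. -/
lemma IsSupersolvable.exists_normal_prime {H : Type*} [Group H] [Finite H] [Nontrivial H]
    (hH : IsSupersolvable H) :
    ∃ (N : Subgroup H) (q : ℕ), N.Normal ∧ q.Prime ∧ Nat.card N = q := by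
  obtain ⟨k, s, h0, hk, hn, hle, hg⟩ := hH
  obtain ⟨i, hik, hi0, hi1⟩ : ∃ i < k, s i = ⊥ ∧ s (i + 1) ≠ ⊥ := by
    by_contra hcon
    push Not at hcon
    have : ∀ i ≤ k, s i = ⊥ := by
      intro i
      induction i with
      | zero => exact fun _ => h0
      | succ i ih => exact fun hi => hcon i (by omega) (ih (by omega))
    exact bot_ne_top ((this k le_rfl).symm.trans hk)
  obtain ⟨g, hg⟩ := hg i hik
  rw [hi0, bot_sup_eq] at hg
  have hg1 : g ≠ 1 := by
    rintro rfl
    rw [Subgroup.zpowers_one_eq_bot] at hg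
    exact hi1 hg
  have hord : orderOf g ≠ 1 := fun h => hg1 (orderOf_eq_one_iff.1 h)
  obtain ⟨q, hq, hqd⟩ := Nat.exists_prime_and_dvd hord
  have hpos := orderOf_pos g
  refine ⟨Subgroup.zpowers (g ^ (orderOf g / q)), q, ⟨?_⟩, hq, ?_⟩
  · intro z hz h
    obtain ⟨j, rfl⟩ := Subgroup.mem_zpowers_iff.1 hz
    have h1 : h * g * h⁻¹ ∈ Subgroup.zpowers g := by
      rw [← hg]
      exact (hn (i + 1)).conj_mem g (by rw [hg]; exact Subgroup.mem_zpowers g) h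
    obtain ⟨l, hl⟩ := Subgroup.mem_zpowers_iff.1 h1
    rw [← conj_zpow, ← conj_pow, ← hl]
    refine Subgroup.zpow_mem _ ?_ j
    have e : (g ^ l) ^ (orderOf g / q) = (g ^ (orderOf g / q)) ^ l := by
      rw [← zpow_natCast, ← zpow_natCast, ← zpow_mul, ← zpow_mul, mul_comm]
    rw [e]
    exact Subgroup.zpow_mem _ (Subgroup.mem_zpowers _) l
  · rw [Nat.card_zpowers]
    exact orderOf_pow_orderOf_div hpos.ne' hqd

open Classical in
/-- The potential bound, by induction on the order of `H` along a normal subgroup of prime order. -/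
lemma potential_le {G : Type} [Group G] [Fintype G] {p : ℕ} (hp : p.Prime)
    (hmin : ∀ q : ℕ, q.Prime → q ∣ Fintype.card G → p ≤ q) (n : ℕ) :
    ∀ (H : Type) [Group H] [Finite H], IsSupersolvable H → Nat.card H = n →
      ∀ (f : G → H) (T : Finset (H × (G →* H))),
        ∑ a ∈ T, max (mu (agrSet (ev a) f) - 1 / p) 0 ^ 80 ≤ 1 := by
  induction n using Nat.strong_induction_on with
  | _ n ih =>
    intro H _ _ hH hn f T
    rcases subsingleton_or_nontrivial H with hsub | hnon
    · have h1 : ∀ a ∈ T, max (mu (agrSet (ev a) f) - 1 / p) 0 ^ 80 ≤ 1 := by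
        intro a _
        refine pow_le_one₀ (le_max_right _ _) (max_le ?_ zero_le_one)
        have h2 := mu_le_one (agrSet (ev a) f)
        have h3 : 0 ≤ 1 / (p:ℝ) := by positivity
        linarith
      have h2 : T.card ≤ 1 := Finset.card_le_one.2 fun a _ b _ =>
        Prod.ext (Subsingleton.elim _ _) (MonoidHom.ext fun g => Subsingleton.elim _ _)
      have h3 := Finset.sum_le_card_nsmul T _ 1 h1
      rw [nsmul_eq_mul, mul_one] at h3
      exact h3.trans (by exact_mod_cast h2)
    · obtain ⟨N, q, hNn, hq, hN⟩ := hH.exists_normal_prime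
      let π : H × (G →* H) → (H ⧸ N) × (G →* H ⧸ N) :=
        fun a => (a.1, (QuotientGroup.mk' N).comp a.2)
      have hlt : Nat.card (H ⧸ N) < n := by
        rw [← hn, Subgroup.card_eq_card_quotient_mul_card_subgroup N, hN]
        exact lt_mul_of_one_lt_right Nat.card_pos hq.one_lt
      rw [← Finset.sum_fiberwise_of_maps_to
        (g := π) (t := T.image π) (fun a ha => Finset.mem_image_of_mem _ ha)]
      refine le_trans (Finset.sum_le_sum fun b _ => ?_)
        (ih _ hlt (H ⧸ N) (hH.quotient N) rfl (fun g => (f g : H ⧸ N)) (T.image π))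
      refine fibre_sum hp hmin N hq hN _ b (fun a ha => ?_) f
      have h1 := (Finset.mem_filter.1 ha).2
      exact ⟨congrArg Prod.fst h1, congrArg Prod.snd h1⟩

end Supersolvable

/-- There is a universal constant `C` such that for finite
supersolvable groups `G`, `H` with the smallest prime divisor `p` of `|G|` also
dividing `|H|`, for any `f : G → H` and `ε > 0`, the number of affine
homomorphisms with agreement at least `1/p + ε` with `f` is at most `(1/ε)^C`. -/
theorem statement0 :
    ∃ C : ℝ, ∀ (G H : Type) [Group G] [Group H] [Fintype G] [Fintype H],
      IsSupersolvable G → IsSupersolvable H →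
      ∀ p : ℕ, p.Prime → p ∣ Fintype.card G →
        (∀ q : ℕ, q.Prime → q ∣ Fintype.card G → p ≤ q) →
        p ∣ Fintype.card H →
        ∀ (f : G → H) (ε : ℝ), 0 < ε →
          ({φ : G → H | IsAffineHom φ ∧ agr φ f ≥ 1 / (p : ℝ) + ε}.ncard : ℝ)
            ≤ (1 / ε) ^ C := by
  classical
  refine ⟨((80 : ℕ) : ℝ), ?_⟩
  intro G H _ _ _ _ _ hH p hp _ hmin _ f ε hε
  set A : Set (G → H) := {φ : G → H | IsAffineHom φ ∧ agr φ f ≥ 1 / (p : ℝ) + ε} with hAdef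
  have hagr : ∀ φ : G → H, agr φ f = mu (agrSet φ f) := by
    intro φ
    unfold agr mu agrSet
    rw [Nat.card_eq_fintype_card, Nat.card_eq_fintype_card, Fintype.card_subtype]
  have hfin : A.Finite := Set.toFinite A
  obtain ⟨T, -, hTinj, hTim⟩ := Finset.exists_subset_injOn_image_eq_of_surjOn
    (f := (ev : H × (G →* H) → G → H)) Set.univ hfin.toFinset (by
      intro φ hφ
      rw [Set.Finite.coe_toFinset] at hφ
      obtain ⟨h, φ₀, hh⟩ := hφ.1
      exact ⟨(h, φ₀), trivial, funext fun g => (hh g).symm⟩)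
  have hcard : A.ncard = T.card := by
    rw [Set.ncard_eq_toFinset_card A hfin, ← hTim, Finset.card_image_of_injOn hTinj]
  have hpot := potential_le hp hmin _ H hH rfl f T
  have hT : ∀ a ∈ T, ε ^ 80 ≤ max (mu (agrSet (ev a) f) - 1 / p) 0 ^ 80 := by
    intro a ha
    have h1 : ev a ∈ A := by
      rw [← hfin.mem_toFinset, ← hTim]
      exact Finset.mem_image_of_mem _ ha
    have h2 := h1.2
    rw [hagr] at h2
    exact pow_le_pow_left₀ hε.le (le_max_of_le_left (by linarith)) 80
  have h3 := (Finset.card_nsmul_le_sum _ _ _ hT).trans hpot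
  rw [nsmul_eq_mul] at h3
  rw [hcard, Real.rpow_natCast, one_div, inv_pow, ← one_div, le_div_iff₀ (by positivity)]
  exact h3
end

section
/- There exists a universal constant C < ∞ such that the following holds. Let G and H be finite supersolvable groups. Then for any function f : G → H and any ε > 0, the number of affine homomorphisms φ ∈ aHom(G,H) with agr(φ,f) ≥ Λ_{G,H} + ε is at most (1/ε)^C. -/
/-!
The theorem holds with `C = 38`, as a consequence of the potential inequality
`∑ φ, max 0 (agr φ f - Λ) ^ 38 ≤ 1`, the sum running over affine homomorphisms `φ : G → H`
(`sum_affine_le`): each `φ` that is counted contributes at least `ε ^ 38`. Here `Λ` may be any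
number in `[0, 1/2]` with `Λ ≥ 1 / r` for every prime `r` dividing `|H|` that is the index of a
normal subgroup of `G`. The number `min Λ_{G,H} (1/2)` has this property, because such a subgroup
gives a homomorphism `G → H` agreeing with the trivial one on a `1 / r` fraction of `G`. The property
passes to quotients of `H`, whereas `Λ_{G,H}` itself is hard to control under quotients.

The potential inequality is proved by induction on `|H|`. A nontrivial supersolvable `H` has a
normal subgroup `N` of prime order `q` with `H ⧸ N` supersolvable, and it is enough to show
(`fiber_sum_le`), for each affine `ψ : G → H ⧸ N`, that the lifts `φ` of `ψ` satisfy
`∑ φ, max 0 (agr φ f - Λ) ^ 38 ≤ max 0 (agr ψ (f mod N) - Λ) ^ 38`.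
Dividing by one fixed lift turns the lifts into affine cocycles `d : G → ZMod q`, that is, solutions of
`d (x * y) = χ x * (d y - d 1) + d x`, where `χ` is the character through which `G` acts on `N` by
conjugation. Two facts about their zero sets are used:

* a nonzero affine cocycle vanishes with density at most `Λ`: with density at most `1 / q` if it is
  not constant on `ker χ`, and otherwise only inside one coset of `ker χ` (`card_zeros_le`);
* two linearly independent affine cocycles vanish together with density at most `Λ ^ 2`
  (`card_inter_le`), and nowhere at all if both are constant on `ker χ`
  (`proportional_of_common_zero`).

Let `S` be the set where `ψ` agrees with `f mod N`, of density `Λ + B` with `B > 0`. The key count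
(`cocycle_count`) is that at most `64 / θ ^ 12` lifts agree with `f` with density `≥ Λ + θ * B`.
If `Λ ≤ θ ^ 3 / 2`, this follows from a third moment computation (`triple_bound`): triples
of lifts which are not collinear have triple agreement at most `Λ ^ 2`, and a line contains at most
`1 / θ` lifts since their agreement sets form a sunflower (`sunflower_bound`, `line_bound`). If
`Λ > θ ^ 3 / 2`, the lifts are split into classes modulo cocycles constant on `ker χ`. Within a class
the third moment bound applies with zero triple agreement, and representatives of different classes
agree with density at most `1 / q`, so that a second moment (Johnson type) bound
(`gram_bound`) limits the number of classes.

Finally put `t φ = max 0 (agr φ f - Λ) / B`. Inclusion–exclusion gives `t φ + t φ' ≤ 1` for distinct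
lifts, and together with the count this gives `∑ t ^ 38 ≤ 1` with no loss of a
constant factor (`potential_bound`), which is what makes the induction possible.
-/

open scoped BigOperators

/-! ### Moment bounds for families of sets -/

/-- A sunflower in `S` whose core `Q` has at most `t` elements and whose members have at least
`t + θ * (|S| - t)` elements has at most `1 / θ` members, since the petals are disjoint. -/
theorem sunflower_bound_s1 {X ι : Type*} [DecidableEq X] (L : Finset ι) (A : ι → Finset X)
    (S Q : Finset X) (hA : ∀ u ∈ L, A u ⊆ S) (hQ : ∀ u ∈ L, Q ⊆ A u)
    (hd : ∀ u ∈ L, ∀ v ∈ L, u ≠ v → A u ∩ A v ⊆ Q) (t θ : ℝ) (hQt : (Q.card : ℝ) ≤ t)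
    (htS : t < S.card) (hθ1 : θ ≤ 1)
    (ha : ∀ u ∈ L, t + θ * (S.card - t) ≤ (A u).card) : (L.card : ℝ) * θ ≤ 1 := by
  classical
  rcases L.eq_empty_or_nonempty with rfl | ⟨u₀, hu₀⟩
  · simp
  have hQS : Q ⊆ S := (hQ u₀ hu₀).trans (hA u₀ hu₀)
  have hdisj : (L : Set ι).PairwiseDisjoint (fun u => A u \ Q) := by
    intro u hu v hv huv
    rw [Function.onFun, Finset.disjoint_left]
    intro x hx hx'
    rw [Finset.mem_sdiff] at hx hx'
    exact hx.2 (hd u hu v hv huv (Finset.mem_inter.2 ⟨hx.1, hx'.1⟩))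
  have hsub : L.biUnion (fun u => A u \ Q) ⊆ S \ Q := by
    intro x hx
    obtain ⟨u, hu, hx⟩ := Finset.mem_biUnion.1 hx
    rw [Finset.mem_sdiff] at hx ⊢
    exact ⟨hA u hu hx.1, hx.2⟩
  have hcard := Finset.card_le_card hsub
  rw [Finset.card_biUnion hdisj] at hcard
  have hcard' : ∑ u ∈ L, ((A u \ Q).card : ℝ) ≤ ((S \ Q).card : ℝ) := by exact_mod_cast hcard
  rw [Finset.cast_card_sdiff hQS] at hcard'
  have hlow : (L.card : ℝ) * (t + θ * (S.card - t) - Q.card) ≤ ∑ u ∈ L, ((A u \ Q).card : ℝ) := by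
    rw [← nsmul_eq_mul]
    refine Finset.card_nsmul_le_sum _ _ _ fun u hu => ?_
    rw [Finset.cast_card_sdiff (hQ u hu)]
    linarith [ha u hu]
  have h1 : θ * ((S.card : ℝ) - Q.card) ≤ t + θ * (S.card - t) - Q.card := by nlinarith
  have h2 : (L.card : ℝ) * (θ * ((S.card : ℝ) - Q.card)) ≤ 1 * ((S.card : ℝ) - Q.card) := by
    have := mul_le_mul_of_nonneg_left h1 (Nat.cast_nonneg (α := ℝ) L.card)
    linarith
  rw [← mul_assoc] at h2
  exact le_of_mul_le_mul_right h2 (by linarith)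

theorem sum_triple_inter {X ι : Type*} [DecidableEq X] (U : Finset ι) (A : ι → Finset X)
    (S : Finset X) (hA : ∀ u ∈ U, A u ⊆ S) :
    ∑ x ∈ S, (∑ u ∈ U, if x ∈ A u then (1 : ℝ) else 0) ^ 3
      = ∑ u ∈ U, ∑ v ∈ U, ∑ w ∈ U, ((A u ∩ A v ∩ A w).card : ℝ) := by
  have h : ∀ x, (∑ u ∈ U, if x ∈ A u then (1 : ℝ) else 0) ^ 3 =
      ∑ u ∈ U, ∑ v ∈ U, ∑ w ∈ U, if x ∈ A u ∩ A v ∩ A w then (1 : ℝ) else 0 := by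
    intro x
    rw [pow_three, Finset.sum_mul_sum, Finset.sum_mul_sum]
    refine Finset.sum_congr rfl fun u _ => Finset.sum_congr rfl fun v _ => ?_
    rw [Finset.mul_sum]
    refine Finset.sum_congr rfl fun w _ => ?_
    by_cases h1 : x ∈ A u <;> by_cases h2 : x ∈ A v <;> by_cases h3 : x ∈ A w <;> simp [h1, h2, h3]
  simp_rw [h]
  rw [Finset.sum_comm]
  refine Finset.sum_congr rfl fun u hu => ?_
  rw [Finset.sum_comm]
  refine Finset.sum_congr rfl fun v _ => ?_
  rw [Finset.sum_comm]
  refine Finset.sum_congr rfl fun w _ => ?_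
  rw [Finset.sum_boole]
  congr 2
  ext x
  simp only [Finset.mem_filter, Finset.mem_inter, and_iff_right_iff_imp]
  exact fun hx => hA u hu hx.1.1

/-- Third moment bound. Subsets `A u` of `S` of relative density at least `θ` number at most
`4 / θ ^ 4`, provided that for all `u ≠ v` the intersection `A u ∩ A v ∩ A w` has at most
`δ ≤ θ ^ 3 * |S| / 2` elements except for at most `1 / θ` choices of `w`. -/
theorem triple_bound {X ι : Type*} [DecidableEq X] (U : Finset ι) (A : ι → Finset X)
    (S : Finset X) (hA : ∀ u ∈ U, A u ⊆ S) (θ δ : ℝ) (hθ0 : 0 < θ) (hθ1 : θ ≤ 1)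
    (hS : 0 < S.card) (ha : ∀ u ∈ U, θ * S.card ≤ (A u).card) (hδ0 : 0 ≤ δ)
    (hδ : δ ≤ θ ^ 3 * S.card / 2)
    (hline : ∀ u ∈ U, ∀ v ∈ U, u ≠ v → ∃ W ⊆ U, (W.card : ℝ) * θ ≤ 1 ∧
      ∀ w ∈ U, w ∉ W → ((A u ∩ A v ∩ A w).card : ℝ) ≤ δ) :
    (U.card : ℝ) ≤ 4 / θ ^ 4 := by
  classical
  set s : ℝ := (S.card : ℝ) with hs
  have hs0 : 0 < s := by rw [hs]; exact_mod_cast hS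
  set l : ℝ := (U.card : ℝ) with hl
  have hl0 : 0 ≤ l := by rw [hl]; positivity
  rcases hl0.eq_or_lt with h0 | hl0
  · rw [← h0]; positivity
  have hle : ∀ u ∈ U, ∀ v w, ((A u ∩ A v ∩ A w).card : ℝ) ≤ s := by
    intro u hu v w
    rw [hs]
    exact_mod_cast Finset.card_le_card fun x hx => hA u hu (by
      simp only [Finset.mem_inter] at hx; exact hx.1.1)
  -- lower bound for the third moment, by the power mean inequality
  have hlow : (l * θ) ^ 3 * s ≤ ∑ x ∈ S, (∑ u ∈ U, if x ∈ A u then (1 : ℝ) else 0) ^ 3 := by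
    have hpm := pow_sum_div_card_le_sum_pow (s := S)
      (f := fun x => ∑ u ∈ U, if x ∈ A u then (1 : ℝ) else 0)
      (fun x _ => Finset.sum_nonneg fun u _ => by split_ifs <;> norm_num) 2
    refine le_trans ?_ hpm
    have hsum : l * (θ * s) ≤ ∑ x ∈ S, ∑ u ∈ U, if x ∈ A u then (1 : ℝ) else 0 := by
      rw [Finset.sum_comm, hl, ← nsmul_eq_mul]
      refine Finset.card_nsmul_le_sum _ _ _ fun u hu => ?_
      rw [Finset.sum_boole, Finset.filter_mem_eq_inter, Finset.inter_eq_right.2 (hA u hu)]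
      exact ha u hu
    rw [← hs, le_div_iff₀ (by positivity)]
    calc (l * θ) ^ 3 * s * s ^ 2 = (l * (θ * s)) ^ 3 := by ring
      _ ≤ _ := pow_le_pow_left₀ (by positivity) hsum 3
  have hup : ∑ u ∈ U, ∑ v ∈ U, ∑ w ∈ U, ((A u ∩ A v ∩ A w).card : ℝ)
      ≤ l * (l * s + l * (s / θ + l * δ)) := by
    rw [hl, ← nsmul_eq_mul (U.card)]
    refine Finset.sum_le_card_nsmul _ _ _ fun u hu => ?_
    rw [← Finset.add_sum_erase _ _ hu]
    refine add_le_add ?_ ?_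
    · rw [← nsmul_eq_mul]
      exact Finset.sum_le_card_nsmul _ _ _ fun w _ => hle u hu u w
    · have : ∑ v ∈ U.erase u, ∑ w ∈ U, ((A u ∩ A v ∩ A w).card : ℝ)
          ≤ (U.erase u).card • (s / θ + U.card * δ) := by
        refine Finset.sum_le_card_nsmul _ _ _ fun v hv => ?_
        obtain ⟨hvu, hv⟩ := Finset.mem_erase.1 hv
        obtain ⟨W, hWU, hW, hWδ⟩ := hline u hu v hv hvu.symm
        rw [← Finset.sum_sdiff hWU, add_comm]
        refine add_le_add ?_ ?_
        · calc ∑ w ∈ W, ((A u ∩ A v ∩ A w).card : ℝ) ≤ W.card • s :=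
                Finset.sum_le_card_nsmul _ _ _ fun w _ => hle u hu v w
            _ ≤ s / θ := by
                rw [nsmul_eq_mul, le_div_iff₀ hθ0]; nlinarith
        · calc ∑ w ∈ U \ W, ((A u ∩ A v ∩ A w).card : ℝ) ≤ (U \ W).card • δ :=
                Finset.sum_le_card_nsmul _ _ _ fun w hw =>
                  hWδ w (Finset.mem_sdiff.1 hw).1 (Finset.mem_sdiff.1 hw).2
            _ ≤ U.card * δ := by
                rw [nsmul_eq_mul]
                gcongr
                exact Finset.sdiff_subset
      refine this.trans ?_
      rw [nsmul_eq_mul]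
      gcongr
      exact Finset.erase_subset _ _
  rw [sum_triple_inter U A S hA] at hlow
  have h1 := hlow.trans hup
  have h2 : l * θ ^ 3 * s ≤ s + s / θ + l * δ := by
    have : (l * l) * (l * θ ^ 3 * s) ≤ (l * l) * (s + s / θ + l * δ) := by nlinarith
    exact le_of_mul_le_mul_left this (by positivity)
  have h3 : l * δ ≤ l * (θ ^ 3 * s / 2) := by gcongr
  have h4 : s ≤ s / θ := by rw [le_div_iff₀ hθ0]; nlinarith
  have h5 : l * θ ^ 3 * s ≤ 4 * (s / θ) := by linarith
  rw [le_div_iff₀ (by positivity)]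
  have h6 : l * θ ^ 3 * s * θ ≤ 4 * s := by
    calc l * θ ^ 3 * s * θ ≤ 4 * (s / θ) * θ := by gcongr
      _ = 4 * s := by field_simp
  have h7 : (l * θ ^ 4) * s ≤ 4 * s := by nlinarith
  exact le_of_mul_le_mul_right h7 hs0

/-- Second moment bound of Johnson type over a `q`-letter alphabet. Functions that pairwise agree on at most
a `1 / q` fraction of `X` behave as orthogonal vectors once the number `N x c` of functions with
value `c` at `x` is centred at its mean `|R| / q`. The proof is Cauchy–Schwarz for the
sum of the centred `N x (F x)` over `S`. -/
theorem gram_bound {X : Type*} [Fintype X] [DecidableEq X] (q : ℕ) [NeZero q]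
    (R : Finset (X → ZMod q)) (S : Finset X) (F : X → ZMod q) (a : ℝ)
    (hpair : ∀ u ∈ R, ∀ v ∈ R, u ≠ v →
      (q : ℝ) * (Finset.univ.filter fun x => u x = v x).card ≤ Fintype.card X)
    (ha : ∀ u ∈ R, a ≤ (S.filter fun x => F x = u x).card) (haS : (S.card : ℝ) / q ≤ a) :
    (R.card : ℝ) * (a - S.card / q) ^ 2 ≤ S.card * Fintype.card X := by
  classical
  have hq : (0 : ℝ) < q := by exact_mod_cast Nat.pos_of_ne_zero (NeZero.ne q)
  set l : ℝ := (R.card : ℝ) with hl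
  set n : ℝ := (Fintype.card X : ℝ) with hn
  have hl0 : 0 ≤ l := by rw [hl]; positivity
  rcases hl0.eq_or_lt with h0 | hl0
  · rw [← h0, zero_mul]; positivity
  let N : X → ZMod q → ℝ := fun x c => ∑ u ∈ R, if u x = c then (1 : ℝ) else 0
  have hN1 : ∀ x, ∑ c, N x c = l := by
    intro x
    simp only [N]
    rw [Finset.sum_comm]
    simp [hl]
  have hN2 : ∑ x, ∑ c, N x c ^ 2
      = ∑ u ∈ R, ∑ v ∈ R, ((Finset.univ.filter fun x => u x = v x).card : ℝ) := by
    have h : ∀ x, ∑ c, N x c ^ 2 = ∑ u ∈ R, ∑ v ∈ R, if u x = v x then (1 : ℝ) else 0 := by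
      intro x
      simp only [N, sq, Finset.sum_mul_sum]
      rw [Finset.sum_comm]
      refine Finset.sum_congr rfl fun u _ => ?_
      rw [Finset.sum_comm]
      refine Finset.sum_congr rfl fun v _ => ?_
      simp only [ite_mul, one_mul, zero_mul, Finset.sum_ite_eq, Finset.mem_univ, if_true]
      simp only [eq_comm]
    simp_rw [h]
    rw [Finset.sum_comm]
    refine Finset.sum_congr rfl fun u hu => ?_
    rw [Finset.sum_comm]
    refine Finset.sum_congr rfl fun v _ => ?_
    rw [Finset.sum_boole]
  have hN2le : ∑ x, ∑ c, N x c ^ 2 ≤ l * (n + l * (n / q)) := by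
    rw [hN2, hl, ← nsmul_eq_mul (R.card)]
    refine Finset.sum_le_card_nsmul _ _ _ fun u hu => ?_
    rw [← Finset.add_sum_erase _ _ hu]
    refine add_le_add ?_ ?_
    · simp [hn]
    · have : ∑ v ∈ R.erase u, ((Finset.univ.filter fun x => u x = v x).card : ℝ)
          ≤ (R.erase u).card • (n / q) := by
        refine Finset.sum_le_card_nsmul _ _ _ fun v hv => ?_
        obtain ⟨hvu, hv⟩ := Finset.mem_erase.1 hv
        rw [le_div_iff₀ hq, mul_comm]
        exact hpair u hu v hv hvu.symm
      refine this.trans ?_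
      rw [nsmul_eq_mul]
      gcongr
      exact Finset.erase_subset _ _
  have hvar : ∑ x, ∑ c, (N x c - l / q) ^ 2 ≤ l * n := by
    have h : ∀ x, ∑ c, (N x c - l / q) ^ 2 = ∑ c, N x c ^ 2 - l * (l / q) := by
      intro x
      have : ∀ c, (N x c - l / q) ^ 2 = N x c ^ 2 - 2 * (l / q) * N x c + (l / q) ^ 2 := by
        intro c; ring
      simp_rw [this, Finset.sum_add_distrib, Finset.sum_sub_distrib, ← Finset.mul_sum, hN1]
      simp only [Finset.sum_const, Finset.card_univ, ZMod.card, nsmul_eq_mul]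
      field_simp
      ring
    simp_rw [h, Finset.sum_sub_distrib]
    simp only [Finset.sum_const, Finset.card_univ, nsmul_eq_mul]
    rw [← hn]
    have : n * (l * (l / q)) = l * (l * (n / q)) := by ring
    nlinarith
  have hmean : l * (a - S.card / q) ≤ ∑ x ∈ S, (N x (F x) - l / q) := by
    rw [Finset.sum_sub_distrib]
    have h1 : l * a ≤ ∑ x ∈ S, N x (F x) := by
      simp only [N]
      rw [Finset.sum_comm, hl, ← nsmul_eq_mul]
      refine Finset.card_nsmul_le_sum _ _ _ fun u hu => ?_
      rw [Finset.sum_boole]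
      refine (ha u hu).trans (le_of_eq ?_)
      simp only [eq_comm]
    simp only [Finset.sum_const, nsmul_eq_mul]
    have : l * (a - S.card / q) = l * a - S.card * (l / q) := by ring
    linarith
  have hcs : (∑ x ∈ S, (N x (F x) - l / q)) ^ 2 ≤ S.card * (l * n) := by
    refine sq_sum_le_card_mul_sum_sq.trans ?_
    gcongr
    refine le_trans ?_ hvar
    refine le_trans (Finset.sum_le_sum fun x _ => ?_)
      (Finset.sum_le_sum_of_subset_of_nonneg (Finset.subset_univ S) fun x _ _ =>
        Finset.sum_nonneg fun c _ => sq_nonneg _)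
    exact Finset.single_le_sum (f := fun c => (N x c - l / q) ^ 2) (fun c _ => sq_nonneg _)
      (Finset.mem_univ (F x))
  have hfin : (l * (a - S.card / q)) ^ 2 ≤ S.card * (l * n) :=
    (pow_le_pow_left₀ (mul_nonneg hl0.le (by linarith)) hmean 2).trans hcs
  have : l * (l * (a - S.card / q) ^ 2) ≤ l * (S.card * n) := by nlinarith
  exact le_of_mul_le_mul_left this hl0

/-! ### From counting bounds to power sums -/

/-- If at most `64 / θ ^ 12` of the numbers `t u` are `≥ θ`, for every `θ`, then the `k`-th largest
satisfies `t ^ 24 ≤ 4096 / k ^ 2`. The stated bound is a telescoping majorant of `∑ 4096 / k ^ 2`. -/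
theorem sum_pow_le_of_count_s1 {ι : Type*} (t : ι → ℝ) (U : Finset ι) (h0 : ∀ u ∈ U, 0 ≤ t u)
    (hcount : ∀ V ⊆ U, ∀ θ, 0 < θ → (∀ u ∈ V, θ ≤ t u) → (V.card : ℝ) ≤ 64 / θ ^ 12) :
    ∑ u ∈ U, t u ^ 24 ≤ 4096 * (2 - 2 / ((U.card : ℝ) + 1)) := by
  classical
  induction hk : U.card generalizing U with
  | zero =>
    rw [Finset.card_eq_zero.1 hk]; norm_num
  | succ k ih =>
    have hne : U.Nonempty := Finset.card_pos.1 (by omega)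
    obtain ⟨u, hu, hmin⟩ := U.exists_min_image t hne
    rw [← Finset.sum_erase_add _ _ hu]
    have h1 := ih (U.erase u) (fun v hv => h0 v (Finset.mem_of_mem_erase hv))
      (fun V hV => hcount V (hV.trans (Finset.erase_subset _ _)))
      (by rw [Finset.card_erase_of_mem hu, hk]; rfl)
    have hk1 : (0 : ℝ) < (k : ℝ) + 1 := by positivity
    have h2 : t u ^ 24 ≤ 4096 / ((k : ℝ) + 1) ^ 2 := by
      rcases (h0 u hu).eq_or_lt with hz | hpos
      · rw [← hz, zero_pow (by norm_num)]; positivity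
      · have := hcount U subset_rfl (t u) hpos hmin
        rw [hk, le_div_iff₀ (by positivity)] at this
        push_cast at this
        rw [le_div_iff₀ (by positivity)]
        calc t u ^ 24 * ((k : ℝ) + 1) ^ 2 = (((k : ℝ) + 1) * t u ^ 12) ^ 2 := by ring
          _ ≤ 64 ^ 2 := pow_le_pow_left₀ (by positivity) this 2
          _ = 4096 := by norm_num
    have h3 : 4096 * (2 - 2 / ((k : ℝ) + 1)) + 4096 / ((k : ℝ) + 1) ^ 2
        ≤ 4096 * (2 - 2 / (((k + 1 : ℕ) : ℝ) + 1)) := by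
      push_cast
      have : 4096 * (2 - 2 / ((k : ℝ) + 1 + 1)) -
          (4096 * (2 - 2 / ((k : ℝ) + 1)) + 4096 / ((k : ℝ) + 1) ^ 2)
          = 4096 * k / (((k : ℝ) + 1) ^ 2 * (k + 1 + 1)) := by
        field_simp
        ring
      have h4 : (0 : ℝ) ≤ 4096 * k / (((k : ℝ) + 1) ^ 2 * (k + 1 + 1)) := by positivity
      linarith
    linarith

/-- The counting bound alone gives `∑ t ^ 38 ≤ 1` when all `t u ≤ 1 / 2`. If some `t u > 1 / 2`,
every other value is at most `1 - t u`, and the others contribute at most `1 - t u` in total. -/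
theorem potential_bound {ι : Type*} (t : ι → ℝ) (U : Finset ι) (h0 : ∀ u ∈ U, 0 ≤ t u)
    (h1 : ∀ u ∈ U, t u ≤ 1) (hpair : ∀ u ∈ U, ∀ v ∈ U, u ≠ v → t u + t v ≤ 1)
    (hcount : ∀ V ⊆ U, ∀ θ, 0 < θ → (∀ u ∈ V, θ ≤ t u) → (V.card : ℝ) ≤ 64 / θ ^ 12) :
    ∑ u ∈ U, t u ^ 38 ≤ 1 := by
  classical
  rcases U.eq_empty_or_nonempty with rfl | hne
  · simp
  -- a subfamily bounded by `b` contributes at most `2 ^ 13 * b ^ 14`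
  have key : ∀ V ⊆ U, ∀ b : ℝ, 0 ≤ b → (∀ u ∈ V, t u ≤ b) →
      ∑ u ∈ V, t u ^ 38 ≤ 8192 * b ^ 14 := by
    intro V hV b hb hVb
    have h24 := sum_pow_le_of_count_s1 t V (fun u hu => h0 u (hV hu))
      (fun W hW => hcount W (hW.trans hV))
    have h24' : ∑ u ∈ V, t u ^ 24 ≤ 8192 := by
      have : (0 : ℝ) ≤ 2 / ((V.card : ℝ) + 1) := by positivity
      linarith
    calc ∑ u ∈ V, t u ^ 38 ≤ ∑ u ∈ V, t u ^ 24 * b ^ 14 := by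
          refine Finset.sum_le_sum fun u hu => ?_
          have := h0 u (hV hu)
          calc t u ^ 38 = t u ^ 24 * t u ^ 14 := by ring
            _ ≤ t u ^ 24 * b ^ 14 := by gcongr; exact hVb u hu
      _ = (∑ u ∈ V, t u ^ 24) * b ^ 14 := by rw [Finset.sum_mul]
      _ ≤ 8192 * b ^ 14 := by gcongr
  obtain ⟨u, hu, hmax⟩ := U.exists_max_image t hne
  rcases le_total (t u) (1 / 2) with hhalf | hhalf
  · refine (key U subset_rfl (1 / 2) (by norm_num) fun v hv => (hmax v hv).trans hhalf).trans ?_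
    norm_num
  · rw [← Finset.sum_erase_add _ _ hu]
    set τ := 1 - t u with hτ
    have hτ0 : 0 ≤ τ := by linarith [h1 u hu]
    have hτ1 : τ ≤ 1 / 2 := by linarith
    have hrest := key (U.erase u) (Finset.erase_subset _ _) τ hτ0 (fun v hv => by
      have := hpair u hu v (Finset.mem_of_mem_erase hv) (Finset.ne_of_mem_erase hv).symm
      linarith)
    have hrest' : 8192 * τ ^ 14 ≤ τ := by
      have : τ ^ 13 ≤ (1 / 2) ^ 13 := pow_le_pow_left₀ hτ0 hτ1 13
      calc 8192 * τ ^ 14 = 8192 * τ ^ 13 * τ := by ring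
        _ ≤ 8192 * (1 / 2) ^ 13 * τ := by gcongr
        _ = τ := by norm_num
    have hu1 : t u ^ 38 ≤ t u := pow_le_of_le_one (h0 u hu) (h1 u hu) (by norm_num)
    linarith

/-! ### Affine cocycles and their zero sets -/

/-- `d` is an affine cocycle for the character `χ`: `x ↦ d x - d 1` is a 1-cocycle of `G` with values
in `ZMod q`, on which `G` acts through `χ`. -/
def IsAffCocycle {G : Type*} [Group G] {q : ℕ} (χ : G →* (ZMod q)ˣ) (d : G → ZMod q) : Prop :=
  ∀ x y, d (x * y) = χ x * (d y - d 1) + d x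

/-- `d` is not constant on `ker χ`. For an affine cocycle, the restriction of `d - d 1` to `ker χ` is
a homomorphism, and this says that it is nontrivial. -/
def NonconstOnKer {G : Type*} [Group G] {q : ℕ} (χ : G →* (ZMod q)ˣ) (d : G → ZMod q) : Prop :=
  ∃ k ∈ χ.ker, d k ≠ d 1

/-- The zero set of a `ZMod q`-valued function on `G`. -/
def zeros {G : Type*} [Fintype G] {q : ℕ} (d : G → ZMod q) : Finset G :=
  Finset.univ.filter fun x => d x = 0

@[simp] theorem mem_zeros {G : Type*} [Fintype G] {q : ℕ} {d : G → ZMod q} {x : G} :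
    x ∈ zeros d ↔ d x = 0 := by simp [zeros]

section Cocycle

variable {G : Type*} [Group G] {q : ℕ} {χ : G →* (ZMod q)ˣ} {d d' : G → ZMod q}

namespace IsAffCocycle

theorem sub_smul (h : IsAffCocycle χ d) (h' : IsAffCocycle χ d') (c : ZMod q) :
    IsAffCocycle χ (d' - c • d) := by
  intro x y
  simp only [Pi.sub_apply, Pi.smul_apply, smul_eq_mul, h x y, h' x y]
  ring

theorem sub (h : IsAffCocycle χ d) (h' : IsAffCocycle χ d') : IsAffCocycle χ (d - d') := by
  intro x y
  simp only [Pi.sub_apply, h x y, h' x y]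
  ring

theorem mul_pow_ker (h : IsAffCocycle χ d) {k : G} (hk : k ∈ χ.ker) (x : G) (i : ℕ) :
    d (x * k ^ i) = d x + χ x * (i * (d k - d 1)) := by
  induction i with
  | zero => simp
  | succ i ih =>
    have hχ : χ (x * k ^ i) = χ x := by
      rw [map_mul, map_pow, MonoidHom.mem_ker.1 hk, one_pow, mul_one]
    rw [pow_succ, ← mul_assoc, h, ih, hχ]
    push_cast
    ring

/-- An affine cocycle that is constant on `ker χ` is constant on every coset of `ker χ`. -/
theorem mul_ker (h : IsAffCocycle χ d) (hd : ¬ NonconstOnKer χ d) {k : G} (hk : k ∈ χ.ker)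
    (x : G) : d (x * k) = d x := by
  have : d k = d 1 := by
    by_contra hne
    exact hd ⟨k, hk, hne⟩
  rw [h, this]; simp

/-- An affine cocycle that is constant on `ker χ` factors through the abelian group `G ⧸ ker χ`. This is
the relation resulting from `d (x * y) = d (y * x)`. -/
theorem comm_rel (h : IsAffCocycle χ d) (hd : ¬ NonconstOnKer χ d) (x y : G) :
    ((χ x : ZMod q) - 1) * (d y - d 1) = ((χ y : ZMod q) - 1) * (d x - d 1) := by
  have h1 : d (x * y) = d (y * x) := by
    have hk : (y * x)⁻¹ * (x * y) ∈ χ.ker := by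
      rw [MonoidHom.mem_ker, map_mul, map_inv, map_mul, map_mul, mul_comm (χ x), inv_mul_cancel]
    have := h.mul_ker hd hk (y * x)
    rwa [mul_inv_cancel_left] at this
  rw [h, h] at h1
  linear_combination h1

theorem ne_zero_of_trivial (h : IsAffCocycle χ d) (hd : ¬ NonconstOnKer χ d) (h0 : d ≠ 0)
    (hχ : χ = 1) (x : G) : d x ≠ 0 := by
  intro hx
  apply h0
  have : ∀ y, d y = d 1 := fun y => by
    have := h.mul_ker hd (k := y) (by rw [hχ]; simp) 1
    rwa [one_mul] at this
  funext y
  rw [this y, ← this x, hx, Pi.zero_apply]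

variable [Fact q.Prime]

/-- The zeros of a nonzero affine cocycle that is constant on `ker χ` lie in one coset of `ker χ`. -/
theorem chi_eq_of_zeros (h : IsAffCocycle χ d) (hd : ¬ NonconstOnKer χ d) (h0 : d ≠ 0)
    {x y : G} (hx : d x = 0) (hy : d y = 0) : χ x = χ y := by
  have hxy := h.comm_rel hd x y
  rw [hx, hy] at hxy
  have h1 : ((χ x : ZMod q) - χ y) * d 1 = 0 := by linear_combination -hxy
  rcases mul_eq_zero.1 h1 with h2 | h2
  · exact Units.ext (sub_eq_zero.1 h2)
  · have aux : ∀ z, d z = 0 → χ z = 1 := by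
      intro z hz
      obtain ⟨w, hw⟩ : ∃ w, d w ≠ 0 := by
        by_contra! hcon
        exact h0 (funext hcon)
      have := h.comm_rel hd z w
      rw [hz, h2, sub_zero, sub_zero, mul_zero] at this
      exact Units.ext (sub_eq_zero.1 ((mul_eq_zero.1 this).resolve_right hw))
    rw [aux x hx, aux y hy]

/-- Affine cocycles constant on `ker χ` with a common zero are proportional: a suitable combination
`d' - c • d` has zeros in two different cosets of `ker χ`, so it vanishes identically. -/
theorem proportional_of_common_zero (h : IsAffCocycle χ d) (hd : ¬ NonconstOnKer χ d)
    (h0 : d ≠ 0) (h' : IsAffCocycle χ d') (hd' : ¬ NonconstOnKer χ d')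
    {x : G} (hx : d x = 0) (hx' : d' x = 0) : ∃ c : ZMod q, d' = c • d := by
  by_cases hχ : χ = 1
  · exact absurd hx (h.ne_zero_of_trivial hd h0 hχ x)
  obtain ⟨g, hg⟩ : ∃ g, χ g ≠ 1 := by
    by_contra! hcon
    exact hχ (MonoidHom.ext hcon)
  have hw : χ (x * g) ≠ χ x := by
    rw [map_mul]; simpa using hg
  have hdw : d (x * g) ≠ 0 := fun h1 => hw (h.chi_eq_of_zeros hd h0 h1 hx)
  refine ⟨d' (x * g) / d (x * g), ?_⟩
  have hsub := h.sub_smul h' (d' (x * g) / d (x * g))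
  by_contra hne
  refine hw (hsub.chi_eq_of_zeros ?_ (sub_ne_zero.2 hne) ?_ ?_)
  · rintro ⟨k, hk, hk1⟩
    have e1 := h.mul_ker hd hk 1
    have e2 := h'.mul_ker hd' hk 1
    rw [one_mul] at e1 e2
    simp [e1, e2] at hk1
  · simp [hdw]
  · simp [hx, hx']

/-- If `k ∈ ker χ` and `d k ≠ d 1`, then `d` takes each value once along `x * k ^ i`, `0 ≤ i < q`, so
the `q` translates `X * k ^ i` of a set `X` of zeros of `d` are disjoint. -/
theorem card_translates (h : IsAffCocycle χ d) {k : G} (hk : k ∈ χ.ker) (hdk : d k ≠ d 1)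
    (X Y : Finset G) (hX : ∀ x ∈ X, d x = 0) (hXY : ∀ x ∈ X, ∀ i : ℕ, x * k ^ i ∈ Y) :
    q * X.card ≤ Y.card := by
  classical
  have hcard : ((Finset.univ : Finset (ZMod q)) ×ˢ X).card = q * X.card := by
    rw [Finset.card_product, Finset.card_univ, ZMod.card]
  rw [← hcard]
  refine Finset.card_le_card_of_injOn (fun p => p.2 * k ^ (p.1.val)) ?_ ?_
  · rintro ⟨i, x⟩ hp
    exact hXY x (Finset.mem_product.1 hp).2 _
  · rintro ⟨i, x⟩ hp ⟨j, y⟩ hp' heq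
    have hx := hX x (Finset.mem_product.1 hp).2
    have hy := hX y (Finset.mem_product.1 hp').2
    simp only at heq
    have hχ : χ x = χ y := by
      have := congrArg χ heq
      simpa [MonoidHom.mem_ker.1 hk] using this
    have hd := congrArg d heq
    rw [h.mul_pow_ker hk, h.mul_pow_ker hk, hx, hy, hχ] at hd
    simp only [ZMod.natCast_val, ZMod.cast_id', id_eq, zero_add] at hd
    have hij : i = j :=
      mul_right_cancel₀ (sub_ne_zero.2 hdk) (mul_left_cancel₀ (χ y).ne_zero hd)
    subst hij
    rw [mul_right_cancel heq]

variable [Fintype G]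

theorem card_zeros_of_nonconst (h : IsAffCocycle χ d) (hd : NonconstOnKer χ d) :
    q * (zeros d).card ≤ Fintype.card G := by
  obtain ⟨k, hk, hdk⟩ := hd
  exact h.card_translates hk hdk (zeros d) Finset.univ (fun x hx => mem_zeros.1 hx)
    fun _ _ _ => Finset.mem_univ _

theorem card_fiber_chi [DecidableEq G] (χ : G →* (ZMod q)ˣ) (x : G) :
    (Finset.univ.filter fun y => χ y = χ x).card = Nat.card χ.ker := by
  classical
  rw [← Nat.card_eq_finsetCard]
  refine Nat.card_congr ⟨fun y => ⟨x⁻¹ * y, ?_⟩, fun k => ⟨x * k, ?_⟩, ?_, ?_⟩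
  · have := (Finset.mem_filter.1 y.2).2
    rw [MonoidHom.mem_ker, map_mul, map_inv, this, inv_mul_cancel]
  · have := MonoidHom.mem_ker.1 k.2
    simp [this]
  · intro y; simp
  · intro k; simp

/-- The properties of the threshold `Λ` used for cocycles with character `χ`: `0 ≤ Λ ≤ 1/2`, it is at
least `1 / q` as soon as some affine cocycle is not constant on `ker χ`, and at least the density of
`ker χ` as soon as `χ` is nontrivial. -/
structure _root_.Admissible (χ : G →* (ZMod q)ˣ) (Λ : ℝ) : Prop where
  nonneg : 0 ≤ Λ
  le_half : Λ ≤ 1 / 2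
  inv_le : ∀ d, IsAffCocycle χ d → NonconstOnKer χ d → 1 / (q : ℝ) ≤ Λ
  ker_le : χ ≠ 1 → (Nat.card χ.ker : ℝ) ≤ Λ * Fintype.card G

variable {Λ : ℝ}

theorem card_zeros_le (hΛ : Admissible χ Λ) (h : IsAffCocycle χ d) (h0 : d ≠ 0) :
    ((zeros d).card : ℝ) ≤ Λ * Fintype.card G := by
  classical
  have hq : (0 : ℝ) < q := by exact_mod_cast (Fact.out : q.Prime).pos
  have hΛ0 := hΛ.nonneg
  by_cases hd : NonconstOnKer χ d
  · have h1 : (q : ℝ) * (zeros d).card ≤ Fintype.card G := by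
      exact_mod_cast h.card_zeros_of_nonconst hd
    calc ((zeros d).card : ℝ) = 1 / q * (q * (zeros d).card) := by field_simp
      _ ≤ Λ * Fintype.card G := by
        gcongr
        exact hΛ.inv_le d h hd
  rcases (zeros d).eq_empty_or_nonempty with he | ⟨x, hx⟩
  · rw [he]; simp only [Finset.card_empty, Nat.cast_zero]; positivity
  rw [mem_zeros] at hx
  have hχ : χ ≠ 1 := fun hχ => h.ne_zero_of_trivial hd h0 hχ x hx
  refine le_trans ?_ (hΛ.ker_le hχ)
  rw [← card_fiber_chi χ x]
  exact_mod_cast Finset.card_le_card fun y hy => by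
    simpa using h.chi_eq_of_zeros hd h0 (mem_zeros.1 hy) hx

/-- The case of `card_inter_le` in which exactly one of the cocycles is constant on `ker χ`. The common
zeros lie in one coset of `ker χ`, and their translates by an element of `ker χ` stay in that coset. -/
theorem card_inter_mixed [DecidableEq G] (hΛ : Admissible χ Λ) (h : IsAffCocycle χ d)
    (hd : NonconstOnKer χ d) (h' : IsAffCocycle χ d') (hd' : ¬ NonconstOnKer χ d')
    (h0' : d' ≠ 0) : ((zeros d ∩ zeros d').card : ℝ) ≤ Λ ^ 2 * Fintype.card G := by
  have hq : (0 : ℝ) < q := by exact_mod_cast (Fact.out : q.Prime).pos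
  have hΛ0 := hΛ.nonneg
  rcases (zeros d ∩ zeros d').eq_empty_or_nonempty with he | ⟨x, hx⟩
  · rw [he]; simp only [Finset.card_empty, Nat.cast_zero]; positivity
  rw [Finset.mem_inter, mem_zeros, mem_zeros] at hx
  have hχ : χ ≠ 1 := fun hχ => h'.ne_zero_of_trivial hd' h0' hχ x hx.2
  obtain ⟨k, hk, hdk⟩ := id hd
  have h1 := h.card_translates hk hdk (zeros d ∩ zeros d')
    (Finset.univ.filter fun y => χ y = χ x)
    (fun y hy => mem_zeros.1 (Finset.mem_inter.1 hy).1) (fun y hy i => by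
      have := h'.chi_eq_of_zeros hd' h0' (mem_zeros.1 (Finset.mem_inter.1 hy).2) hx.2
      simp [this, MonoidHom.mem_ker.1 hk])
  rw [card_fiber_chi χ x] at h1
  have h2 : (q : ℝ) * (zeros d ∩ zeros d').card ≤ Nat.card χ.ker := by exact_mod_cast h1
  calc ((zeros d ∩ zeros d').card : ℝ) = 1 / q * (q * (zeros d ∩ zeros d').card) := by
        field_simp
    _ ≤ Λ * (Λ * Fintype.card G) := by
      refine mul_le_mul (hΛ.inv_le d h hd) (h2.trans (hΛ.ker_le hχ)) (by positivity) hΛ0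
    _ = Λ ^ 2 * Fintype.card G := by ring

/-- Linearly independent affine cocycles have common zeros of density at most `Λ ^ 2`. -/
theorem card_inter_le [DecidableEq G] (hΛ : Admissible χ Λ) (h : IsAffCocycle χ d) (h0 : d ≠ 0)
    (h' : IsAffCocycle χ d') (hprop : ¬ ∃ c : ZMod q, d' = c • d) :
    ((zeros d ∩ zeros d').card : ℝ) ≤ Λ ^ 2 * Fintype.card G := by
  have hq : (0 : ℝ) < q := by exact_mod_cast (Fact.out : q.Prime).pos
  have hΛ0 := hΛ.nonneg
  by_cases hd : NonconstOnKer χ d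
  · by_cases hex : ∃ k ∈ χ.ker, d k = d 1 ∧ d' k ≠ d' 1
    · obtain ⟨k, hk, hdk, hdk'⟩ := hex
      have h1 := h'.card_translates hk hdk' (zeros d ∩ zeros d') (zeros d)
        (fun y hy => mem_zeros.1 (Finset.mem_inter.1 hy).2) (fun y hy i => by
          have := mem_zeros.1 (Finset.mem_inter.1 hy).1
          rw [mem_zeros, h.mul_pow_ker hk, this, hdk]; simp)
      have h2 := h.card_zeros_of_nonconst hd
      have h1' : (q : ℝ) * (zeros d ∩ zeros d').card ≤ (zeros d).card := by exact_mod_cast h1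
      have h2' : (q : ℝ) * (zeros d).card ≤ Fintype.card G := by exact_mod_cast h2
      have h3 := hΛ.inv_le d h hd
      calc ((zeros d ∩ zeros d').card : ℝ) = 1 / q * (q * (zeros d ∩ zeros d').card) := by
            field_simp
        _ ≤ 1 / q * (zeros d).card := by gcongr
        _ = 1 / q * (1 / q * (q * (zeros d).card)) := by field_simp
        _ ≤ Λ * (Λ * Fintype.card G) := by gcongr
        _ = Λ ^ 2 * Fintype.card G := by ring
    · push Not at hex
      obtain ⟨g, hg, hdg⟩ := id hd
      have hdg' : d g - d 1 ≠ 0 := sub_ne_zero.2 hdg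
      set c : ZMod q := (d' g - d' 1) / (d g - d 1) with hc
      have hd'' : ¬ NonconstOnKer χ (d' - c • d) := by
        rintro ⟨k, hk, hk1⟩
        apply hk1
        -- move `k` into the kernel of `d - d 1` by a power of `g`
        set j : ZMod q := (d k - d 1) / (d g - d 1) with hj
        have hmem : k * g ^ (-j).val ∈ χ.ker := mul_mem hk (pow_mem hg _)
        have e1 := h.mul_pow_ker hg k (-j).val
        have e2 := h'.mul_pow_ker hg k (-j).val
        rw [MonoidHom.mem_ker.1 hk] at e1 e2
        simp only [ZMod.natCast_val, ZMod.cast_id', id_eq, Units.val_one, one_mul] at e1 e2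
        have e3 : d (k * g ^ (-j).val) = d 1 := by
          rw [e1, hj]; field_simp; ring
        have e4 := hex _ hmem e3
        rw [e2] at e4
        have e5 : d' k - d' 1 = j * (d' g - d' 1) := by linear_combination e4
        have e6 : d' k - d' 1 = c * (d k - d 1) := by
          rw [e5, hc, hj]; field_simp
        simp only [Pi.sub_apply, Pi.smul_apply, smul_eq_mul]
        linear_combination e6
      have h0'' : d' - c • d ≠ 0 := fun h1 => hprop ⟨c, sub_eq_zero.1 h1⟩
      refine le_trans ?_ (card_inter_mixed hΛ h hd (h.sub_smul h' c) hd'' h0'')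
      exact_mod_cast Finset.card_le_card fun y hy => by
        rw [Finset.mem_inter, mem_zeros, mem_zeros] at hy
        simp [hy.1, hy.2]
  · by_cases hd' : NonconstOnKer χ d'
    · rw [Finset.inter_comm]
      exact card_inter_mixed hΛ h' hd' h hd h0
    · rcases (zeros d ∩ zeros d').eq_empty_or_nonempty with he | ⟨x, hx⟩
      · rw [he]; simp only [Finset.card_empty, Nat.cast_zero]; positivity
      · rw [Finset.mem_inter, mem_zeros, mem_zeros] at hx
        exact absurd (h.proportional_of_common_zero hd h0 h' hd' hx.1 hx.2) hprop

end IsAffCocycle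

end Cocycle

/-! ### Counting cocycles close to a given function -/

/-- Where `F` agrees with all three of `u`, `v`, `w`, the differences `v - u` and `w - u` vanish. -/
theorem triple_subset_zeros {G : Type*} [Fintype G] [DecidableEq G] {q : ℕ} (S : Finset G)
    (F u v w : G → ZMod q) :
    (S.filter fun x => F x = u x) ∩ (S.filter fun x => F x = v x) ∩ (S.filter fun x => F x = w x)
      ⊆ zeros (v - u) ∩ zeros (w - u) := by
  intro x hx
  simp only [Finset.mem_inter, Finset.mem_filter] at hx
  simp [← hx.1.1.2, ← hx.1.2.2, ← hx.2.2]

section FiberCount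

variable {G : Type*} [Group G] [Fintype G] [DecidableEq G] {q : ℕ} [Fact q.Prime]
  {χ : G →* (ZMod q)ˣ} {Λ : ℝ}

/-- A line `u + c • (v - u)` contains at most `1 / θ` members of `U`: their agreement sets with `F` form
a sunflower with core inside the zero set of `v - u`. -/
theorem line_bound (hΛ : Admissible χ Λ) (U : Finset (G → ZMod q))
    (hU : ∀ u ∈ U, IsAffCocycle χ u) (S : Finset G) (F : G → ZMod q) (θ : ℝ) (hθ1 : θ ≤ 1)
    (hS : Λ * Fintype.card G < S.card)
    (ha : ∀ u ∈ U, Λ * Fintype.card G + θ * (S.card - Λ * Fintype.card G)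
      ≤ (S.filter fun x => F x = u x).card)
    {u v : G → ZMod q} (hu : u ∈ U) (hv : v ∈ U) (huv : u ≠ v) (W : Finset (G → ZMod q))
    (hWU : W ⊆ U) (hW : ∀ w ∈ W, ∃ c : ZMod q, w - u = c • (v - u)) :
    (W.card : ℝ) * θ ≤ 1 := by
  refine sunflower_bound_s1 W (fun w => S.filter fun x => F x = w x) S
    (S.filter fun x => F x = u x ∧ v x = u x) (fun w _ => Finset.filter_subset _ _)
    ?_ ?_ (Λ * Fintype.card G) θ ?_ hS hθ1 (fun w hw => ha w (hWU hw))
  · intro w hw x hx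
    obtain ⟨c, hc⟩ := hW w hw
    rw [Finset.mem_filter] at hx ⊢
    have := congrFun hc x
    simp only [Pi.sub_apply, Pi.smul_apply, hx.2.2, sub_self, smul_zero] at this
    exact ⟨hx.1, by rw [hx.2.1, sub_eq_zero.1 this]⟩
  · intro w hw w' hw' hne x hx
    obtain ⟨c, hc⟩ := hW w hw
    obtain ⟨c', hc'⟩ := hW w' hw'
    simp only [Finset.mem_inter, Finset.mem_filter] at hx
    have h1 := congrFun hc x
    have h2 := congrFun hc' x
    simp only [Pi.sub_apply, Pi.smul_apply, smul_eq_mul] at h1 h2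
    have hcc : c - c' ≠ 0 := by
      intro h0
      apply hne
      rw [← sub_left_inj (a := u), hc, hc', sub_eq_zero.1 h0]
    have hz : (c - c') * (v x - u x) = 0 := by
      linear_combination h2 - h1 - hx.1.2 + hx.2.2
    have hvu : v x - u x = 0 := (mul_eq_zero.1 hz).resolve_left hcc
    rw [Finset.mem_filter]
    refine ⟨hx.1.1, ?_, sub_eq_zero.1 hvu⟩
    rw [hvu, mul_zero] at h1
    rw [hx.1.2, sub_eq_zero.1 h1]
  · refine le_trans ?_ (((hU v hv).sub (hU u hu)).card_zeros_le hΛ (sub_ne_zero.2 huv.symm))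
    exact_mod_cast Finset.card_le_card fun x hx => by
      rw [Finset.mem_filter] at hx
      simp [hx.2.2]

/-- With `|S| > Λ * |G|`, at most `64 / θ ^ 12` affine cocycles agree with `F` on at least
`Λ * |G| + θ * (|S| - Λ * |G|)` points of `S`. -/
theorem cocycle_count (hΛ : Admissible χ Λ) (U : Finset (G → ZMod q))
    (hU : ∀ u ∈ U, IsAffCocycle χ u) (S : Finset G) (F : G → ZMod q) (θ : ℝ) (hθ0 : 0 < θ)
    (hθ1 : θ ≤ 1) (hS : Λ * Fintype.card G < S.card)
    (ha : ∀ u ∈ U, Λ * Fintype.card G + θ * (S.card - Λ * Fintype.card G)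
      ≤ (S.filter fun x => F x = u x).card) :
    (U.card : ℝ) ≤ 64 / θ ^ 12 := by
  classical
  have hΛ0 := hΛ.nonneg
  set n : ℝ := (Fintype.card G : ℝ) with hn
  have hn0 : 0 < n := by rw [hn]; exact_mod_cast Fintype.card_pos
  set s : ℝ := (S.card : ℝ) with hs
  have hs0 : 0 < s := lt_of_le_of_lt (by positivity) hS
  have hSpos : 0 < S.card := by rw [hs] at hs0; exact_mod_cast hs0
  have hsn : s ≤ n := by rw [hs, hn]; exact_mod_cast Finset.card_le_univ S
  have ha' : ∀ u ∈ U, θ * s ≤ (S.filter fun x => F x = u x).card := by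
    intro u hu
    refine le_trans ?_ (ha u hu)
    nlinarith [mul_nonneg hΛ0 hn0.le]
  have h44 : 4 / θ ^ 4 ≤ 64 / θ ^ 12 := by
    rw [div_le_div_iff₀ (by positivity) (by positivity)]
    have : θ ^ 8 ≤ 1 := pow_le_one₀ hθ0.le hθ1
    calc 4 * θ ^ 12 = 4 * θ ^ 4 * θ ^ 8 := by ring
      _ ≤ 4 * θ ^ 4 * 1 := by gcongr
      _ ≤ 64 * θ ^ 4 := by nlinarith [pow_pos hθ0 4]
  rcases le_or_gt Λ (θ ^ 3 / 2) with hsmall | hbig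
  · refine le_trans (triple_bound U (fun u => S.filter fun x => F x = u x) S
      (fun u _ => Finset.filter_subset _ _) θ (Λ ^ 2 * n) hθ0 hθ1 hSpos ha' (by positivity)
      ?_ ?_) h44
    · rw [← hs]
      have h1 : Λ * (Λ * n) ≤ Λ * s := by gcongr
      have h2 : Λ * s ≤ θ ^ 3 / 2 * s := by gcongr
      nlinarith
    · intro u hu v hv huv
      refine ⟨U.filter fun w => ∃ c : ZMod q, w - u = c • (v - u), Finset.filter_subset _ _,
        line_bound hΛ U hU S F θ hθ1 hS ha hu hv huv _ (Finset.filter_subset _ _)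
          fun w hw => (Finset.mem_filter.1 hw).2, ?_⟩
      intro w hw hwW
      refine le_trans ?_ (IsAffCocycle.card_inter_le hΛ ((hU v hv).sub (hU u hu))
        (sub_ne_zero.2 huv.symm) ((hU w hw).sub (hU u hu))
        (fun h => hwW (Finset.mem_filter.2 ⟨hw, h⟩)))
      exact_mod_cast Finset.card_le_card (triple_subset_zeros S F u v w)
  · -- classes modulo cocycles that are constant on the kernel
    let cls : (G → ZMod q) → (χ.ker → ZMod q) := fun u k => u k - u 1
    have hcls : ∀ u v, cls u = cls v → ¬ NonconstOnKer χ (v - u) := by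
      rintro u v huv ⟨k, hk, hne⟩
      apply hne
      have := congrFun huv ⟨k, hk⟩
      simp only [cls] at this
      simp only [Pi.sub_apply]
      linear_combination -this
    have hclass : ∀ b ∈ U.image cls, ((U.filter fun u => cls u = b).card : ℝ) ≤ 4 / θ ^ 4 := by
      intro b _
      set V := U.filter fun u => cls u = b with hV
      have hVU : V ⊆ U := Finset.filter_subset _ _
      have hVb : ∀ u ∈ V, cls u = b := fun u hu => (Finset.mem_filter.1 hu).2
      refine triple_bound V (fun u => S.filter fun x => F x = u x) S
        (fun u _ => Finset.filter_subset _ _) θ 0 hθ0 hθ1 hSpos (fun u hu => ha' u (hVU hu)) le_rfl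
        (by positivity) ?_
      intro u hu v hv huv
      refine ⟨V.filter fun w => ∃ c : ZMod q, w - u = c • (v - u), Finset.filter_subset _ _,
        line_bound hΛ U hU S F θ hθ1 hS ha (hVU hu) (hVU hv) huv _
          ((Finset.filter_subset _ _).trans hVU) fun w hw => (Finset.mem_filter.1 hw).2, ?_⟩
      intro w hw hwW
      have hempty : zeros (v - u) ∩ zeros (w - u) = ∅ := by
        by_contra hne
        obtain ⟨x, hx⟩ := Finset.nonempty_iff_ne_empty.2 hne
        rw [Finset.mem_inter, mem_zeros, mem_zeros] at hx
        exact hwW (Finset.mem_filter.2 ⟨hw,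
          ((hU v (hVU hv)).sub (hU u (hVU hu))).proportional_of_common_zero
            (hcls u v ((hVb u hu).trans (hVb v hv).symm)) (sub_ne_zero.2 huv.symm)
            ((hU w (hVU hw)).sub (hU u (hVU hu)))
            (hcls u w ((hVb u hu).trans (hVb w hw).symm)) hx.1 hx.2⟩)
      have := Finset.card_le_card (triple_subset_zeros S F u v w)
      rw [hempty, Finset.card_empty, Nat.le_zero] at this
      rw [this, Nat.cast_zero]
    -- one representative of each class
    have hrep : ∀ b ∈ U.image cls, ∃ u ∈ U, cls u = b := fun b hb => Finset.mem_image.1 hb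
    choose! rep hrepU hrepcls using hrep
    have hnum : ((U.image cls).card : ℝ) ≤ 16 / θ ^ 8 := by
      have h16 : (1 : ℝ) ≤ 16 / θ ^ 8 := by
        rw [le_div_iff₀ (by positivity)]
        have : θ ^ 8 ≤ 1 := pow_le_one₀ hθ0.le hθ1
        linarith
      rcases le_or_gt (U.image cls).card 1 with hle | hgt
      · exact le_trans (by exact_mod_cast hle) h16
      have hnc : ∀ b ∈ U.image cls, ∀ b' ∈ U.image cls, b ≠ b' →
          NonconstOnKer χ (rep b - rep b') := by
        intro b hb b' hb' hne
        by_contra hcon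
        apply hne
        rw [← hrepcls b hb, ← hrepcls b' hb']
        funext k
        by_contra hk
        refine hcon ⟨k, k.2, fun h => hk ?_⟩
        simp only [Pi.sub_apply] at h
        simp only [cls]
        linear_combination h
      obtain ⟨b, hb, b', hb', hbb'⟩ := Finset.one_lt_card.1 hgt
      have hqΛ : 1 / (q : ℝ) ≤ Λ := hΛ.inv_le _
        ((hU _ (hrepU b hb)).sub (hU _ (hrepU b' hb'))) (hnc b hb b' hb' hbb')
      have hinj : Set.InjOn rep (U.image cls : Finset _) := by
        intro b hb b' hb' h
        rw [← hrepcls b hb, ← hrepcls b' hb', h]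
      have hsq : s / q ≤ s * Λ := by
        rw [div_eq_mul_one_div]; gcongr
      -- since `1 / q ≤ Λ ≤ 1 / 2`, the agreement exceeds the random level `s / q` by `θ * Λ * n / 2`
      have hgap : θ * Λ / 2 * n ≤ Λ * n + θ * (s - Λ * n) - s / q := by
        have h1 : 0 ≤ (1 - θ) * (Λ * (n - s)) :=
          mul_nonneg (by linarith) (mul_nonneg hΛ0 (by linarith))
        have h2 : 0 ≤ θ * (1 - Λ) * (s - Λ * n) :=
          mul_nonneg (mul_nonneg hθ0.le (by linarith [hΛ.le_half])) (by linarith)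
        have h3 : 0 ≤ θ * Λ * n * (1 / 2 - Λ) :=
          mul_nonneg (by positivity) (by linarith [hΛ.le_half])
        nlinarith
      have hgram := gram_bound q ((U.image cls).image rep) S F
        (Λ * n + θ * (s - Λ * n)) ?_ ?_ ?_
      · rw [Finset.card_image_of_injOn hinj, ← hs, ← hn] at hgram
        have h1 : ((U.image cls).card : ℝ) * (θ * Λ / 2 * n) ^ 2 ≤ n * n := by
          calc _ ≤ ((U.image cls).card : ℝ) * (Λ * n + θ * (s - Λ * n) - s / q) ^ 2 := by
                gcongr
            _ ≤ s * n := hgram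
            _ ≤ n * n := by gcongr
        have h2 : ((U.image cls).card : ℝ) * (θ * Λ / 2) ^ 2 ≤ 1 := by
          have : (n * n) * (((U.image cls).card : ℝ) * (θ * Λ / 2) ^ 2) ≤ (n * n) * 1 := by
            nlinarith
          exact le_of_mul_le_mul_left this (by positivity)
        have h3 : (θ ^ 4 / 4) ^ 2 ≤ (θ * Λ / 2) ^ 2 := by
          have : θ ^ 4 / 4 ≤ θ * Λ / 2 := by nlinarith
          gcongr
        rw [le_div_iff₀ (by positivity)]
        have h4 := (mul_le_mul_of_nonneg_left h3
          (Nat.cast_nonneg (α := ℝ) (U.image cls).card)).trans h2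
        nlinarith
      · intro u hu v hv huv
        obtain ⟨b, hb, rfl⟩ := Finset.mem_image.1 hu
        obtain ⟨b', hb', rfl⟩ := Finset.mem_image.1 hv
        have := ((hU _ (hrepU b hb)).sub (hU _ (hrepU b' hb'))).card_zeros_of_nonconst
          (hnc b hb b' hb' fun h => huv (by rw [h]))
        have h2 : (Finset.univ.filter fun x => rep b x = rep b' x) = zeros (rep b - rep b') := by
          ext x; simp [sub_eq_zero]
        rw [h2]
        exact_mod_cast this
      · intro u hu
        obtain ⟨b, hb, rfl⟩ := Finset.mem_image.1 hu
        exact ha _ (hrepU b hb)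
      · rw [← hs]
        have : 0 ≤ θ * Λ / 2 * n := by positivity
        linarith
    have hfib : (U.card : ℝ) ≤ ∑ b ∈ U.image cls, 4 / θ ^ 4 := by
      rw [Finset.card_eq_sum_card_image cls U]
      push_cast
      exact Finset.sum_le_sum hclass
    refine hfib.trans ?_
    rw [Finset.sum_const, nsmul_eq_mul]
    calc ((U.image cls).card : ℝ) * (4 / θ ^ 4) ≤ 16 / θ ^ 8 * (4 / θ ^ 4) := by gcongr
      _ = 64 / θ ^ 12 := by field_simp; norm_num

/-- The potential of the affine cocycles close to `F` on `S` is at most that of `S` itself. -/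
theorem cocycle_potential (hΛ : Admissible χ Λ) (U : Finset (G → ZMod q))
    (hU : ∀ u ∈ U, IsAffCocycle χ u) (S : Finset G) (F : G → ZMod q) :
    ∑ u ∈ U, max 0 (((S.filter fun x => F x = u x).card : ℝ) / Fintype.card G - Λ) ^ 38
      ≤ max 0 ((S.card : ℝ) / Fintype.card G - Λ) ^ 38 := by
  set n : ℝ := (Fintype.card G : ℝ) with hn
  have hn0 : 0 < n := by rw [hn]; exact_mod_cast Fintype.card_pos
  have hle : ∀ u : G → ZMod q, ((S.filter fun x => F x = u x).card : ℝ) ≤ S.card := fun u => by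
    exact_mod_cast Finset.card_le_card (Finset.filter_subset _ _)
  rcases le_or_gt ((S.card : ℝ) / n) Λ with hsmall | hbig
  · refine le_trans (Finset.sum_nonpos fun u _ => ?_) (by positivity)
    rw [max_eq_left, zero_pow (by norm_num)]
    have : ((S.filter fun x => F x = u x).card : ℝ) / n ≤ S.card / n := by
      gcongr; exact Finset.filter_subset _ _
    linarith
  set B : ℝ := (S.card : ℝ) / n - Λ with hB
  have hB0 : 0 < B := by linarith
  have hSn : (S.card : ℝ) = n * (Λ + B) := by rw [hB]; field_simp; ring
  have hS : Λ * n < S.card := by rw [hSn]; nlinarith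
  rw [max_eq_right hB0.le]
  have hpot := potential_bound
    (fun u : G → ZMod q => max 0 (((S.filter fun x => F x = u x).card : ℝ) / n - Λ) / B) U
    (fun u _ => by positivity) ?_ ?_ ?_
  · simp_rw [div_pow] at hpot
    rwa [← Finset.sum_div, div_le_one (by positivity)] at hpot
  · intro u _
    rw [div_le_one hB0]
    refine max_le hB0.le ?_
    rw [hB]
    gcongr
    exact Finset.filter_subset _ _
  · intro u hu v hv huv
    have hub : ∀ w : G → ZMod q, ((S.filter fun x => F x = w x).card : ℝ) / n - Λ ≤ B := fun w => by
      rw [hB]; gcongr; exact Finset.filter_subset _ _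
    rw [← add_div, div_le_one hB0]
    rcases le_total (((S.filter fun x => F x = u x).card : ℝ) / n - Λ) 0 with h1 | h1
    · rw [max_eq_left h1, zero_add]
      exact max_le hB0.le (hub v)
    rcases le_total (((S.filter fun x => F x = v x).card : ℝ) / n - Λ) 0 with h2 | h2
    · rw [max_eq_left h2, add_zero]
      exact max_le hB0.le (hub u)
    rw [max_eq_right h1, max_eq_right h2]
    have hz := ((hU u hu).sub (hU v hv)).card_zeros_le hΛ (sub_ne_zero.2 huv)
    have hie := Finset.card_union_add_card_inter (S.filter fun x => F x = u x)
      (S.filter fun x => F x = v x)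
    have h3 : (((S.filter fun x => F x = u x) ∪ (S.filter fun x => F x = v x)).card : ℝ)
        ≤ S.card := by
      exact_mod_cast Finset.card_le_card
        (Finset.union_subset (Finset.filter_subset _ _) (Finset.filter_subset _ _))
    have h4 : (((S.filter fun x => F x = u x) ∩ (S.filter fun x => F x = v x)).card : ℝ)
        ≤ (zeros (u - v)).card := by
      exact_mod_cast Finset.card_le_card fun x hx => by
        simp only [Finset.mem_inter, Finset.mem_filter] at hx
        simp [← hx.1.2, ← hx.2.2]
    have hie' : ((S.filter fun x => F x = u x).card : ℝ) + (S.filter fun x => F x = v x).card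
        = ((S.filter fun x => F x = u x) ∪ (S.filter fun x => F x = v x)).card
          + ((S.filter fun x => F x = u x) ∩ (S.filter fun x => F x = v x)).card := by
      exact_mod_cast hie.symm
    have h5 : ((S.filter fun x => F x = u x).card : ℝ) + (S.filter fun x => F x = v x).card
        ≤ S.card + Λ * n := by linarith
    have h6 : (((S.filter fun x => F x = u x).card : ℝ) + (S.filter fun x => F x = v x).card) / n
        ≤ S.card / n + Λ := by
      rw [div_le_iff₀ hn0, add_mul, div_mul_cancel₀ _ hn0.ne']
      exact h5
    rw [add_div] at h6
    linarith
  · intro V hVU θ hθ0 hθ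
    rcases V.eq_empty_or_nonempty with rfl | ⟨v, hv⟩
    · simp only [Finset.card_empty, Nat.cast_zero]; positivity
    have hlow : ∀ u ∈ V, Λ * n + θ * (S.card - Λ * n) ≤ (S.filter fun x => F x = u x).card := by
      intro u hu
      have h1 := hθ u hu
      rw [le_div_iff₀ hB0] at h1
      have h2 : 0 < θ * B := by positivity
      have h3 : θ * B ≤ ((S.filter fun x => F x = u x).card : ℝ) / n - Λ := by
        rcases le_max_iff.1 h1 with h | h
        · linarith
        · exact h
      have h4 : (Λ + θ * B) * n ≤ (S.filter fun x => F x = u x).card := by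
        rw [← le_div_iff₀ hn0]; linarith
      rw [hSn]
      linarith
    have hθ1 : θ ≤ 1 := by
      have h1 := (hlow v hv).trans (hle v)
      by_contra hcon
      push Not at hcon
      nlinarith
    exact cocycle_count hΛ V (fun u hu => hU u (hVU hu)) S F θ hθ0 hθ1 hS hlow

end FiberCount

/-! ### Affine homomorphisms lifting a fixed map to `H ⧸ N` -/

/-- In the coordinate `N ≃ ZMod |N|` of a cyclic group, an automorphism is multiplication by the unit
that `IsCyclic.mulAutMulEquiv` attaches to it. -/
theorem mulAut_coord {N : Type*} [Group N] [Finite N] [hN : IsCyclic N] (σ : MulAut N) (a : N) :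
    ((zmodCyclicMulEquiv hN).symm (σ a)).toAdd
      = (IsCyclic.mulAutMulEquiv N σ : ZMod (Nat.card N))
        * ((zmodCyclicMulEquiv hN).symm a).toAdd := by
  obtain ⟨b, rfl⟩ := (zmodCyclicMulEquiv hN).surjective a
  obtain ⟨c, rfl⟩ := Multiplicative.ofAdd.surjective b
  set f : ZMod (Nat.card N) →+ ZMod (Nat.card N) :=
    ((MulAut.congr (zmodCyclicMulEquiv hN)).symm σ).toMonoidHom.toAdditive with hf
  have h1 : ((zmodCyclicMulEquiv hN).symm (σ (zmodCyclicMulEquiv hN (Multiplicative.ofAdd c)))).toAdd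
    = f c := rfl
  have h2 : (IsCyclic.mulAutMulEquiv N σ : ZMod (Nat.card N)) = f 1 := rfl
  have h3 : f c = f 1 * c := by
    have : NeZero (Nat.card N) := ⟨Nat.card_pos.ne'⟩
    have hc : c = c.val • (1 : ZMod (Nat.card N)) := by simp
    conv_lhs => rw [hc]
    rw [map_nsmul, nsmul_eq_mul, mul_comm]; simp
  rw [h1, h2, h3]; simp

/-- `Λ ≥ 1 / r` for each prime `r` dividing `|H|` that is the index of a normal subgroup of `G`. Unlike
`Lambda G H ≤ Λ`, this condition is plainly inherited by quotients of `H`. -/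
def IndexBound (G H : Type*) [Group G] [Group H] (Λ : ℝ) : Prop :=
  ∀ r : ℕ, r.Prime → r ∣ Nat.card H → ∀ K : Subgroup G, K.Normal → K.index = r → 1 / (r : ℝ) ≤ Λ

/-- Divisors of the order of a cyclic quotient of `G` are indices of normal subgroups of `G`. -/
theorem exists_normal_index {G A : Type*} [Group G] [CommGroup A] [Finite A] [IsCyclic A]
    (χ : G →* A) {r : ℕ} (hr0 : r ≠ 0) (hr : r ∣ Nat.card χ.range) :
    ∃ K : Subgroup G, K.Normal ∧ K.index = r := by
  obtain ⟨g, hg⟩ := IsCyclic.exists_ofOrder_eq_natCard (α := χ.range)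
  refine ⟨(Subgroup.zpowers (g ^ r)).comap χ.rangeRestrict, inferInstance, ?_⟩
  rw [Subgroup.index_comap_of_surjective _ χ.rangeRestrict_surjective]
  have h1 := (Subgroup.zpowers (g ^ r)).card_mul_index
  rw [Nat.card_zpowers, orderOf_pow_of_dvd hr0 (hg ▸ hr), hg] at h1
  obtain ⟨k, hk⟩ := hr
  have hpos : 0 < Nat.card χ.range := Nat.card_pos
  rw [hk, Nat.mul_div_cancel_left _ (Nat.pos_of_ne_zero hr0), mul_comm r k] at h1
  refine Nat.eq_of_mul_eq_mul_left (Nat.pos_of_ne_zero ?_) h1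
  rintro rfl
  omega

/-- For `χ ≠ 1`, a prime `r` dividing the order of the cyclic group `χ(G)` gives
`Λ ≥ 1 / r ≥ 1 / |χ(G)|`, which is the density of `ker χ` and at least `1 / q`. For `χ = 1`, a cocycle
nonconstant on `ker χ = G` is, up to a constant, a surjective homomorphism to `ZMod q`, whence
`Λ ≥ 1 / q`. -/
theorem admissible_of_indexBound {G H : Type*} [Group G] [Group H] [Fintype G] [Finite H] {q : ℕ}
    [hq : Fact q.Prime] (hqH : q ∣ Nat.card H) {Λ : ℝ} (h0 : 0 ≤ Λ) (hhalf : Λ ≤ 1 / 2)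
    (hΛ : IndexBound G H Λ) (χ₀ : H →* (ZMod q)ˣ) (ρ : G →* H) : Admissible (χ₀.comp ρ) Λ := by
  set χ := χ₀.comp ρ with hχ
  have hqpos : (0 : ℝ) < q := by exact_mod_cast hq.out.pos
  have hindex : (Nat.card χ.ker : ℝ) * Nat.card χ.range = Fintype.card G := by
    have := χ.ker.card_mul_index
    rw [Subgroup.index_ker, Nat.card_eq_fintype_card (α := G)] at this
    exact_mod_cast this
  have hmpos : (0 : ℝ) < Nat.card χ.range := by exact_mod_cast Nat.card_pos
  have hm : χ ≠ 1 → 1 / (Nat.card χ.range : ℝ) ≤ Λ := by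
    intro hne
    have hm1 : Nat.card χ.range ≠ 1 := by
      intro h1
      apply hne
      rw [Subgroup.card_eq_one] at h1
      exact MonoidHom.range_eq_bot_iff.1 h1
    obtain ⟨r, hr, hrm⟩ := Nat.exists_prime_and_dvd hm1
    obtain ⟨K, hK, hKr⟩ := exists_normal_index χ hr.ne_zero hrm
    have hrH : r ∣ Nat.card H := by
      refine hrm.trans ((Subgroup.card_dvd_of_le ?_).trans (Subgroup.card_range_dvd χ₀))
      rintro _ ⟨x, rfl⟩
      exact ⟨ρ x, rfl⟩
    refine le_trans ?_ (hΛ r hr hrH K hK hKr)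
    have hr0 : (0 : ℝ) < r := by exact_mod_cast hr.pos
    refine one_div_le_one_div_of_le hr0 ?_
    exact_mod_cast Nat.le_of_dvd Nat.card_pos hrm
  refine ⟨h0, hhalf, ?_, ?_⟩
  · intro d hd ⟨k, hk, hne⟩
    by_cases hχ1 : χ = 1
    · let δ : G →* Multiplicative (ZMod q) :=
        { toFun := fun x => Multiplicative.ofAdd (d x - d 1)
          map_one' := by simp
          map_mul' := fun x y => by
            rw [← ofAdd_add, hd x y, hχ1]
            congr 1
            simp only [MonoidHom.one_apply, Units.val_one]
            ring }
      have hcard : Nat.card δ.range = q := by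
        have hdvd : Nat.card δ.range ∣ q := by
          have := Subgroup.card_subgroup_dvd_card δ.range
          rwa [Nat.card_congr (Multiplicative.toAdd (α := ZMod q)), Nat.card_zmod] at this
        refine ((Nat.dvd_prime hq.out).1 hdvd).resolve_left fun h1 => hne ?_
        rw [Subgroup.card_eq_one] at h1
        have hδ : δ = 1 := MonoidHom.range_eq_bot_iff.1 h1
        have := DFunLike.congr_fun hδ k
        exact sub_eq_zero.1 (Multiplicative.ofAdd.injective this)
      exact hΛ q hq.out hqH δ.ker inferInstance (by rw [Subgroup.index_ker, hcard])
    · refine le_trans ?_ (hm hχ1)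
      refine one_div_le_one_div_of_le hmpos ?_
      have h1 : Nat.card χ.range ≤ Nat.card (ZMod q)ˣ := Subgroup.card_le_card_group _
      rw [Nat.card_eq_fintype_card (α := (ZMod q)ˣ), ZMod.card_units] at h1
      exact_mod_cast h1.trans (Nat.sub_le q 1)
  · intro hne
    have h1 := hm hne
    rw [div_le_iff₀ hmpos] at h1
    rw [← hindex]
    nlinarith [Nat.cast_nonneg (α := ℝ) (Nat.card χ.ker)]

theorem agr_eq {G H : Type*} [Fintype G] [DecidableEq H] (f g : G → H) :
    agr f g = ((Finset.univ.filter fun x => f x = g x).card : ℝ) / Fintype.card G := by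
  rw [agr, Nat.card_eq_fintype_card, Nat.card_eq_fintype_card, Fintype.card_subtype]

theorem agr_le_one {G H : Type*} [Fintype G] (f g : G → H) : agr f g ≤ 1 := by
  classical
  rw [agr_eq]
  refine div_le_one_of_le₀ ?_ (by positivity)
  exact_mod_cast Finset.card_le_univ _

theorem IsAffineHom.map_mul' {G H : Type*} [Group G] [Group H] {φ : G → H} (h : IsAffineHom φ)
    (x y : G) : φ (x * y) = φ x * (φ 1)⁻¹ * φ y := by
  obtain ⟨a, φ₀, hφ⟩ := h
  simp [hφ, mul_assoc]

/-- The potential of the affine lifts of `ψ : G → H ⧸ N` is at most the potential of `ψ`. The lifts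
become affine cocycles after division by one of them and the identification `N ≃ ZMod |N|`. -/
theorem fiber_sum_le {G H : Type*} [Group G] [Group H] [Fintype G] [Finite H] (N : Subgroup H)
    [N.Normal] (hN : (Nat.card N).Prime) {Λ : ℝ} (h0 : 0 ≤ Λ) (hhalf : Λ ≤ 1 / 2)
    (hΛ : IndexBound G H Λ) (f : G → H) (ψ : G → H ⧸ N) (U : Finset (G → H))
    (hU : ∀ φ ∈ U, IsAffineHom φ) (hψ : ∀ φ ∈ U, ∀ x, (φ x : H ⧸ N) = ψ x) :
    ∑ φ ∈ U, max 0 (agr φ f - Λ) ^ 38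
      ≤ max 0 (agr ψ (fun x => (f x : H ⧸ N)) - Λ) ^ 38 := by
  classical
  rcases U.eq_empty_or_nonempty with rfl | ⟨u, hu⟩
  · rw [Finset.sum_empty]; positivity
  have : Fact (Nat.card N).Prime := ⟨hN⟩
  have hcyc : IsCyclic N := isCyclic_of_prime_card rfl
  let z := (zmodCyclicMulEquiv hcyc).symm
  -- coordinate `N ≃ ZMod q`, extended by zero
  let c : H → ZMod (Nat.card N) := fun a => if ha : a ∈ N then (z ⟨a, ha⟩).toAdd else 0
  have hc : ∀ a : N, c a = (z a).toAdd := fun a => by simp [c]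
  have hcmul : ∀ a b : N, c (a * b : N) = c a + c b := fun a b => by
    rw [hc, hc, hc, map_mul, toAdd_mul]
  have hcinj : ∀ a b : N, c a = c b → a = b := fun a b h => by
    rw [hc, hc] at h
    exact z.injective (Multiplicative.toAdd.injective h)
  let χ₀ : H →* (ZMod (Nat.card N))ˣ :=
    (IsCyclic.mulAutMulEquiv N).toMonoidHom.comp MulAut.conjNormal
  have hcconj : ∀ (g : H) (a : N), c (g * a * g⁻¹) = χ₀ g * c a := by
    intro g a
    rw [← MulAut.conjNormal_apply, hc, hc]
    exact mulAut_coord _ _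
  -- `ρ` is the linear part of `u` for right translations, `u x = ρ x * u 1`
  obtain ⟨b, φ₀, hφ₀⟩ := hU u hu
  let ρ : G →* H := (MulAut.conj b).toMonoidHom.comp φ₀
  have hρ : ∀ x, ρ x = u x * (u 1)⁻¹ := fun x => by simp [ρ, hφ₀]
  have hadm : Admissible (χ₀.comp ρ) Λ :=
    admissible_of_indexBound (Subgroup.card_subgroup_dvd_card N) h0 hhalf hΛ χ₀ ρ
  let D : (G → H) → G → ZMod (Nat.card N) := fun φ x => c (φ x * (u x)⁻¹)
  have hmem : ∀ φ ∈ U, ∀ x, φ x * (u x)⁻¹ ∈ N := by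
    intro φ hφ x
    rw [← div_eq_mul_inv, ← QuotientGroup.eq_iff_div_mem, hψ φ hφ, hψ u hu]
  have hcocycle : ∀ φ ∈ U, IsAffCocycle (χ₀.comp ρ) (D φ) := by
    intro φ hφ x y
    let dx : N := ⟨_, hmem φ hφ x⟩
    let dy : N := ⟨_, hmem φ hφ y⟩
    let d1 : N := ⟨_, hmem φ hφ 1⟩
    have h1 : c (d1⁻¹ * dy : N) = c dy - c d1 := by
      have := hcmul d1 (d1⁻¹ * dy)
      rw [mul_inv_cancel_left] at this
      rw [this]; ring
    have h2 : φ (x * y) * (u (x * y))⁻¹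
        = ((dx * MulAut.conjNormal (ρ x) (d1⁻¹ * dy) : N) : H) := by
      rw [(hU φ hφ).map_mul', (hU u hu).map_mul']
      simp only [Subgroup.coe_mul, MulAut.conjNormal_apply, Subgroup.coe_inv, hρ, dx, dy, d1]
      group
    have h3 : D φ (x * y) = c dx + c (ρ x * (d1⁻¹ * dy : N) * (ρ x)⁻¹) := by
      change c (φ (x * y) * (u (x * y))⁻¹) = _
      rw [h2, hcmul, MulAut.conjNormal_apply]
    rw [h3, hcconj, h1]
    change c dx + (χ₀ (ρ x) : ZMod (Nat.card N)) * (c dy - c d1) = _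
    rw [add_comm]
    rfl
  let S : Finset G := Finset.univ.filter fun x => ψ x = (f x : H ⧸ N)
  let F : G → ZMod (Nat.card N) := fun x => c (f x * (u x)⁻¹)
  have hset : ∀ φ ∈ U, (Finset.univ.filter fun x => φ x = f x)
      = S.filter fun x => F x = D φ x := by
    intro φ hφ
    ext x
    simp only [Finset.mem_filter, Finset.mem_univ, true_and, S]
    constructor
    · intro h
      exact ⟨by rw [← hψ φ hφ, h], by simp only [F, D, h]⟩
    · rintro ⟨h1, h2⟩
      have hf : f x * (u x)⁻¹ ∈ N := by
        rw [← div_eq_mul_inv, ← QuotientGroup.eq_iff_div_mem, ← h1, hψ u hu]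
      have := hcinj ⟨_, hf⟩ ⟨_, hmem φ hφ x⟩ h2
      exact (mul_right_cancel (congrArg Subtype.val this)).symm
  have hinj : Set.InjOn D U := by
    intro φ hφ φ' hφ' h
    funext x
    have := hcinj ⟨_, hmem φ hφ x⟩ ⟨_, hmem φ' hφ' x⟩ (congrFun h x)
    exact mul_right_cancel (congrArg Subtype.val this)
  have hmain := cocycle_potential hadm (U.image D) (fun d hd => by
    obtain ⟨φ, hφ, rfl⟩ := Finset.mem_image.1 hd
    exact hcocycle φ hφ) S F
  rw [Finset.sum_image hinj] at hmain
  rw [agr_eq ψ]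
  refine le_trans (le_of_eq (Finset.sum_congr rfl fun φ hφ => ?_)) hmain
  rw [agr_eq, hset φ hφ]

/-! ### Induction along the supersolvable series -/

/-- The first nontrivial term of the series is a cyclic normal subgroup. Its subgroup of prime order `p`
is characteristic in it, hence normal in `H`. -/
theorem exists_prime_normal {H : Type*} [Group H] [Finite H] [Nontrivial H]
    (hH : IsSupersolvable H) :
    ∃ N : Subgroup H, ∃ _ : N.Normal, (Nat.card N).Prime ∧ IsSupersolvable (H ⧸ N) := by
  classical
  obtain ⟨k, s, hs0, hsk, hnorm, hmono, hgen⟩ := hH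
  have hex : ∃ i, s i ≠ ⊥ := ⟨k, by rw [hsk]; exact top_ne_bot⟩
  obtain ⟨j, hj⟩ : ∃ j, Nat.find hex = j + 1 :=
    Nat.exists_eq_succ_of_ne_zero fun h => (h ▸ Nat.find_spec hex) hs0
  have hjk : j < k := by
    have : Nat.find hex ≤ k := Nat.find_min' hex (by rw [hsk]; exact top_ne_bot)
    omega
  have hjbot : s j = ⊥ := by
    by_contra h
    have := Nat.find_min' hex h
    omega
  have hj1 : s (j + 1) ≠ ⊥ := hj ▸ Nat.find_spec hex
  obtain ⟨g, hg⟩ := hgen j hjk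
  rw [hjbot, bot_sup_eq] at hg
  have hgn : (Subgroup.zpowers g).Normal := hg ▸ hnorm (j + 1)
  have hg1 : g ≠ 1 := by
    rintro rfl
    rw [Subgroup.zpowers_one_eq_bot] at hg
    exact hj1 hg
  obtain ⟨p, hp, hpg⟩ := Nat.exists_prime_and_dvd (fun h => hg1 (orderOf_eq_one_iff.1 h))
  obtain ⟨m, hm⟩ := hpg
  have hm0 : m ≠ 0 := by
    rintro rfl
    exact (orderOf_pos g).ne' (by rw [hm, mul_zero])
  have hN : (Subgroup.zpowers (g ^ m)).Normal := by
    refine ⟨fun x hx a => ?_⟩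
    obtain ⟨i, rfl⟩ := Subgroup.mem_zpowers_iff.1 hx
    obtain ⟨l, hl⟩ := Subgroup.mem_zpowers_iff.1
      (hgn.conj_mem g (Subgroup.mem_zpowers g) a)
    rw [← conj_zpow, ← conj_pow, ← hl]
    refine Subgroup.zpow_mem _ (Subgroup.mem_zpowers_iff.2 ⟨l, ?_⟩) i
    rw [← zpow_natCast, ← zpow_natCast, ← zpow_mul, ← zpow_mul, mul_comm]
  refine ⟨Subgroup.zpowers (g ^ m), hN, ?_, ?_⟩
  · rw [Nat.card_zpowers, orderOf_pow_of_dvd hm0 ⟨p, by rw [hm, mul_comm]⟩, hm,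
      Nat.mul_div_cancel _ (Nat.pos_of_ne_zero hm0)]
    exact hp
  · have hsurj := QuotientGroup.mk'_surjective (Subgroup.zpowers (g ^ m))
    refine ⟨k, fun i => (s i).map (QuotientGroup.mk' _), ?_, ?_, ?_, ?_, ?_⟩
    · simp only [hs0, Subgroup.map_bot]
    · simp only [hsk, Subgroup.map_top_of_surjective _ hsurj]
    · intro i
      exact (hnorm i).map _ hsurj
    · intro i hi
      exact Subgroup.map_mono (hmono i hi)
    · intro i hi
      obtain ⟨a, ha⟩ := hgen i hi
      refine ⟨QuotientGroup.mk' _ a, ?_⟩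
      simp only [ha, Subgroup.map_sup, MonoidHom.map_zpowers]

/-- The potential inequality, by induction on `|H|`: the fibres over `H ⧸ N` are handled by
`fiber_sum_le`, and the quotient `H ⧸ N` by the induction hypothesis. -/
theorem sum_affine_le {G : Type*} [Group G] [Fintype G] {Λ : ℝ} (h0 : 0 ≤ Λ) (hhalf : Λ ≤ 1 / 2)
    (n : ℕ) : ∀ (H : Type) [Group H] [Finite H], Nat.card H = n → IsSupersolvable H →
      IndexBound G H Λ → ∀ (f : G → H) (U : Finset (G → H)), (∀ φ ∈ U, IsAffineHom φ) →
      ∑ φ ∈ U, max 0 (agr φ f - Λ) ^ 38 ≤ 1 := by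
  classical
  induction n using Nat.strong_induction_on with
  | _ n ih =>
    intro H _ _ hn hH hΛ f U hU
    have hterm : ∀ φ : G → H, max 0 (agr φ f - Λ) ^ 38 ≤ 1 := fun φ =>
      pow_le_one₀ (le_max_left _ _) (max_le zero_le_one (by linarith [agr_le_one φ f]))
    rcases subsingleton_or_nontrivial H with hsub | hnt
    · have hcard : U.card ≤ 1 := Finset.card_le_one.2 fun a _ b _ => Subsingleton.elim a b
      refine (Finset.sum_le_card_nsmul _ _ 1 fun φ _ => hterm φ).trans ?_
      rw [nsmul_eq_mul, mul_one]
      exact_mod_cast hcard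
    obtain ⟨N, hNn, hNp, hq⟩ := exists_prime_normal hH
    have hcardN := Subgroup.card_eq_card_quotient_mul_card_subgroup N
    have hlt : Nat.card (H ⧸ N) < n := by
      rw [← hn, hcardN]
      exact lt_mul_of_one_lt_right Nat.card_pos hNp.one_lt
    let π : (G → H) → (G → H ⧸ N) := fun φ x => (φ x : H ⧸ N)
    have hquot := ih _ hlt (H ⧸ N) rfl hq
      (fun r hr hrH => hΛ r hr (hrH.trans ⟨_, hcardN⟩)) (π f) (U.image π) (by
        intro ψ hψ
        obtain ⟨φ, hφ, rfl⟩ := Finset.mem_image.1 hψ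
        obtain ⟨a, φ₀, h⟩ := hU φ hφ
        exact ⟨a, (QuotientGroup.mk' N).comp φ₀, fun g => by simp [π, h]⟩)
    rw [← Finset.sum_fiberwise_of_maps_to (fun φ hφ => Finset.mem_image_of_mem π hφ)]
    refine le_trans (Finset.sum_le_sum fun ψ _ => ?_) hquot
    exact fiber_sum_le N hNp h0 hhalf hΛ f ψ _ (fun φ hφ => hU φ (Finset.mem_filter.1 hφ).1)
      fun φ hφ x => congrFun (Finset.mem_filter.1 hφ).2 x

/-! ### The bound for `Lambda` -/

theorem bddAbove_agr (G H : Type*) [Group G] [Group H] [Fintype G] :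
    BddAbove (insert (0 : ℝ)
      {a : ℝ | ∃ φ ψ : G → H, IsAffineHom φ ∧ IsAffineHom ψ ∧ φ ≠ ψ ∧ a = agr φ ψ}) := by
  refine ⟨1, ?_⟩
  rintro a (rfl | ⟨φ, ψ, _, _, _, rfl⟩)
  · exact zero_le_one
  · exact agr_le_one φ ψ

/-- A normal subgroup `K` of prime index `r` and an element of order `r` of `H` give a homomorphism
`G → H` with kernel `K`. It agrees with the trivial homomorphism exactly on `K`. -/
theorem indexBound_Lambda (G H : Type*) [Group G] [Group H] [Fintype G] [Finite H] :
    IndexBound G H (Lambda G H) := by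
  classical
  intro r hr hrH K hK hKr
  have : Fact r.Prime := ⟨hr⟩
  obtain ⟨h, hh⟩ := exists_prime_orderOf_dvd_card' r hrH
  let e : G ⧸ K ≃* Subgroup.zpowers h :=
    mulEquivOfPrimeCardEq (p := r) (by rw [← hKr]; rfl) (by rw [Nat.card_zpowers, hh])
  let φ : G →* H := (Subgroup.zpowers h).subtype.comp (e.toMonoidHom.comp (QuotientGroup.mk' K))
  have hker : ∀ x, φ x = 1 ↔ x ∈ K := by
    intro x
    simp [φ]
  have hne : (φ : G → H) ≠ fun _ => 1 := by
    intro hcon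
    have : K = ⊤ := by
      rw [eq_top_iff]
      exact fun x _ => (hker x).1 (congrFun hcon x)
    rw [this, Subgroup.index_top] at hKr
    exact hr.one_lt.ne hKr
  have hagr : agr (φ : G → H) (fun _ => 1) = 1 / r := by
    have h1 : Nat.card {x : G // φ x = 1} = Nat.card K :=
      Nat.card_congr (Equiv.subtypeEquivRight hker)
    have h2 := K.card_mul_index
    rw [hKr] at h2
    rw [agr, h1, ← h2]
    have h3 : (0 : ℝ) < Nat.card K := by exact_mod_cast Nat.card_pos
    have h4 : (0 : ℝ) < r := by exact_mod_cast hr.pos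
    push_cast
    field_simp
  refine le_csSup (bddAbove_agr G H) (Set.mem_insert_of_mem _ ⟨φ, fun _ => 1, ⟨1, φ, by simp⟩,
    ⟨1, 1, by simp⟩, hne, hagr.symm⟩)

/-- There is a universal constant `C` such that for finite
supersolvable groups `G`, `H`, for any `f : G → H` and `ε > 0`, the number of
affine homomorphisms with agreement at least `Λ_{G,H} + ε` with `f` is at most
`(1/ε)^C`. -/
theorem statement1 :
    ∃ C : ℝ, ∀ (G H : Type) [Group G] [Group H] [Fintype G] [Fintype H],
      IsSupersolvable G → IsSupersolvable H →
      ∀ (f : G → H) (ε : ℝ), 0 < ε →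
        ({φ : G → H | IsAffineHom φ ∧ agr φ f ≥ Lambda G H + ε}.ncard : ℝ)
          ≤ (1 / ε) ^ C := by
  refine ⟨38, ?_⟩
  intro G H _ _ _ _ _ hH f ε hε
  classical
  -- the cap at `1 / 2` costs nothing, since every prime `r` has `1 / r ≤ 1 / 2`
  set Λ : ℝ := min (Lambda G H) (1 / 2) with hΛ
  have hL0 : 0 ≤ Lambda G H := le_csSup (bddAbove_agr G H) (Set.mem_insert _ _)
  have h0 : 0 ≤ Λ := le_min hL0 (by norm_num)
  have hbound : IndexBound G H Λ := fun r hr hrH K hK hKr =>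
    le_min (indexBound_Lambda G H r hr hrH K hK hKr)
      (one_div_le_one_div_of_le two_pos (by exact_mod_cast hr.two_le))
  have hfin : {φ : G → H | IsAffineHom φ ∧ agr φ f ≥ Lambda G H + ε}.Finite := Set.toFinite _
  have hsum := sum_affine_le h0 (min_le_right _ _) _ H rfl hH hbound f hfin.toFinset
    (fun φ hφ => (hfin.mem_toFinset.1 hφ).1)
  have hlow : (hfin.toFinset.card : ℝ) * ε ^ 38
      ≤ ∑ φ ∈ hfin.toFinset, max 0 (agr φ f - Λ) ^ 38 := by
    rw [← nsmul_eq_mul]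
    refine Finset.card_nsmul_le_sum _ _ _ fun φ hφ => pow_le_pow_left₀ hε.le ?_ 38
    have := (hfin.mem_toFinset.1 hφ).2
    exact le_max_of_le_right (by linarith [min_le_left (Lambda G H) (1 / 2)])
  rw [Set.ncard_eq_toFinset_card _ hfin]
  have h38 : (1 / ε) ^ (38 : ℝ) = 1 / ε ^ 38 := by
    rw [← one_div_pow, ← Real.rpow_natCast]
    norm_num
  rw [h38, le_div_iff₀ (by positivity)]
  exact hlow.trans hsum
end

section
/- Let G and H be finite groups such that G is solvable or H is nilpotent. Suppose there exists a prime p dividing gcd(|G|,|H|) such that G has a normal subgroup of index p, and let p be the smallest such prime. Then Λ_{G,H} = 1/p. -/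
/-! Two affine homomorphisms that agree at a point agree exactly on a left coset of the equalizer
`K` of their linear parts, so the upper bound amounts to `p ≤ [G : K]` for the equalizer `K ≠ G` of
two distinct homomorphisms `φ₀, ψ₀ : G → H`.

Let `C` be the normal core of `K`. The quotient `G ⧸ C` is nontrivial and is a quotient of
`G ⧸ (ker φ₀ ⊓ ker ψ₀)`, which embeds in `H × H`; hence it is solvable whether `G` is solvable or
`H` is nilpotent, and its order divides `|H|²`. A nontrivial finite solvable group has a normal
subgroup of prime index (`exists_normal_index_prime`), so `G` has a normal subgroup of prime
index `q` containing `C`. This `q` divides `|G|` and `|H|`, whence `p ≤ q` by minimality. Since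
`G ⧸ C` acts faithfully on `G ⧸ K`, `q` also divides `[G : K]!`, so `q ≤ [G : K]`.

The value `1 / p` is attained by the trivial homomorphism and a homomorphism
`G → G ⧸ N ≅ ℤ/p → H` with kernel `N` of index `p` (`exists_hom_ker_eq`). -/

open scoped BigOperators

/-- A maximal subgroup of the abelianization is normal with simple abelian quotient, hence has prime
index; its preimage is the required subgroup. -/
theorem exists_normal_index_prime (Q : Type*) [Group Q] [Finite Q] [Nontrivial Q] [Group.IsSolvable Q] :
    ∃ N : Subgroup Q, N.Normal ∧ N.index.Prime := by
  have hlt := Group.IsSolvable.commutator_lt_top_of_nontrivial Q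
  have : Nontrivial (Abelianization Q) := QuotientGroup.nontrivial_iff.mpr hlt.ne
  obtain h | ⟨M, hM, -⟩ := eq_top_or_exists_le_coatom (⊥ : Subgroup (Abelianization Q))
  · exact absurd h bot_ne_top
  have : Nontrivial (Abelianization Q ⧸ M) := QuotientGroup.nontrivial_iff.mpr hM.1
  have hsimple : IsSimpleGroup (Abelianization Q ⧸ M) := by
    refine ⟨fun K _ => ?_⟩
    have hsurj := QuotientGroup.mk'_surjective M
    have hle : M ≤ K.comap (QuotientGroup.mk' M) := by
      intro x hx
      rw [Subgroup.mem_comap, QuotientGroup.mk'_apply, (QuotientGroup.eq_one_iff x).mpr hx]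
      exact K.one_mem
    rcases hM.le_iff.mp hle with h | h
    · right
      rw [← Subgroup.map_comap_eq_self_of_surjective hsurj K, h,
        Subgroup.map_top_of_surjective _ hsurj]
    · left
      rw [← Subgroup.map_comap_eq_self_of_surjective hsurj K, h, QuotientGroup.map_mk'_self]
  refine ⟨M.comap Abelianization.of, inferInstance, ?_⟩
  rw [Subgroup.index_comap_of_surjective (f := Abelianization.of) M (QuotientGroup.mk'_surjective _)]
  exact IsSimpleGroup.prime_card

theorem exists_hom_ker_eq {G H : Type*} [Group G] [Group H] [Finite H] {p : ℕ} (hp : p.Prime)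
    (hpH : p ∣ Nat.card H) (N : Subgroup G) [N.Normal] (hN : N.index = p) :
    ∃ φ : G →* H, φ.ker = N := by
  have : Fact p.Prime := ⟨hp⟩
  obtain ⟨h, hh⟩ := exists_prime_orderOf_dvd_card' p hpH
  let e : G ⧸ N ≃* Subgroup.zpowers h :=
    mulEquivOfPrimeCardEq (p := p) hN (by rw [Nat.card_zpowers, hh])
  refine ⟨(Subgroup.zpowers h).subtype.comp (e.toMonoidHom.comp (QuotientGroup.mk' N)), ?_⟩
  ext x
  simp [MonoidHom.mem_ker]

theorem le_index_eqLocus_s4 {G H : Type*} [Group G] [Group H] [Finite G] [Finite H]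
    (hGH : Group.IsSolvable G ∨ Group.IsNilpotent H) (p : ℕ)
    (hmin : ∀ q : ℕ, q.Prime → q ∣ Nat.gcd (Nat.card G) (Nat.card H) →
      (∃ N : Subgroup G, N.Normal ∧ N.index = q) → p ≤ q)
    (φ ψ : G →* H) (hne : φ ≠ ψ) : p ≤ (φ.eqLocus ψ).index := by
  set K := φ.eqLocus ψ with hK
  let C := K.normalCore
  let f : G →* H × H := φ.prod ψ
  have hfC : f.ker ≤ C := by
    refine Subgroup.normal_le_normalCore.mpr fun x hx => ?_
    have hx' : φ x = 1 ∧ ψ x = 1 := by simpa [f, MonoidHom.mem_ker] using hx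
    change φ x = ψ x
    rw [hx'.1, hx'.2]
  have hKtop : K ≠ ⊤ := fun h => hne <| MonoidHom.ext fun x => by
    have hx : x ∈ K := h ▸ Subgroup.mem_top x
    exact hx
  have hCtop : C ≠ ⊤ := fun h => hKtop (top_le_iff.mp (h ▸ K.normalCore_le))
  have : Nontrivial (G ⧸ C) := QuotientGroup.nontrivial_iff.mpr hCtop
  have : Group.IsSolvable (G ⧸ C) := by
    rcases hGH with hG | hH
    · have : Group.IsSolvable G := hG
      infer_instance
    · have : Group.IsSolvable H := inferInstance
      have : Group.IsSolvable (G ⧸ f.ker) :=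
        Group.isSolvable_of_isSolvable_injective (QuotientGroup.kerLift_injective f)
      exact Group.isSolvable_of_surjective (f := QuotientGroup.map f.ker C (MonoidHom.id G) hfC)
        (QuotientGroup.map_surjective_of_surjective _ _ (MonoidHom.id G)
          (QuotientGroup.mk'_surjective C) _)
  obtain ⟨N, hNn, hNp⟩ := exists_normal_index_prime (G ⧸ C)
  have hidx : (N.comap (QuotientGroup.mk' C)).index = N.index :=
    Subgroup.index_comap_of_surjective N (QuotientGroup.mk'_surjective C)
  have hNC : N.index ∣ C.index := N.index_dvd_card
  have hqH : N.index ∣ Nat.card H := by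
    have h1 : C.index ∣ Nat.card (H × H) :=
      (Subgroup.index_dvd_of_le hfC).trans
        (by rw [Subgroup.index_ker]; exact Subgroup.card_subgroup_dvd_card _)
    rw [Nat.card_prod] at h1
    exact (hNp.dvd_mul.mp (hNC.trans h1)).elim id id
  have hle : p ≤ N.index :=
    hmin _ hNp (Nat.dvd_gcd (hNC.trans C.index_dvd_card) hqH) ⟨_, inferInstance, hidx⟩
  -- `G ⧸ C` embeds in the permutation group of the coset space `G ⧸ K`.
  have hfact : C.index ∣ K.index.factorial := by
    change K.normalCore.index ∣ _
    rw [Subgroup.normalCore_eq_ker, Subgroup.index_ker, Subgroup.index_eq_card, ← Nat.card_perm]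
    exact Subgroup.card_subgroup_dvd_card _
  exact hle.trans ((hNp.dvd_factorial).mp (hNC.trans hfact))

/-- If the functions agree at `x`, the translation `y ↦ x⁻¹ * y` embeds their agreement set into
the equalizer of the linear parts. -/
theorem agr_le_of_affine {G H : Type*} [Group G] [Group H] [Finite G] [Finite H]
    {p : ℕ} (hp : p.Prime)
    (hidx : ∀ φ₀ ψ₀ : G →* H, φ₀ ≠ ψ₀ → p ≤ (φ₀.eqLocus ψ₀).index)
    {φ ψ : G → H} (hφ : IsAffineHom φ) (hψ : IsAffineHom ψ) (hne : φ ≠ ψ) :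
    agr φ ψ ≤ 1 / (p : ℝ) := by
  obtain ⟨a, φ₀, hφ⟩ := hφ
  obtain ⟨b, ψ₀, hψ⟩ := hψ
  have hp0 : (0 : ℝ) < p := by exact_mod_cast hp.pos
  have hG0 : (0 : ℝ) < Nat.card G := by exact_mod_cast Nat.card_pos
  unfold agr
  rcases isEmpty_or_nonempty {x : G // φ x = ψ x} with hemp | ⟨⟨x, hx⟩⟩
  · rw [Nat.card_of_isEmpty]
    simp
  have htrans : ∀ y, φ y = φ x * φ₀ (x⁻¹ * y) ∧ ψ y = φ x * ψ₀ (x⁻¹ * y) := by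
    intro y
    refine ⟨by simp [hφ], ?_⟩
    rw [hx]
    simp [hψ]
  have hne₀ : φ₀ ≠ ψ₀ := by
    rintro rfl
    exact hne (funext fun y => (htrans y).1.trans (htrans y).2.symm)
  have hcard : Nat.card {y : G // φ y = ψ y} ≤ Nat.card (φ₀.eqLocus ψ₀) := by
    refine Nat.card_le_card_of_injective
      (fun y => (⟨x⁻¹ * y.1, ?_⟩ : φ₀.eqLocus ψ₀)) ?_
    · have hy := y.2
      rw [(htrans y.1).1, (htrans y.1).2] at hy
      exact mul_left_cancel hy
    · intro y z hyz
      simpa [Subtype.ext_iff] using hyz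
  have hmul : Nat.card {y : G // φ y = ψ y} * p ≤ Nat.card G := by
    rw [← (φ₀.eqLocus ψ₀).card_mul_index]
    exact Nat.mul_le_mul hcard (hidx _ _ hne₀)
  rw [div_le_div_iff₀ hG0 hp0, one_mul]
  exact_mod_cast hmul

theorem agr_one_eq {G H : Type*} [Group G] [Group H] [Finite G] (φ : G →* H) :
    agr (fun x => φ x) (fun _ => 1) = 1 / (φ.ker.index : ℝ) := by
  have hk : (Nat.card φ.ker : ℝ) ≠ 0 := by exact_mod_cast Nat.card_pos.ne'
  have hi : (φ.ker.index : ℝ) ≠ 0 := by exact_mod_cast Subgroup.index_ne_zero_of_finite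
  unfold agr
  change (Nat.card φ.ker : ℝ) / _ = _
  rw [← φ.ker.card_mul_index, Nat.cast_mul]
  field_simp

/-- If `G` is solvable or `H` is nilpotent, and `p` is the
smallest prime dividing `gcd(|G|,|H|)` such that `G` has a normal subgroup of
index `p`, then `Λ_{G,H} = 1/p`. -/
theorem statement4 (G H : Type) [Group G] [Group H] [Fintype G] [Fintype H]
    (hGH : IsSolvable G ∨ Group.IsNilpotent H)
    (p : ℕ)
    (hp : p.Prime ∧ p ∣ Nat.gcd (Fintype.card G) (Fintype.card H) ∧
      ∃ N : Subgroup G, N.Normal ∧ N.index = p)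
    (hmin : ∀ q : ℕ, q.Prime → q ∣ Nat.gcd (Fintype.card G) (Fintype.card H) →
      (∃ N : Subgroup G, N.Normal ∧ N.index = q) → p ≤ q) :
    Lambda G H = 1 / (p : ℝ) := by
  obtain ⟨hpp, hdvd, N, hNn, hN⟩ := hp
  simp only [← Nat.card_eq_fintype_card] at hdvd hmin
  have hp0 : (0 : ℝ) < p := by exact_mod_cast hpp.pos
  obtain ⟨φ, hφ⟩ := exists_hom_ker_eq hpp (hdvd.trans (Nat.gcd_dvd_right _ _)) N hN
  refine IsGreatest.csSup_eq ⟨Or.inr ⟨fun x => φ x, fun _ => 1, ⟨1, φ, by simp⟩,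
    ⟨1, 1, by simp⟩, ?_, ?_⟩, ?_⟩
  · intro h
    have hker : φ.ker = ⊤ := by
      ext x
      simpa [MonoidHom.mem_ker] using congrFun h x
    rw [← hφ, hker, Subgroup.index_top] at hN
    exact hpp.one_lt.ne hN
  · rw [agr_one_eq, hφ, hN]
  · rintro a (rfl | ⟨f, g, hf, hg, hne, rfl⟩)
    · positivity
    · exact agr_le_of_affine hpp (fun _ _ h => le_index_eqLocus_s4 hGH p hmin _ _ h) hf hg hne
end

section
/- Let G and H be finite groups such that G is solvable or H is nilpotent. If there is no prime p dividing gcd(|G|,|H|) such that G has a normal subgroup of index p, then the only group homomorphism from G to H is the trivial one (i.e., |Hom(G,H)| = 1), and consequently Λ_{G,H} = 0. -/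
/-!
A nontrivial homomorphism `φ : G →* H` has a nontrivial image, which is solvable: it is a quotient
of `G` and a subgroup of `H`. A finite nontrivial solvable group `R` has a normal subgroup of prime
index, namely any maximal subgroup containing the commutator subgroup, the quotient by it being
simple and abelian (`exists_normal_index_prime`). Pulling it back along `φ` gives a normal subgroup
of `G` of prime index `p`, where `p` divides `|φ(G)|`, hence both `|G|` and `|H|`. This is excluded,
so every homomorphism is trivial. Affine homomorphisms are then constant, and two distinct constant
functions agree nowhere, so `Λ_{G,H} = 0`.
-/

open scoped BigOperators

theorem exists_normal_index_prime_s5 (R : Type*) [Group R] [Finite R] [Nontrivial R]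
    (hR : Group.IsSolvable R) : ∃ K : Subgroup R, K.Normal ∧ K.index.Prime := by
  have hlt : commutator R < ⊤ := Group.IsSolvable.commutator_lt_top_of_nontrivial R
  obtain ⟨K, hK, hle⟩ := (eq_top_or_exists_le_coatom (commutator R)).resolve_left hlt.ne
  have hn : K.Normal := Subgroup.Normal.of_commutator_le R hle
  refine ⟨K, hn, ?_⟩
  have hcomm := Subgroup.Normal.quotient_commutative_iff_commutator_le.mpr hle
  let _ : CommGroup (R ⧸ K) := { mul_comm := fun a b => mul_comm' a b }
  have : Nontrivial (R ⧸ K) := QuotientGroup.nontrivial_iff.mpr hK.1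
  have : IsSimpleGroup (R ⧸ K) := ⟨fun L _ => by
    -- By maximality of `K`, the preimage of `L` in `R` is `K` or everything.
    have hsurj := QuotientGroup.mk'_surjective K
    have hKL : K ≤ L.comap (QuotientGroup.mk' K) := by
      intro x hx
      have : (QuotientGroup.mk' K) x = 1 := (QuotientGroup.eq_one_iff x).mpr hx
      rw [Subgroup.mem_comap, this]
      exact L.one_mem
    rw [← Subgroup.map_comap_eq_self_of_surjective hsurj L]
    rcases hKL.eq_or_lt with h | h
    · left
      rw [← h]
      exact QuotientGroup.map_mk'_self K
    · right
      rw [hK.2 _ h]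
      exact Subgroup.map_top_of_surjective _ hsurj⟩
  rw [Subgroup.index_eq_card]
  exact IsSimpleGroup.prime_card

theorem hom_eq_one (G H : Type) [Group G] [Group H] [Fintype G] [Fintype H]
    (hGH : IsSolvable G ∨ Group.IsNilpotent H)
    (hnone : ¬ ∃ p : ℕ, p.Prime ∧ p ∣ Nat.gcd (Fintype.card G) (Fintype.card H) ∧
      ∃ N : Subgroup G, N.Normal ∧ N.index = p) (φ : G →* H) : φ = 1 := by
  by_contra hφ
  have hnt : Nontrivial φ.range := by
    rw [Subgroup.nontrivial_iff_ne_bot]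
    exact fun h => hφ (MonoidHom.range_eq_bot_iff.mp h)
  have hsol : Group.IsSolvable φ.range := by
    rcases hGH with h | h
    · have hG : Group.IsSolvable G := h
      exact Group.isSolvable_of_surjective φ.rangeRestrict_surjective
    · infer_instance
  obtain ⟨K, hn, hp⟩ := exists_normal_index_prime_s5 φ.range hsol
  have hidx : (K.comap φ.rangeRestrict).index = K.index :=
    Subgroup.index_comap_of_surjective K φ.rangeRestrict_surjective
  refine hnone ⟨K.index, hp, Nat.dvd_gcd ?_ ?_, K.comap φ.rangeRestrict, hn.comap _, hidx⟩
  · rw [← hidx, ← Nat.card_eq_fintype_card]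
    exact Subgroup.index_dvd_card _
  · rw [← Nat.card_eq_fintype_card]
    exact K.index_dvd_card.trans (Subgroup.card_subgroup_dvd_card _)

/-- If `G` is solvable or `H` is nilpotent, and there is no
prime `p` dividing `gcd(|G|,|H|)` such that `G` has a normal subgroup of index
`p`, then the only homomorphism from `G` to `H` is trivial, and `Λ_{G,H} = 0`. -/
theorem statement5 (G H : Type) [Group G] [Group H] [Fintype G] [Fintype H]
    (hGH : IsSolvable G ∨ Group.IsNilpotent H)
    (hnone : ¬ ∃ p : ℕ, p.Prime ∧ p ∣ Nat.gcd (Fintype.card G) (Fintype.card H) ∧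
      ∃ N : Subgroup G, N.Normal ∧ N.index = p) :
    Nat.card (G →* H) = 1 ∧ Lambda G H = 0 := by
  have htriv := hom_eq_one G H hGH hnone
  refine ⟨?_, ?_⟩
  · rw [Nat.card_eq_one_iff_unique]
    exact ⟨⟨fun a b => (htriv a).trans (htriv b).symm⟩, ⟨1⟩⟩
  · have hset : insert (0 : ℝ) {a : ℝ | ∃ φ ψ : G → H,
        IsAffineHom φ ∧ IsAffineHom ψ ∧ φ ≠ ψ ∧ a = agr φ ψ} = {0} := by
      refine Set.Subset.antisymm ?_ (by simp)
      rintro a (rfl | ⟨φ, ψ, ⟨h, φ₀, hφ⟩, ⟨k, ψ₀, hψ⟩, hne, rfl⟩)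
      · rfl
      · have hφc : ∀ x, φ x = h := fun x => by simp [hφ, htriv φ₀]
        have hψc : ∀ x, ψ x = k := fun x => by simp [hψ, htriv ψ₀]
        have hhk : h ≠ k := fun e => hne (funext fun x => by rw [hφc, hψc, e])
        have : IsEmpty {x : G // φ x = ψ x} :=
          ⟨fun x => hhk (by rw [← hφc x.1, ← hψc x.1, x.2])⟩
        simp [agr]
    rw [Lambda, hset, csSup_singleton]
end

section
/- Let n, q ≥ 1 and let f, φ₁, …, φ_ℓ : {1,…,n} → {1,…,q} be functions such that (1) agr(f,φ_i) = 1/q + α_i with α_i ≥ 0 for each i, and (2) agr(φ_i,φ_j) ≤ 1/q for every i ≠ j. Then Σ_{i=1}^ℓ α_i² ≤ 1. -/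
/-!
Encode a function `u : Fin n → Fin q` as the vector with entries `1[u x = a] - 1/q`, indexed by
pairs `(x, a)`. Then `⟨vec u, vec v⟩ = n (agr u v - 1/q)` (`vec_dotProduct`), so the vectors of the
`φ i` have pairwise nonpositive inner products, while `⟨vec f, vec (φ i)⟩ = n α i`. With
`S = ∑ α i ^ 2` and `w = ∑ α i • vec (φ i)`, expanding `0 ≤ ‖vec f - w‖²` and dropping the
nonpositive cross terms of `‖w‖²` (here `α i ≥ 0` is used) gives
`0 ≤ n ((1 - 1/q) - 2 S + (1 - 1/q) S) ≤ n (1 - S)`.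
-/

open scoped BigOperators

/-- The centred indicator vector of the graph of `u`. -/
noncomputable def vec {n q : ℕ} (u : Fin n → Fin q) : Fin n × Fin q → ℝ :=
  fun p => (if u p.1 = p.2 then 1 else 0) - 1 / (q : ℝ)

lemma vec_dotProduct {n q : ℕ} (hn : 1 ≤ n) (hq : 1 ≤ q) (u v : Fin n → Fin q) :
    vec u ⬝ᵥ vec v = n * (agr u v - 1 / (q : ℝ)) := by
  have hq0 : (q : ℝ) ≠ 0 := by positivity
  have hn0 : (n : ℝ) ≠ 0 := by positivity
  have hcard : n * agr u v = ∑ x, if u x = v x then (1 : ℝ) else 0 := by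
    unfold agr
    rw [Nat.card_eq_fintype_card, Nat.card_eq_fintype_card, Fintype.card_fin,
      mul_div_cancel₀ _ hn0, Fintype.card_subtype, Finset.sum_boole]
  have hrow : ∀ x, ∑ a, vec u (x, a) * vec v (x, a)
      = (if u x = v x then (1 : ℝ) else 0) - 1 / (q : ℝ) := by
    intro x
    simp only [vec, sub_mul, mul_sub, Finset.sum_sub_distrib, ← Finset.sum_mul, ← Finset.mul_sum]
    simp [eq_comm]
    field_simp
    ring
  rw [mul_sub, hcard, dotProduct, Fintype.sum_prod_type]
  simp only [hrow, Finset.sum_sub_distrib]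
  simp

lemma agr_self {n q : ℕ} (hn : 1 ≤ n) (u : Fin n → Fin q) : agr u u = 1 := by
  have hn0 : (n : ℝ) ≠ 0 := by positivity
  simp [agr, hn0]

/-- q-ary Johnson bound. If `agr(f,φᵢ) = 1/q + αᵢ` with
`αᵢ ≥ 0` and `agr(φᵢ,φⱼ) ≤ 1/q` for `i ≠ j`, then `Σᵢ αᵢ² ≤ 1`. -/
theorem statement11 (n q : ℕ) (hn : 1 ≤ n) (hq : 1 ≤ q) (ℓ : ℕ)
    (f : Fin n → Fin q) (φ : Fin ℓ → Fin n → Fin q) (α : Fin ℓ → ℝ)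
    (h1 : ∀ i, 0 ≤ α i ∧ agr f (φ i) = 1 / (q : ℝ) + α i)
    (h2 : ∀ i j : Fin ℓ, i ≠ j → agr (φ i) (φ j) ≤ 1 / (q : ℝ)) :
    ∑ i, (α i) ^ 2 ≤ 1 := by
  have hn0 : (0 : ℝ) < n := by positivity
  have hq0 : 0 ≤ 1 / (q : ℝ) := by positivity
  set S := ∑ i, (α i) ^ 2 with hS
  have hS0 : 0 ≤ S := Finset.sum_nonneg fun i _ => sq_nonneg _
  set w := ∑ i, α i • vec (φ i) with hw
  have hfw : vec f ⬝ᵥ w = n * S := by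
    rw [hw, hS, dotProduct_sum, Finset.mul_sum]
    refine Finset.sum_congr rfl fun i _ => ?_
    rw [dotProduct_smul, vec_dotProduct hn hq, (h1 i).2, smul_eq_mul]
    ring
  have hww : w ⬝ᵥ w ≤ n * ((1 - 1 / (q : ℝ)) * S) := by
    have hterm : ∀ i, (α i • vec (φ i)) ⬝ᵥ w ≤ n * ((1 - 1 / (q : ℝ)) * (α i) ^ 2) := by
      intro i
      rw [hw, dotProduct_sum, ← Finset.add_sum_erase _ _ (Finset.mem_univ i)]
      have hdiag : (α i • vec (φ i)) ⬝ᵥ (α i • vec (φ i))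
          = n * ((1 - 1 / (q : ℝ)) * (α i) ^ 2) := by
        rw [dotProduct_smul, smul_dotProduct, vec_dotProduct hn hq, agr_self hn, smul_eq_mul,
          smul_eq_mul]
        ring
      have hoff : ∑ j ∈ Finset.univ.erase i, (α i • vec (φ i)) ⬝ᵥ (α j • vec (φ j)) ≤ 0 := by
        refine Finset.sum_nonpos fun j hj => ?_
        rw [dotProduct_smul, smul_dotProduct, vec_dotProduct hn hq, smul_eq_mul, smul_eq_mul]
        have hle := h2 i j (Finset.ne_of_mem_erase hj).symm
        exact mul_nonpos_of_nonneg_of_nonpos (h1 j).1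
          (mul_nonpos_of_nonneg_of_nonpos (h1 i).1
            (mul_nonpos_of_nonneg_of_nonpos hn0.le (by linarith)))
      linarith
    calc w ⬝ᵥ w = ∑ i, (α i • vec (φ i)) ⬝ᵥ w := by
          conv_lhs => rw [hw, sum_dotProduct]
      _ ≤ ∑ i, n * ((1 - 1 / (q : ℝ)) * (α i) ^ 2) := Finset.sum_le_sum fun i _ => hterm i
      _ = n * ((1 - 1 / (q : ℝ)) * S) := by rw [← Finset.mul_sum, ← Finset.mul_sum]
  have hnonneg : 0 ≤ (vec f - w) ⬝ᵥ (vec f - w) :=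
    Finset.sum_nonneg fun p _ => mul_self_nonneg _
  rw [sub_dotProduct, dotProduct_sub, dotProduct_sub, dotProduct_comm w (vec f), hfw,
    vec_dotProduct hn hq, agr_self hn] at hnonneg
  have hfinal : 0 ≤ n * ((1 - 1 / (q : ℝ)) - 2 * S + (1 - 1 / (q : ℝ)) * S) := by linarith
  have hfinal' := nonneg_of_mul_nonneg_right hfinal hn0
  have hqS : 0 ≤ 1 / (q : ℝ) * S := mul_nonneg hq0 hS0
  linarith
end
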